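/- arXiv:2112.15229 — 6 statements merged into one kernel-verified Lean document; each statement's English description precedes it below -/
import Mathlib

section
/- Let α₁, α₂ > 0 and β ≥ 0. There exists a constant C(α₁,α₂) > 0 such that for every zero-mean real-valued initial datum f₀ ∈ H¹(𝕋) with ‖f₀‖_{H¹} ≤ C(α₁,α₂), there is a global-in-time solution f of equation (U) with f(0) = f₀ such that t ↦ ‖f(t)‖_{H¹} is non-increasing on [0,∞) (in particular f ∈ C([0,∞); H¹(𝕋))), f ∈ L²([0,∞); H²(𝕋)) (i.e. ∫₀^∞ ‖f(t)‖²_{H²} dt < ∞), and ‖f(t)‖_{H¹} → 0 as t → ∞. -/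
/-!
In Fourier variables equation (U) is the system
`c_n' = ℓ_n c_n + ∑_m (b₁(n,m) + β b₂(n,m)) c_m c_{n-m}`, and everything rests on four facts about
its coefficients, collected in `ViscousWave.Admissible` and verified in
`ViscousWave.admissible_symbols`. The linear part is parabolic: `Re ℓ_n ≤ -κ (n² + β |n|)`. The
operator `𝒩` gains one derivative, so that the kernels `b₁` and `b₂` are of order one:
`|b₁| ≤ K (|m| + |n-m|)` and `|b₂| ≤ K |n-m|`. The commutator with the Hilbert transform in the term
carrying `β` only involves frequencies `n` and `n - m` of different signs, so that
`|n| |b₂|² ≤ K² |m|³`. The constants `κ` and `K` depend on `α₁`, `α₂` only, which is why the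
smallness condition is independent of `β`.

Existence (`Admissible.exists_solution`) is a Banach fixed-point argument for the Duhamel formula in
the space of trajectories with norm `(∑ n² sup_t |c_n(t)|²)^{1/2}`. Since the time integral of the
semigroup gains the full factor `κ (n² + β |n|)`, the bilinear term is bounded in this space by the
estimate `H¹ × H¹ → L²` for `∑_m (|m| + |n-m|) |c_m| |c_{n-m}|` (`tsum_bil_sq_le`), and the solution
is global at once.

Decay is an energy argument (`Admissible.energy_add_le`). Testing with the `H¹` weight and applying
Young's inequality mode by mode, half of the dissipation `2D` absorbs the linear factor and leaves
the quadratic term `g` in the norm dual to the dissipation, which by `Admissible.src_le_diss` is at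
most `D / 4` for small `H¹` norm. Hence `2E(t) + ∫_s^t D ≤ 2E(s)` with `E` the squared `H¹` norm. Thus
`E` is non-increasing, `∫ D` is finite, which controls the `H²` norm, and `κ E ≤ D` gives
`κ t E(t) ≤ 2 E(0)`, so that `E(t) → 0`.
-/

/- STATEMENT 0: global existence and decay for small H¹ data for the
unidirectional viscous water-wave model (U), in Fourier-coefficient form
on the torus 𝕋 = ℝ/2πℤ. -/

open Filter

noncomputable section

/-- Fourier symbol of ∂₁. -/
def Dsym (n : ℤ) : ℂ := Complex.I * (n : ℂ)

/-- Fourier symbol of the Hilbert transform H. -/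
def Hsym (n : ℤ) : ℂ := -Complex.I * ((n.sign : ℤ) : ℂ)

/-- Fourier symbol of Λ. -/
def Lsym (n : ℤ) : ℂ := ((|(n : ℝ)| : ℝ) : ℂ)

/-- Fourier symbol of Λ⁻¹. -/
def invLsym (n : ℤ) : ℂ := if n = 0 then 0 else (((|(n : ℝ)|)⁻¹ : ℝ) : ℂ)

/-- Fourier symbol of 𝒩 = (1 - a²∂₁²)⁻¹(1 - a∂₁), namely (1 - i a n)/(1 + a²n²). -/
def Nsym (a : ℝ) (n : ℤ) : ℂ :=
  (1 - Complex.I * (a : ℂ) * (n : ℂ)) / (1 + (a : ℂ) ^ 2 * (n : ℂ) ^ 2)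

/-- Convolution of coefficient sequences (Fourier coefficients of a product). -/
def conv (g h : ℤ → ℂ) (n : ℤ) : ℂ := ∑' m : ℤ, g m * h (n - m)

/-- Fourier coefficients of the commutator [T, g]h = T(gh) - g·T(h) for a
Fourier multiplier T with symbol s. -/
def commC (s : ℤ → ℂ) (g h : ℤ → ℂ) (n : ℤ) : ℂ :=
  ∑' m : ℤ, (s n - s (n - m)) * (g m * h (n - m))

/-- Coefficients of ∂₁f. -/
def Dc (c : ℤ → ℂ) : ℤ → ℂ := fun k => Dsym k * c k

/-- Coefficients of Λ⁻¹f. -/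
def iLc (c : ℤ → ℂ) : ℤ → ℂ := fun k => invLsym k * c k

/-- Coefficients of Λ²f. -/
def L2c (c : ℤ → ℂ) : ℤ → ℂ := fun k => ((k : ℂ)) ^ 2 * c k

/-- Linear part of equation (U):
𝒩∂₁f + (α₁+α₂)𝒩∂₁²f + 𝒩Hf − β𝒩H∂₁²f + α₁α₂𝒩∂₁³f. -/
def linU (α₁ α₂ β : ℝ) (c : ℤ → ℂ) (n : ℤ) : ℂ :=
  Nsym ((α₁ + α₂) / 2) n *
    ((Dsym n + ((α₁ : ℂ) + (α₂ : ℂ)) * (Dsym n) ^ 2 + Hsym n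
        - (β : ℂ) * Hsym n * (Dsym n) ^ 2
        + (α₁ : ℂ) * (α₂ : ℂ) * (Dsym n) ^ 3) * c n)

/-- Nonlinear part of equation (U):
𝒩{2f∂₁f + Λ[H,Λ⁻¹f]f + βΛ[H,Λ⁻¹f]Λ²f − α₂Λ[H,f]∂₁f + α₂∂₁(f∂₁f) + α₁Λ[∂₁²,Λ⁻¹f]f}. -/
def nlU (α₁ α₂ β : ℝ) (c : ℤ → ℂ) (n : ℤ) : ℂ :=
  Nsym ((α₁ + α₂) / 2) n *
    (2 * conv c (Dc c) n
      + Lsym n * commC Hsym (iLc c) c n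
      + (β : ℂ) * Lsym n * commC Hsym (iLc c) (L2c c) n
      - (α₂ : ℂ) * Lsym n * commC Hsym c (Dc c) n
      + (α₂ : ℂ) * Dsym n * conv c (Dc c) n
      + (α₁ : ℂ) * Lsym n * commC (fun k => (Dsym k) ^ 2) (iLc c) c n)

/-- Absolute convergence of all the series defining the nonlinear terms of (U)
at frequency n. -/
def AbsConvU (c : ℤ → ℂ) (n : ℤ) : Prop :=
  Summable (fun m : ℤ => ‖c m * Dc c (n - m)‖)
    ∧ Summable (fun m : ℤ => ‖(Hsym n - Hsym (n - m)) * (iLc c m * c (n - m))‖)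
    ∧ Summable (fun m : ℤ => ‖(Hsym n - Hsym (n - m)) * (iLc c m * L2c c (n - m))‖)
    ∧ Summable (fun m : ℤ => ‖(Hsym n - Hsym (n - m)) * (c m * Dc c (n - m))‖)
    ∧ Summable (fun m : ℤ => ‖((Dsym n) ^ 2 - (Dsym (n - m)) ^ 2) * (iLc c m * c (n - m))‖)

/-- Fourier coefficients of a zero-mean real-valued function. -/
def RealZeroMean (c : ℤ → ℂ) : Prop :=
  c 0 = 0 ∧ ∀ n : ℤ, c (-n) = starRingEnd ℂ (c n)

/-- Square of the H¹(𝕋) norm. -/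
def H1sq (c : ℤ → ℂ) : ℝ := ∑' n : ℤ, (1 + (n : ℝ) ^ 2) * ‖c n‖ ^ 2

/-- Square of the H²(𝕋) norm. -/
def H2sq (c : ℤ → ℂ) : ℝ := ∑' n : ℤ, (1 + (n : ℝ) ^ 2) ^ 2 * ‖c n‖ ^ 2

namespace ViscousWave
open scoped ENNReal BoundedContinuousFunction

/-! ### Estimates for sequences in extended nonnegative reals -/

/-- The frequency modulus `|n|`, as an extended nonnegative real. -/
def absE (n : ℤ) : ℝ≥0∞ := (n.natAbs : ℝ≥0∞)

lemma two_mul_mul_le (x y : ℝ≥0∞) : 2 * (x * y) ≤ x ^ 2 + y ^ 2 := by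
  rcases le_total x y with h | h
  all_goals
    obtain ⟨d, rfl⟩ := exists_add_of_le h
  · calc 2 * (x * (x + d)) ≤ 2 * (x * (x + d)) + d ^ 2 := le_self_add
      _ = _ := by ring
  · calc 2 * ((y + d) * y) ≤ 2 * ((y + d) * y) + d ^ 2 := le_self_add
      _ = _ := by ring

lemma add_sq_le (x y : ℝ≥0∞) : (x + y) ^ 2 ≤ 2 * (x ^ 2 + y ^ 2) := by
  calc (x + y) ^ 2 = x ^ 2 + y ^ 2 + 2 * (x * y) := by ring
    _ ≤ x ^ 2 + y ^ 2 + (x ^ 2 + y ^ 2) := by gcongr; exact two_mul_mul_le x y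
    _ = _ := by ring

/-- Weighted Cauchy–Schwarz inequality, valid without any summability assumption. -/
lemma tsum_mul_sq_le {ι : Type*} (x q : ι → ℝ≥0∞) :
    (∑' i, x i * q i) ^ 2 ≤ (∑' i, x i ^ 2 * q i) * ∑' i, q i := by
  have e1 : ∀ u v : ι → ℝ≥0∞, (∑' i, u i) * (∑' j, v j) = ∑' i, ∑' j, u i * v j := by
    intro u v
    rw [← ENNReal.tsum_mul_right]
    simp_rw [ENNReal.tsum_mul_left]
  have key : 2 * (∑' i, x i * q i) ^ 2 ≤ 2 * ((∑' i, x i ^ 2 * q i) * ∑' i, q i) := by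
    calc 2 * (∑' i, x i * q i) ^ 2
        = ∑' i, ∑' j, 2 * (x i * x j) * (q i * q j) := by
          rw [sq, e1, ← ENNReal.tsum_mul_left]
          refine tsum_congr fun i => ?_
          rw [← ENNReal.tsum_mul_left]
          exact tsum_congr fun j => by ring
      _ ≤ ∑' i, ∑' j, (x i ^ 2 + x j ^ 2) * (q i * q j) := by
          gcongr
          exact two_mul_mul_le _ _
      _ = (∑' i, ∑' j, (x i ^ 2 * q i) * q j) + ∑' i, ∑' j, q i * (x j ^ 2 * q j) := by
          rw [← ENNReal.tsum_add]
          refine tsum_congr fun i => ?_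
          rw [← ENNReal.tsum_add]
          exact tsum_congr fun j => by ring
      _ = _ := by
          rw [← e1, ← e1]; ring
  exact (ENNReal.mul_le_mul_iff_right (by norm_num) (by norm_num)).1 key

/-- The constant `∑_{n ≠ 0} n⁻²` of the embedding `H¹ ⊂ ℓ¹` for zero-mean sequences. -/
def embC : ℝ≥0∞ := ∑' n : ℤ, ENNReal.ofReal (1 / (n : ℝ) ^ 2)

lemma embC_lt_top : embC < ∞ := by
  have h : Summable fun n : ℤ => 1 / (n : ℝ) ^ 2 :=
    Real.summable_one_div_int_pow.2 (by norm_num)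
  rw [embC, ← ENNReal.ofReal_tsum_of_nonneg (fun n => by positivity) h]
  exact ENNReal.ofReal_lt_top

lemma absE_eq (n : ℤ) : absE n = ENNReal.ofReal |(n : ℝ)| := by
  rw [absE, ← ENNReal.ofReal_natCast, Nat.cast_natAbs, Int.cast_abs]

lemma absE_sq_mul (n : ℤ) (hn : n ≠ 0) :
    absE n ^ 2 * ENNReal.ofReal (1 / (n : ℝ) ^ 2) = 1 := by
  rw [absE_eq, ← ENNReal.ofReal_pow (abs_nonneg _), ← ENNReal.ofReal_mul (by positivity), sq_abs]
  have : (n : ℝ) ≠ 0 := by exact_mod_cast hn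
  rw [mul_one_div_cancel (by positivity), ENNReal.ofReal_one]

/-- Zero-mean sequences: `‖p‖_{ℓ¹}² ≤ C ∑ n² p_n²`. -/
lemma tsum_sq_le_embC (p : ℤ → ℝ≥0∞) (hp : p 0 = 0) :
    (∑' n, p n) ^ 2 ≤ embC * ∑' n, absE n ^ 2 * p n ^ 2 := by
  have h1 : ∑' n, p n
      = ∑' n, (absE n ^ 2 * p n) * ENNReal.ofReal (1 / (n : ℝ) ^ 2) := by
    refine tsum_congr fun n => ?_
    by_cases hn : n = 0
    · simp [hn, hp]
    · rw [mul_right_comm, absE_sq_mul n hn, one_mul]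
  rw [h1]
  refine (tsum_mul_sq_le _ _).trans ?_
  rw [mul_comm]
  change embC * _ ≤ _
  refine mul_le_mul_right (ENNReal.tsum_le_tsum fun n => ?_) _
  by_cases hn : n = 0
  · simp [hn, hp]
  · calc (absE n ^ 2 * p n) ^ 2 * ENNReal.ofReal (1 / (n : ℝ) ^ 2) = (absE n ^ 2 * ENNReal.ofReal (1 / (n : ℝ) ^ 2)) * (absE n ^ 2 * p n ^ 2) := by ring
      _ ≤ _ := by rw [absE_sq_mul n hn, one_mul]

/-- Weighted form of Young's inequality `ℓ² * ℓ¹ ⊂ ℓ²` for a bilinear sum with kernel `b`: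
the weight `ω` on the output and the kernel are absorbed by a weight `W` on the first factor. -/
lemma young_kernel (b : ℤ → ℤ → ℝ≥0∞) (ω W p q : ℤ → ℝ≥0∞)
    (h : ∀ n m, ω n * b n m ^ 2 ≤ W m) :
    ∑' n, ω n * (∑' m, b n m * (p m * q (n - m))) ^ 2
      ≤ (∑' n, q n) ^ 2 * ∑' m, W m * p m ^ 2 := by
  have h1 : ∀ n, ω n * (∑' m, b n m * (p m * q (n - m))) ^ 2
      ≤ ∑' m, (W m * p m ^ 2 * q (n - m)) * ∑' k, q k := by
    intro n
    have e : ∑' m, q (n - m) = ∑' k, q k := (Equiv.subLeft n).tsum_eq q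
    calc _ = ω n * (∑' m, (b n m * p m) * q (n - m)) ^ 2 := by
          simp_rw [mul_assoc]
      _ ≤ ω n * ((∑' m, (b n m * p m) ^ 2 * q (n - m)) * ∑' k, q k) := by
          gcongr
          exact (tsum_mul_sq_le _ _).trans_eq (by rw [e])
      _ = ∑' m, ((ω n * b n m ^ 2) * p m ^ 2 * q (n - m)) * ∑' k, q k := by
          rw [← mul_assoc, ENNReal.tsum_mul_right]
          congr 1
          rw [← ENNReal.tsum_mul_left]
          exact tsum_congr fun m => by ring
      _ ≤ _ := by
          gcongr with m
          exact h n m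
  refine (ENNReal.tsum_le_tsum h1).trans_eq ?_
  rw [ENNReal.tsum_comm]
  have e2 : ∀ m : ℤ, ∑' n, q (n - m) = ∑' k, q k := fun m => (Equiv.subRight m).tsum_eq q
  simp_rw [ENNReal.tsum_mul_right, ENNReal.tsum_mul_left, e2, ENNReal.tsum_mul_right]
  ring

/-- The model bilinear sum `∑_m (|m| + |n - m|) p_m q_{n-m}`. -/
def bil (p q : ℤ → ℝ≥0∞) (n : ℤ) : ℝ≥0∞ :=
  ∑' m, (absE m + absE (n - m)) * (p m * q (n - m))

/-- The squared (homogeneous) `H¹` norm of a nonnegative sequence. -/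
def hsq (p : ℤ → ℝ≥0∞) : ℝ≥0∞ := ∑' n, absE n ^ 2 * p n ^ 2

/-- The model bilinear sum maps `H¹ × H¹` to `L²`. -/
lemma tsum_bil_sq_le (p q : ℤ → ℝ≥0∞) (hp : p 0 = 0) (hq : q 0 = 0) :
    ∑' n, bil p q n ^ 2 ≤ 4 * embC * (hsq p * hsq q) := by
  have h1 : ∑' n, (∑' m, absE m * (p m * q (n - m))) ^ 2 ≤ embC * (hsq p * hsq q) := by
    have := young_kernel (fun _ m => absE m) (fun _ => 1) (fun m => absE m ^ 2) p q
      (fun n m => by simp)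
    simp only [one_mul] at this
    refine this.trans ?_
    calc _ ≤ (embC * hsq q) * hsq p := by
          gcongr
          · exact tsum_sq_le_embC q hq
          · exact le_rfl
      _ = _ := by ring
  have h2 : ∑' n, (∑' m, absE (n - m) * (p m * q (n - m))) ^ 2 ≤ embC * (hsq p * hsq q) := by
    have := young_kernel (fun _ m => absE m) (fun _ => 1) (fun m => absE m ^ 2) q p
      (fun n m => by simp)
    simp only [one_mul] at this
    have e : ∀ n, ∑' m, absE (n - m) * (p m * q (n - m))
        = ∑' m, absE m * (q m * p (n - m)) := by
      intro n
      rw [← (Equiv.subLeft n).tsum_eq]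
      refine tsum_congr fun m => ?_
      simp only [Equiv.subLeft_apply, sub_sub_cancel]
      ring
    simp_rw [e]
    refine this.trans ?_
    calc _ ≤ (embC * hsq p) * hsq q := by
          gcongr
          · exact tsum_sq_le_embC p hp
          · exact le_rfl
      _ = _ := by ring
  calc ∑' n, bil p q n ^ 2
      ≤ ∑' n, 2 * ((∑' m, absE m * (p m * q (n - m))) ^ 2
          + (∑' m, absE (n - m) * (p m * q (n - m))) ^ 2) := by
        refine ENNReal.tsum_le_tsum fun n => ?_
        refine le_trans (le_of_eq ?_) (add_sq_le _ _)
        rw [bil, ← ENNReal.tsum_add]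
        simp_rw [add_mul]
    _ ≤ 2 * (embC * (hsq p * hsq q) + embC * (hsq p * hsq q)) := by
        rw [ENNReal.tsum_mul_left, ENNReal.tsum_add]
        gcongr
    _ = _ := by ring

lemma bil_ne_top (p q : ℤ → ℝ≥0∞) (hp : p 0 = 0) (hq : q 0 = 0)
    (hp' : hsq p ≠ ∞) (hq' : hsq q ≠ ∞) (n : ℤ) : bil p q n ≠ ∞ := by
  have h := (ENNReal.le_tsum (f := fun n => bil p q n ^ 2) n).trans (tsum_bil_sq_le p q hp hq)
  intro hn
  simp only [hn] at h
  have : 4 * embC * (hsq p * hsq q) < ∞ :=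
    ENNReal.mul_lt_top (ENNReal.mul_lt_top (by norm_num) embC_lt_top)
      (ENNReal.mul_lt_top hp'.lt_top hq'.lt_top)
  simp at h
  simp [h] at this

/-! ### The Duhamel formula for one Fourier mode -/

/-- The variation-of-constants solution of the scalar problem `x' = ℓ x + g`, `x(0) = x₀`. -/
def duhamel (ℓ x₀ : ℂ) (g : ℝ → ℂ) (t : ℝ) : ℂ :=
  Complex.exp (ℓ * t) * (x₀ + ∫ s in (0 : ℝ)..t, Complex.exp (-(ℓ * s)) * g s)

lemma duhamel_zero (ℓ x₀ : ℂ) (g : ℝ → ℂ) : duhamel ℓ x₀ g 0 = x₀ := by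
  simp [duhamel]

lemma continuous_duhamel_integrand (ℓ : ℂ) {g : ℝ → ℂ} (hg : Continuous g) :
    Continuous fun s : ℝ => Complex.exp (-(ℓ * s)) * g s := by fun_prop

lemma hasDerivAt_duhamel (ℓ x₀ : ℂ) {g : ℝ → ℂ} (hg : Continuous g) (t : ℝ) :
    HasDerivAt (duhamel ℓ x₀ g) (ℓ * duhamel ℓ x₀ g t + g t) t := by
  have h1 : HasDerivAt (fun s : ℝ => Complex.exp (ℓ * s)) (Complex.exp (ℓ * t) * ℓ) t := by
    have : HasDerivAt (fun s : ℝ => ℓ * (s : ℂ)) (ℓ * 1) t :=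
      (Complex.ofRealCLM.hasDerivAt (x := t)).const_mul ℓ
    simpa using this.cexp
  have h2 : HasDerivAt (fun u : ℝ => x₀ + ∫ s in (0 : ℝ)..u, Complex.exp (-(ℓ * s)) * g s)
      (Complex.exp (-(ℓ * t)) * g t) t :=
    ((continuous_duhamel_integrand ℓ hg).integral_hasStrictDerivAt 0 t).hasDerivAt.const_add x₀
  have h3 := h1.mul h2
  have e : Complex.exp (ℓ * t) * (Complex.exp (-(ℓ * t)) * g t) = g t := by
    rw [← mul_assoc, ← Complex.exp_add, add_neg_cancel, Complex.exp_zero, one_mul]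
  rw [e] at h3
  refine HasDerivAt.congr_deriv (f := duhamel ℓ x₀ g) h3 ?_
  simp only [duhamel]; ring

lemma continuous_duhamel (ℓ x₀ : ℂ) {g : ℝ → ℂ} (hg : Continuous g) :
    Continuous (duhamel ℓ x₀ g) :=
  continuous_iff_continuousAt.2 fun t => (hasDerivAt_duhamel ℓ x₀ hg t).continuousAt

lemma duhamel_split (ℓ x₀ : ℂ) (g : ℝ → ℂ) (t : ℝ) :
    duhamel ℓ x₀ g t = Complex.exp (ℓ * t) * x₀ + duhamel ℓ 0 g t := by
  simp only [duhamel]; ring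

lemma duhamel_sub (ℓ x₀ : ℂ) {g h : ℝ → ℂ} (hg : Continuous g) (hh : Continuous h) (t : ℝ) :
    duhamel ℓ x₀ g t - duhamel ℓ x₀ h t = duhamel ℓ 0 (fun s => g s - h s) t := by
  have : ∫ s in (0 : ℝ)..t, Complex.exp (-(ℓ * s)) * (g s - h s)
      = (∫ s in (0 : ℝ)..t, Complex.exp (-(ℓ * s)) * g s)
        - ∫ s in (0 : ℝ)..t, Complex.exp (-(ℓ * s)) * h s := by
    simp_rw [mul_sub]
    exact intervalIntegral.integral_sub
      ((continuous_duhamel_integrand ℓ hg).intervalIntegrable _ _)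
      ((continuous_duhamel_integrand ℓ hh).intervalIntegrable _ _)
  simp only [duhamel, this]; ring

/-- Damping at rate `lam` turns a source of size `G` into a response of size `G / lam`. -/
lemma norm_duhamel_zero_le {ℓ : ℂ} {lam G : ℝ} (hlam : 0 < lam) (hℓ : ℓ.re ≤ -lam)
    {g : ℝ → ℂ} (hG : ∀ s, ‖g s‖ ≤ G) {t : ℝ} (ht : 0 ≤ t) :
    ‖duhamel ℓ 0 g t‖ ≤ G / lam := by
  have hG0 : 0 ≤ G := (norm_nonneg _).trans (hG 0)
  have e : duhamel ℓ 0 g t = ∫ s in (0 : ℝ)..t, Complex.exp (ℓ * (t - s : ℝ)) * g s := by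
    rw [duhamel, zero_add, ← intervalIntegral.integral_const_mul]
    congr 1; ext s
    rw [← mul_assoc, ← Complex.exp_add]
    congr 2; push_cast; ring
  have hb : ∀ s ∈ Set.Ioc (0 : ℝ) t, ‖Complex.exp (ℓ * (t - s : ℝ)) * g s‖
      ≤ Real.exp (-lam * (t - s)) * G := by
    intro s hs
    rw [norm_mul, Complex.norm_exp]
    gcongr
    · have : (ℓ * (t - s : ℝ)).re = ℓ.re * (t - s) := by simp
      rw [this]
      exact mul_le_mul_of_nonneg_right hℓ (by linarith [hs.2])
    · exact hG s
  rw [e]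
  refine (intervalIntegral.norm_integral_le_of_norm_le ht (Eventually.of_forall fun s => hb s)
    (Continuous.intervalIntegrable (by fun_prop) _ _)).trans ?_
  have hF : ∀ s ∈ Set.uIcc 0 t, HasDerivAt (fun s => Real.exp (-lam * (t - s)) * (G / lam))
      (Real.exp (-lam * (t - s)) * G) s := by
    intro s _
    have h1 : HasDerivAt (fun s : ℝ => -lam * (t - s)) (-lam * (-1)) s :=
      ((hasDerivAt_id s).const_sub t).const_mul (-lam)
    refine (h1.exp.mul_const (G / lam)).congr_deriv ?_
    field_simp
  rw [intervalIntegral.integral_eq_sub_of_hasDerivAt hF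
    (Continuous.intervalIntegrable (by fun_prop) _ _)]
  have : 0 ≤ Real.exp (-lam * (t - 0)) * (G / lam) := by positivity
  simp only [sub_self, mul_zero, Real.exp_zero, one_mul]
  linarith

lemma norm_duhamel_le {ℓ x₀ : ℂ} {lam G : ℝ} (hlam : 0 < lam) (hℓ : ℓ.re ≤ -lam)
    {g : ℝ → ℂ} (hG : ∀ s, ‖g s‖ ≤ G) {t : ℝ} (ht : 0 ≤ t) :
    ‖duhamel ℓ x₀ g t‖ ≤ ‖x₀‖ + G / lam := by
  rw [duhamel_split]
  refine (norm_add_le _ _).trans (add_le_add ?_ (norm_duhamel_zero_le hlam hℓ hG ht))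
  rw [norm_mul, Complex.norm_exp]
  refine mul_le_of_le_one_left (norm_nonneg _) (Real.exp_le_one_iff.2 ?_)
  have : (ℓ * (t : ℂ)).re = ℓ.re * t := by simp
  rw [this]
  exact mul_nonpos_of_nonpos_of_nonneg (by linarith) ht

lemma duhamel_conj (ℓ x₀ : ℂ) (g : ℝ → ℂ) (t : ℝ) :
    duhamel (starRingEnd ℂ ℓ) (starRingEnd ℂ x₀) (fun s => starRingEnd ℂ (g s)) t
      = starRingEnd ℂ (duhamel ℓ x₀ g t) := by
  simp only [duhamel, map_mul, map_add, ← Complex.exp_conj, Complex.conj_ofReal]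
  congr 2
  rw [← intervalIntegral.intervalIntegral_conj]
  congr 1; ext s
  simp [← Complex.exp_conj]

/-- Integrated energy balance for one Fourier mode `c' = ℓ c + g`: any pointwise control of the
energy production `d/dt (w |c|²)` by a source `y` minus a dissipation `x` integrates in time. -/
lemma mode_energy {c g : ℝ → ℂ} {ℓ : ℂ} (hc : ∀ t, HasDerivAt c (ℓ * c t + g t) t)
    (hg : Continuous g) {w : ℝ} (hw : 0 ≤ w) {x y : ℝ → ℝ} (hx : Continuous x) (hy : Continuous y)
    (hx0 : ∀ τ, 0 ≤ x τ) (hy0 : ∀ τ, 0 ≤ y τ)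
    (h : ∀ τ, w * (2 * ℓ.re * ‖c τ‖ ^ 2 + 2 * (‖c τ‖ * ‖g τ‖)) ≤ y τ - x τ)
    {s t : ℝ} (hst : s ≤ t) :
    ENNReal.ofReal (w * ‖c t‖ ^ 2) + ∫⁻ τ in Set.Ioc s t, ENNReal.ofReal (x τ)
      ≤ ENNReal.ofReal (w * ‖c s‖ ^ 2) + ∫⁻ τ in Set.Ioc s t, ENNReal.ofReal (y τ) := by
  have hcc : Continuous c := continuous_iff_continuousAt.2 fun t => (hc t).continuousAt
  set d : ℝ → ℝ := fun τ => w * (2 * inner ℝ (c τ) (ℓ * c τ + g τ)) with hd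
  have hderiv : ∀ τ, HasDerivAt (fun τ => w * ‖c τ‖ ^ 2) (d τ) τ := fun τ =>
    ((hc τ).norm_sq).const_mul w
  have hdc : Continuous d := by
    rw [hd]; fun_prop
  have hdle : ∀ τ, d τ ≤ y τ - x τ := by
    intro τ
    refine le_trans ?_ (h τ)
    rw [hd]
    refine mul_le_mul_of_nonneg_left ?_ hw
    have e1 : inner ℝ (c τ) (ℓ * c τ) = ℓ.re * ‖c τ‖ ^ 2 := by
      rw [← Complex.normSq_eq_norm_sq, Complex.normSq_apply]
      simp [Complex.inner]
      ring
    have e2 := real_inner_le_norm (c τ) (g τ)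
    rw [inner_add_right, e1]
    linarith
  have hI : w * ‖c t‖ ^ 2 - w * ‖c s‖ ^ 2 ≤ (∫ τ in s..t, y τ) - ∫ τ in s..t, x τ := by
    rw [← intervalIntegral.integral_eq_sub_of_hasDerivAt (fun τ _ => hderiv τ)
      (hdc.intervalIntegrable _ _), ← intervalIntegral.integral_sub
      (hy.intervalIntegrable _ _) (hx.intervalIntegrable _ _)]
    exact intervalIntegral.integral_mono hst (hdc.intervalIntegrable _ _)
      ((hy.sub hx).intervalIntegrable _ _) hdle
  have conv : ∀ z : ℝ → ℝ, Continuous z → (∀ τ, 0 ≤ z τ) →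
      ∫⁻ τ in Set.Ioc s t, ENNReal.ofReal (z τ) = ENNReal.ofReal (∫ τ in s..t, z τ) := by
    intro z hz hz0
    rw [intervalIntegral.integral_of_le hst,
      MeasureTheory.ofReal_integral_eq_lintegral_ofReal]
    · exact (hz.intervalIntegrable s t).1
    · exact Eventually.of_forall hz0
  rw [conv x hx hx0, conv y hy hy0,
    ← ENNReal.ofReal_add (by positivity) (intervalIntegral.integral_nonneg hst fun τ _ => hx0 τ),
    ← ENNReal.ofReal_add (by positivity) (intervalIntegral.integral_nonneg hst fun τ _ => hy0 τ)]
  exact ENNReal.ofReal_le_ofReal (by linarith)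

/-! ### The abstract system and the Picard map -/

/-- The structural properties of the system `c_n' = ℓ_n c_n + ∑_m (b₁ + β b₂)(n, m) c_m c_{n-m}`
on which the argument rests: parabolic damping of order `n²` and additional damping of order `β|n|`,
a kernel `b₁` of order one, and a kernel `b₂` of order one which, thanks to the commutator
structure, costs only `|m|^{3/2} / |n|^{1/2}`, where `m` is the frequency of the first factor.
The remaining conditions encode that real-valued data and the zero mean are preserved. -/
structure Admissible (κ K β : ℝ) (ℓ : ℤ → ℂ) (b₁ b₂ : ℤ → ℤ → ℂ) : Prop where
  κ_pos : 0 < κ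
  K_pos : 0 < K
  β_nonneg : 0 ≤ β
  re_le : ∀ n : ℤ, (ℓ n).re ≤ -(κ * ((n : ℝ) ^ 2 + β * |(n : ℝ)|))
  b₁_le : ∀ n m : ℤ, ‖b₁ n m‖ ≤ K * (|(m : ℝ)| + |((n - m : ℤ) : ℝ)|)
  b₂_le : ∀ n m : ℤ, ‖b₂ n m‖ ≤ K * |((n - m : ℤ) : ℝ)|
  b₂_sq_le : ∀ n m : ℤ, |(n : ℝ)| * ‖b₂ n m‖ ^ 2 ≤ K ^ 2 * |(m : ℝ)| ^ 3
  ℓ_conj : ∀ n, ℓ (-n) = starRingEnd ℂ (ℓ n)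
  b₁_conj : ∀ n m, b₁ (-n) (-m) = starRingEnd ℂ (b₁ n m)
  b₂_conj : ∀ n m, b₂ (-n) (-m) = starRingEnd ℂ (b₂ n m)
  b₁_zero : ∀ m, b₁ 0 (-m) = -b₁ 0 m
  b₂_zero : ∀ m, b₂ 0 m = 0

/-- The full kernel `b₁ + β b₂`. -/
def ker (β : ℝ) (b₁ b₂ : ℤ → ℤ → ℂ) (n m : ℤ) : ℂ := b₁ n m + (β : ℂ) * b₂ n m

/-- The quadratic term with kernel `b`. -/
def quad (b : ℤ → ℤ → ℂ) (c : ℤ → ℂ) (n : ℤ) : ℂ := ∑' m, b n m * (c m * c (n - m))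

/-- The solution space: square-summable families of bounded continuous functions of time. An element
`v` represents the Fourier coefficients `c_n(t) = v_n(t) / n`, so that its norm is
`(∑ n² sup_t |c_n(t)|²)^{1/2}`. -/
abbrev Traj : Type := lp (fun _ : ℤ => ℝ →ᵇ ℂ) 2

/-- The Fourier coefficients represented by `v`; since `0⁻¹ = 0`, the mean vanishes. -/
def coef (v : Traj) (t : ℝ) (n : ℤ) : ℂ := (n : ℂ)⁻¹ * v n t

/-- The bound on `sup_t |c_n(t)|` provided by the norm of `v_n`. -/
def amp (v : Traj) (n : ℤ) : ℝ≥0∞ := ‖(n : ℂ)⁻¹‖ₑ * ‖v n‖ₑ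

lemma amp_zero (v : Traj) : amp v 0 = 0 := by simp [amp]

lemma enorm_coef_le (v : Traj) (t : ℝ) (n : ℤ) : ‖coef v t n‖ₑ ≤ amp v n := by
  rw [coef, amp, enorm_mul]
  gcongr
  exact enorm_le_iff_norm_le.2 ((v n).norm_coe_le_norm t)

lemma coef_sub (v w : Traj) (t : ℝ) (n : ℤ) : coef v t n - coef w t n = coef (v - w) t n := by
  simp only [coef, lp.coeFn_sub, Pi.sub_apply, BoundedContinuousFunction.coe_sub]
  ring

lemma enorm_intCast (n : ℤ) : ‖(n : ℂ)‖ₑ = absE n := by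
  rw [absE_eq, ← ofReal_norm, Complex.norm_intCast]

lemma absE_mul_inv (n : ℤ) (hn : n ≠ 0) : absE n * ‖(n : ℂ)⁻¹‖ₑ = 1 := by
  have : (n : ℂ) ≠ 0 := by exact_mod_cast hn
  rw [← enorm_intCast, ← enorm_mul, mul_inv_cancel₀ this, enorm_one]

lemma tsum_enorm_sq (v : Traj) : ∑' n, ‖v n‖ₑ ^ 2 = ‖v‖ₑ ^ 2 := by
  have h := lp.hasSum_norm (p := 2) (by norm_num) v
  norm_num at h
  rw [← ofReal_norm v, ← ENNReal.ofReal_pow (norm_nonneg _), ← h.tsum_eq,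
    ENNReal.ofReal_tsum_of_nonneg (fun _ => by positivity) h.summable]
  refine tsum_congr fun n => ?_
  rw [ENNReal.ofReal_pow (norm_nonneg _), ofReal_norm]

lemma hsq_amp_le (v : Traj) : hsq (amp v) ≤ ‖v‖ₑ ^ 2 := by
  rw [← tsum_enorm_sq, hsq]
  refine ENNReal.tsum_le_tsum fun n => ?_
  by_cases hn : n = 0
  · simp [hn, amp_zero]
  · rw [← mul_pow, amp, ← mul_assoc, absE_mul_inv n hn, one_mul]

lemma hsq_amp_ne_top (v : Traj) : hsq (amp v) ≠ ∞ :=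
  ne_top_of_le_ne_top (by simp) (hsq_amp_le v)

section
variable {κ K β : ℝ} {ℓ : ℤ → ℂ} {b₁ b₂ : ℤ → ℤ → ℂ}

lemma Admissible.norm_ker_le (H : Admissible κ K β ℓ b₁ b₂) (n m : ℤ) :
    ‖ker β b₁ b₂ n m‖ ≤ K * (1 + β) * (|(m : ℝ)| + |((n - m : ℤ) : ℝ)|) := by
  have h1 := H.b₁_le n m
  have h2 := mul_le_mul_of_nonneg_left (H.b₂_le n m) H.β_nonneg
  have h3 : 0 ≤ β * (K * |(m : ℝ)|) := by
    have := H.β_nonneg; have := H.K_pos; positivity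
  rw [ker]
  refine (norm_add_le _ _).trans ?_
  rw [norm_mul, Complex.norm_real, Real.norm_of_nonneg H.β_nonneg]
  nlinarith

lemma ofReal_abs_add (n m : ℤ) :
    ENNReal.ofReal (|(m : ℝ)| + |((n - m : ℤ) : ℝ)|) = absE m + absE (n - m) := by
  rw [ENNReal.ofReal_add (abs_nonneg _) (abs_nonneg _), absE_eq, absE_eq]

lemma Admissible.enorm_ker_le (H : Admissible κ K β ℓ b₁ b₂) (n m : ℤ) :
    ‖ker β b₁ b₂ n m‖ₑ ≤ ENNReal.ofReal (K * (1 + β)) * (absE m + absE (n - m)) := by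
  have := H.β_nonneg; have := H.K_pos
  rw [← ofReal_norm, ← ofReal_abs_add, ← ENNReal.ofReal_mul (by positivity)]
  exact ENNReal.ofReal_le_ofReal (H.norm_ker_le n m)

/-- The damping dominates the kernel up to one derivative, with a constant that does not depend
on `β`: the part `β b₂` is compensated by the part `β |n|` of the damping. -/
lemma Admissible.absE_mul_enorm_ker_le (H : Admissible κ K β ℓ b₁ b₂) (n m : ℤ) :
    absE n * ‖ker β b₁ b₂ n m‖ₑ
      ≤ ENNReal.ofReal (K / κ * (κ * ((n : ℝ) ^ 2 + β * |(n : ℝ)|)))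
        * (absE m + absE (n - m)) := by
  have hβ := H.β_nonneg; have hK := H.K_pos; have hκ := H.κ_pos
  rw [← ofReal_norm, ← ofReal_abs_add, ← ENNReal.ofReal_mul (by positivity), absE_eq,
    ← ENNReal.ofReal_mul (by positivity)]
  refine ENNReal.ofReal_le_ofReal ?_
  have e : K / κ * (κ * ((n : ℝ) ^ 2 + β * |(n : ℝ)|)) = K * ((n : ℝ) ^ 2 + β * |(n : ℝ)|) := by
    field_simp
  rw [e, ker]
  have h0 : |(n : ℝ)| ≤ (n : ℝ) ^ 2 := by
    have : |n| ≤ n ^ 2 := by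
      rw [← sq_abs]; exact Int.le_self_sq _
    exact_mod_cast this
  have h1 := H.b₁_le n m
  have h2 := mul_le_mul_of_nonneg_left (H.b₂_le n m) H.β_nonneg
  set x := |(n : ℝ)|
  set y := |(m : ℝ)|
  set z := |((n - m : ℤ) : ℝ)|
  have hx : 0 ≤ x := abs_nonneg _
  have hy : 0 ≤ y := abs_nonneg _
  have hz : 0 ≤ z := abs_nonneg _
  calc x * ‖b₁ n m + (β : ℂ) * b₂ n m‖ ≤ x * (K * (y + z) + β * (K * z)) := by
        gcongr
        refine (norm_add_le _ _).trans (add_le_add h1 ?_)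
        rwa [norm_mul, Complex.norm_real, Real.norm_of_nonneg H.β_nonneg]
    _ = K * x * (y + z) + K * (β * x) * z := by ring
    _ ≤ K * (n : ℝ) ^ 2 * (y + z) + K * (β * x) * (y + z) := by
        gcongr
        linarith
    _ = _ := by ring

lemma Admissible.tsum_ker_le (H : Admissible κ K β ℓ b₁ b₂) (n : ℤ) (p q : ℤ → ℝ≥0∞) :
    ∑' m, ‖ker β b₁ b₂ n m‖ₑ * (p m * q (n - m)) ≤ ENNReal.ofReal (K * (1 + β)) * bil p q n := by
  rw [bil, ← ENNReal.tsum_mul_left]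
  refine ENNReal.tsum_le_tsum fun m => ?_
  rw [← mul_assoc (ENNReal.ofReal _)]
  exact mul_le_mul_left (H.enorm_ker_le n m) _

lemma Admissible.absE_mul_tsum_ker_le (H : Admissible κ K β ℓ b₁ b₂) (n : ℤ) (p q : ℤ → ℝ≥0∞) :
    absE n * ∑' m, ‖ker β b₁ b₂ n m‖ₑ * (p m * q (n - m))
      ≤ ENNReal.ofReal (K / κ * (κ * ((n : ℝ) ^ 2 + β * |(n : ℝ)|))) * bil p q n := by
  rw [bil, ← ENNReal.tsum_mul_left, ← ENNReal.tsum_mul_left]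
  refine ENNReal.tsum_le_tsum fun m => ?_
  rw [← mul_assoc (ENNReal.ofReal _), ← mul_assoc (absE n)]
  exact mul_le_mul_left (H.absE_mul_enorm_ker_le n m) _

lemma Admissible.tsum_ker_amp_ne_top (H : Admissible κ K β ℓ b₁ b₂) (n : ℤ) {p q : ℤ → ℝ≥0∞}
    (hp : p 0 = 0) (hq : q 0 = 0) (hp' : hsq p ≠ ∞) (hq' : hsq q ≠ ∞) :
    ∑' m, ‖ker β b₁ b₂ n m‖ₑ * (p m * q (n - m)) ≠ ∞ :=
  ne_top_of_le_ne_top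
    (ENNReal.mul_ne_top ENNReal.ofReal_ne_top (bil_ne_top p q hp hq hp' hq' n))
    (H.tsum_ker_le n p q)

lemma Admissible.summable_quad (H : Admissible κ K β ℓ b₁ b₂) (n : ℤ) {p q : ℤ → ℝ≥0∞}
    (hp : p 0 = 0) (hq : q 0 = 0) (hp' : hsq p ≠ ∞) (hq' : hsq q ≠ ∞) {c d : ℤ → ℂ}
    (hc : ∀ m, ‖c m‖ₑ ≤ p m) (hd : ∀ m, ‖d m‖ₑ ≤ q m) :
    Summable fun m => ker β b₁ b₂ n m * (c m * d (n - m)) := by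
  refine Summable.of_enorm (ne_top_of_le_ne_top
    (H.tsum_ker_amp_ne_top n hp hq hp' hq') (ENNReal.tsum_le_tsum fun m => ?_))
  rw [enorm_mul, enorm_mul]
  gcongr
  · exact hc m
  · exact hd _

lemma Admissible.continuous_quad (H : Admissible κ K β ℓ b₁ b₂) (n : ℤ) (v : Traj) :
    Continuous fun s => quad (ker β b₁ b₂) (coef v s) n := by
  have hfin := H.tsum_ker_amp_ne_top n (amp_zero v) (amp_zero v) (hsq_amp_ne_top v)
    (hsq_amp_ne_top v)
  refine continuous_tsum (fun m => ?_) (ENNReal.summable_toReal hfin) (fun m s => ?_)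
  · simp only [coef]; fun_prop
  · rw [← toReal_enorm]
    refine ENNReal.toReal_mono (ENNReal.ne_top_of_tsum_ne_top hfin m) ?_
    rw [enorm_mul, enorm_mul]
    gcongr
    · exact enorm_coef_le v s m
    · exact enorm_coef_le v s _

/-- Response of the `n`-th mode to a source, measured in the norm of the solution space. -/
lemma Admissible.response (H : Admissible κ K β ℓ b₁ b₂) {n : ℤ} (hn : n ≠ 0) {h : ℝ → ℂ}
    {B : ℝ≥0∞} (hB : B ≠ ∞)
    (hh : ∀ s, absE n * ‖h s‖ₑ
      ≤ ENNReal.ofReal (K / κ * (κ * ((n : ℝ) ^ 2 + β * |(n : ℝ)|))) * B)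
    {t : ℝ} (ht : 0 ≤ t) :
    absE n * ‖duhamel (ℓ n) 0 h t‖ₑ ≤ ENNReal.ofReal (K / κ) * B := by
  have hβ := H.β_nonneg; have hK := H.K_pos; have hκ := H.κ_pos
  have hn' : 0 < |(n : ℝ)| := abs_pos.2 (by exact_mod_cast hn)
  set lam := κ * ((n : ℝ) ^ 2 + β * |(n : ℝ)|) with hlam
  have hlam0 : 0 < lam := by
    have : 0 < (n : ℝ) ^ 2 := by rw [← sq_abs]; positivity
    positivity
  lift B to NNReal using hB
  have hB' : (B : ℝ≥0∞) = ENNReal.ofReal (B : ℝ) := by simp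
  rw [hB'] at hh ⊢
  have hG : ∀ s, ‖h s‖ ≤ K / κ * lam * B / |(n : ℝ)| := by
    intro s
    have := hh s
    rw [absE_eq, ← ofReal_norm, ← ENNReal.ofReal_mul (by positivity),
      ← ENNReal.ofReal_mul (by positivity),
      ENNReal.ofReal_le_ofReal_iff (by positivity)] at this
    rw [le_div_iff₀ hn']
    linarith
  have := norm_duhamel_zero_le hlam0 (H.re_le n) hG ht
  rw [absE_eq, ← ofReal_norm, ← ENNReal.ofReal_mul (by positivity),
      ← ENNReal.ofReal_mul (by positivity)]
  refine ENNReal.ofReal_le_ofReal ?_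
  calc _ ≤ |(n : ℝ)| * (K / κ * lam * B / |(n : ℝ)| / lam) := by gcongr
    _ = _ := by field_simp

/-- The (formal) right-hand side of the fixed-point equation, frozen at its initial value for
negative times. -/
def picard (β : ℝ) (ℓ : ℤ → ℂ) (b₁ b₂ : ℤ → ℤ → ℂ) (f₀ : ℤ → ℂ) (v : Traj) (n : ℤ) (t : ℝ) : ℂ :=
  (n : ℂ) * duhamel (ℓ n) (f₀ n) (fun s => quad (ker β b₁ b₂) (coef v s) n) (max t 0)

lemma Admissible.enorm_picard_le (H : Admissible κ K β ℓ b₁ b₂) (f₀ : ℤ → ℂ) (v : Traj) (n : ℤ)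
    (t : ℝ) : ‖picard β ℓ b₁ b₂ f₀ v n t‖ₑ
      ≤ absE n * ‖f₀ n‖ₑ + ENNReal.ofReal (K / κ) * bil (amp v) (amp v) n := by
  by_cases hn : n = 0
  · simp [picard, hn]
  rw [picard, duhamel_split, mul_add]
  refine (enorm_add_le _ _).trans ?_
  simp only [enorm_mul, enorm_intCast]
  refine add_le_add ?_ (H.response hn (bil_ne_top _ _ (amp_zero v) (amp_zero v)
    (hsq_amp_ne_top v) (hsq_amp_ne_top v) n) (fun s => ?_) (le_max_right _ _))
  · gcongr
    refine mul_le_of_le_one_left (by positivity) ?_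
    rw [← ofReal_norm, Complex.norm_exp]
    refine ENNReal.ofReal_le_one.2 (Real.exp_le_one_iff.2 ?_)
    have e : (ℓ n * ((max t 0 : ℝ) : ℂ)).re = (ℓ n).re * max t 0 := by simp
    rw [e]
    refine mul_nonpos_of_nonpos_of_nonneg ((H.re_le n).trans ?_) (le_max_right _ _)
    have hβ := H.β_nonneg; have hκ := H.κ_pos
    rw [neg_nonpos]; positivity
  · refine le_trans ?_ (H.absE_mul_tsum_ker_le n _ _)
    gcongr
    refine enorm_tsum_le_tsum_enorm.trans (ENNReal.tsum_le_tsum fun m => ?_)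
    rw [enorm_mul, enorm_mul]
    gcongr
    · exact enorm_coef_le v s m
    · exact enorm_coef_le v s _

lemma Admissible.enorm_picard_sub_le (H : Admissible κ K β ℓ b₁ b₂) (f₀ : ℤ → ℂ) (v w : Traj)
    (n : ℤ) (t : ℝ) : ‖picard β ℓ b₁ b₂ f₀ v n t - picard β ℓ b₁ b₂ f₀ w n t‖ₑ
      ≤ ENNReal.ofReal (K / κ)
        * (bil (amp (v - w)) (amp v) n + bil (amp w) (amp (v - w)) n) := by
  by_cases hn : n = 0
  · simp [picard, hn]
  rw [picard, picard, ← mul_sub, duhamel_sub _ _ (H.continuous_quad n v) (H.continuous_quad n w),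
    enorm_mul, enorm_intCast]
  refine H.response hn (ENNReal.add_ne_top.2
    ⟨bil_ne_top _ _ (amp_zero _) (amp_zero _) (hsq_amp_ne_top _) (hsq_amp_ne_top _) n,
     bil_ne_top _ _ (amp_zero _) (amp_zero _) (hsq_amp_ne_top _) (hsq_amp_ne_top _) n⟩)
    (fun s => ?_) (le_max_right _ _)
  have hs : ∀ x y : Traj, Summable fun m =>
      ker β b₁ b₂ n m * (coef x s m * coef y s (n - m)) := fun x y =>
    H.summable_quad n (amp_zero x) (amp_zero y) (hsq_amp_ne_top x) (hsq_amp_ne_top y)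
      (enorm_coef_le x s) (enorm_coef_le y s)
  have hle : ∀ x y : Traj, ‖∑' m, ker β b₁ b₂ n m * (coef x s m * coef y s (n - m))‖ₑ
      ≤ ∑' m, ‖ker β b₁ b₂ n m‖ₑ * (amp x m * amp y (n - m)) := by
    intro x y
    refine enorm_tsum_le_tsum_enorm.trans (ENNReal.tsum_le_tsum fun m => ?_)
    rw [enorm_mul, enorm_mul]
    gcongr
    · exact enorm_coef_le x s m
    · exact enorm_coef_le y s _
  have e : quad (ker β b₁ b₂) (coef v s) n - quad (ker β b₁ b₂) (coef w s) n
      = (∑' m, ker β b₁ b₂ n m * (coef (v - w) s m * coef v s (n - m)))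
        + ∑' m, ker β b₁ b₂ n m * (coef w s m * coef (v - w) s (n - m)) := by
    rw [quad, quad, ← (hs v v).tsum_sub (hs w w), ← (hs (v - w) v).tsum_add (hs w (v - w))]
    refine tsum_congr fun m => ?_
    rw [← coef_sub, ← coef_sub]; ring
  rw [e]
  calc _ ≤ absE n * ((∑' m, ‖ker β b₁ b₂ n m‖ₑ * (amp (v - w) m * amp v (n - m)))
        + ∑' m, ‖ker β b₁ b₂ n m‖ₑ * (amp w m * amp (v - w) (n - m))) := by
        gcongr
        exact (enorm_add_le _ _).trans (add_le_add (hle _ _) (hle _ _))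
    _ ≤ _ := by
        rw [mul_add, mul_add]
        exact add_le_add (H.absE_mul_tsum_ker_le n _ _) (H.absE_mul_tsum_ker_le n _ _)

lemma tsum_picard_le (κ K : ℝ) (f₀ : ℤ → ℂ) (v : Traj) :
    ∑' n, (absE n * ‖f₀ n‖ₑ + ENNReal.ofReal (K / κ) * bil (amp v) (amp v) n) ^ 2
      ≤ 2 * hsq (fun n => ‖f₀ n‖ₑ)
        + 8 * ENNReal.ofReal (K / κ) ^ 2 * embC * (‖v‖ₑ ^ 2 * ‖v‖ₑ ^ 2) := by
  calc _ ≤ ∑' n, 2 * ((absE n * ‖f₀ n‖ₑ) ^ 2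
          + (ENNReal.ofReal (K / κ) * bil (amp v) (amp v) n) ^ 2) :=
        ENNReal.tsum_le_tsum fun n => add_sq_le _ _
    _ = 2 * hsq (fun n => ‖f₀ n‖ₑ)
        + 2 * ENNReal.ofReal (K / κ) ^ 2 * ∑' n, bil (amp v) (amp v) n ^ 2 := by
        simp_rw [mul_pow]
        rw [ENNReal.tsum_mul_left, ENNReal.tsum_add, ENNReal.tsum_mul_left, hsq]
        ring
    _ ≤ 2 * hsq (fun n => ‖f₀ n‖ₑ)
        + 2 * ENNReal.ofReal (K / κ) ^ 2 * (4 * embC * (‖v‖ₑ ^ 2 * ‖v‖ₑ ^ 2)) := by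
        gcongr
        refine (tsum_bil_sq_le _ _ (amp_zero v) (amp_zero v)).trans ?_
        gcongr <;> exact hsq_amp_le v
    _ = _ := by ring

lemma Admissible.continuous_picard (H : Admissible κ K β ℓ b₁ b₂) (f₀ : ℤ → ℂ) (v : Traj)
    (n : ℤ) : Continuous (picard β ℓ b₁ b₂ f₀ v n) := by
  unfold picard
  exact continuous_const.mul ((continuous_duhamel _ _ (H.continuous_quad n v)).comp
    (continuous_id.max continuous_const))

/-- The Picard map preserves the solution space. -/
lemma Admissible.exists_picard (H : Admissible κ K β ℓ b₁ b₂) {f₀ : ℤ → ℂ}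
    (hf₀ : hsq (fun n => ‖f₀ n‖ₑ) ≠ ∞) (v : Traj) :
    ∃ u : Traj, ∀ n t, u n t = picard β ℓ b₁ b₂ f₀ v n t := by
  set B : ℤ → ℝ≥0∞ := fun n =>
    absE n * ‖f₀ n‖ₑ + ENNReal.ofReal (K / κ) * bil (amp v) (amp v) n with hB
  have hB2 : ∑' n, B n ^ 2 ≠ ∞ := by
    refine ne_top_of_le_ne_top ?_ (tsum_picard_le κ K f₀ v)
    refine ENNReal.add_ne_top.2 ⟨ENNReal.mul_ne_top (by norm_num) hf₀, ?_⟩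
    refine ENNReal.mul_ne_top (ENNReal.mul_ne_top (ENNReal.mul_ne_top (by norm_num) (by simp))
      embC_lt_top.ne) (by simp [ENNReal.mul_eq_top])
  have hBn : ∀ n, B n ≠ ∞ := fun n hn =>
    ENNReal.ne_top_of_tsum_ne_top hB2 n (by simp [hn])
  have hb : ∀ n t, ‖picard β ℓ b₁ b₂ f₀ v n t‖ ≤ (B n).toReal := by
    intro n t
    rw [← toReal_enorm]
    exact ENNReal.toReal_mono (hBn n) (H.enorm_picard_le f₀ v n t)
  let u : ℤ → (ℝ →ᵇ ℂ) := fun n =>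
    BoundedContinuousFunction.ofNormedAddCommGroup (picard β ℓ b₁ b₂ f₀ v n)
      (H.continuous_picard f₀ v n) (B n).toReal (hb n)
  have hu : Memℓp u 2 := by
    refine memℓp_gen ?_
    simp only [ENNReal.toReal_ofNat, Real.rpow_ofNat]
    refine Summable.of_nonneg_of_le (fun n => by positivity) (fun n => ?_)
      (ENNReal.summable_toReal hB2)
    rw [ENNReal.toReal_pow]
    gcongr
    exact BoundedContinuousFunction.norm_ofNormedAddCommGroup_le _ ENNReal.toReal_nonneg _
  exact ⟨⟨u, hu⟩, fun n t => rfl⟩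

end

/-! ### Existence by a fixed-point argument -/

lemma enorm_bcf_le {u : ℝ →ᵇ ℂ} {B : ℝ≥0∞} (h : ∀ t, ‖u t‖ₑ ≤ B) : ‖u‖ₑ ≤ B := by
  by_cases hB : B = ∞
  · simp [hB]
  rw [← ofReal_norm]
  refine ENNReal.ofReal_le_of_le_toReal ((BoundedContinuousFunction.norm_le
    ENNReal.toReal_nonneg).2 fun t => ?_)
  rw [← toReal_enorm]
  exact ENNReal.toReal_mono hB (h t)

lemma le_of_sq_le_sq {x y : ℝ≥0∞} (h : x ^ 2 ≤ y ^ 2) : x ≤ y :=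
  (ENNReal.pow_le_pow_left_iff (by norm_num)).1 h

section
variable {κ K β : ℝ} {ℓ : ℤ → ℂ} {b₁ b₂ : ℤ → ℤ → ℂ}

lemma Admissible.ker_conj (H : Admissible κ K β ℓ b₁ b₂) (n m : ℤ) :
    ker β b₁ b₂ (-n) (-m) = starRingEnd ℂ (ker β b₁ b₂ n m) := by
  simp [ker, H.b₁_conj, H.b₂_conj]

lemma Admissible.quad_neg (H : Admissible κ K β ℓ b₁ b₂) {c : ℤ → ℂ}
    (hc : ∀ n, c (-n) = starRingEnd ℂ (c n)) (n : ℤ) :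
    quad (ker β b₁ b₂) c (-n) = starRingEnd ℂ (quad (ker β b₁ b₂) c n) := by
  rw [quad, quad, Complex.conj_tsum, ← (Equiv.neg ℤ).tsum_eq]
  refine tsum_congr fun m => ?_
  have e : -n - -m = -(n - m) := by ring
  simp only [Equiv.neg_apply, e, hc, H.ker_conj, map_mul]

lemma Admissible.quad_zero (H : Admissible κ K β ℓ b₁ b₂) (c : ℤ → ℂ) :
    quad (ker β b₁ b₂) c 0 = 0 := by
  have h : quad (ker β b₁ b₂) c 0 = -quad (ker β b₁ b₂) c 0 := by
    conv_lhs => rw [quad, ← (Equiv.neg ℤ).tsum_eq]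
    rw [quad, ← tsum_neg]
    refine tsum_congr fun m => ?_
    simp only [Equiv.neg_apply, ker, H.b₁_zero, H.b₂_zero, zero_sub, neg_neg]
    ring
  exact self_eq_neg.1 h

/-- The symmetry of `v` expressing that the represented functions are real-valued. -/
def IsRealTraj (v : Traj) : Prop := ∀ (n : ℤ) (t : ℝ), v (-n) t = -starRingEnd ℂ (v n t)

lemma coef_neg {v : Traj} (hv : IsRealTraj v) (t : ℝ) (n : ℤ) :
    coef v t (-n) = starRingEnd ℂ (coef v t n) := by
  simp only [coef, hv n t, map_mul, map_inv₀, Int.cast_neg]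
  rw [map_intCast, inv_neg, neg_mul_neg]

lemma Admissible.picard_neg (H : Admissible κ K β ℓ b₁ b₂) {f₀ : ℤ → ℂ}
    (hf₀ : ∀ n, f₀ (-n) = starRingEnd ℂ (f₀ n)) {v : Traj} (hv : IsRealTraj v) (n : ℤ) (t : ℝ) :
    picard β ℓ b₁ b₂ f₀ v (-n) t = -starRingEnd ℂ (picard β ℓ b₁ b₂ f₀ v n t) := by
  simp only [picard, H.ℓ_conj, hf₀, H.quad_neg (coef_neg hv _), duhamel_conj, map_mul,
    Int.cast_neg]
  rw [map_intCast, neg_mul]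

lemma isClosed_isRealTraj : IsClosed {v : Traj | IsRealTraj v} := by
  have hcont : ∀ (n : ℤ) (t : ℝ), Continuous fun v : Traj => v n t := fun n t =>
    (continuous_eval_const t).comp
      (lp.lipschitzWith_one_eval (E := fun _ : ℤ => ℝ →ᵇ ℂ) 2 n).continuous
  simp only [IsRealTraj, Set.ofPred_forall]
  refine isClosed_iInter fun n => isClosed_iInter fun t => isClosed_eq (hcont _ _) ?_
  exact (Complex.continuous_conj.comp (hcont n t)).neg

/-- Banach fixed-point argument: for small data the Picard map has a fixed point in the set of
real trajectories of norm at most `r`. The smallness condition does not involve `β`. -/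
lemma Admissible.exists_fixed (H : Admissible κ K β ℓ b₁ b₂) {r : ℝ}
    (hr : 64 * ENNReal.ofReal (K / κ) ^ 2 * embC * ENNReal.ofReal r ^ 2 ≤ 1) {f₀ : ℤ → ℂ}
    (hf₀ : ∀ n, f₀ (-n) = starRingEnd ℂ (f₀ n))
    (hsmall : 4 * hsq (fun n => ‖f₀ n‖ₑ) ≤ ENNReal.ofReal r ^ 2) :
    ∃ v : Traj, ‖v‖ₑ ≤ ENNReal.ofReal r ∧ IsRealTraj v ∧
      ∀ n t, v n t = picard β ℓ b₁ b₂ f₀ v n t := by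
  set R := ENNReal.ofReal r with hR
  set X := ENNReal.ofReal (K / κ) ^ 2 * embC with hX
  have hr' : 64 * (X * R ^ 2) ≤ 1 := by
    refine le_trans (le_of_eq ?_) hr
    rw [hX]; ring
  have hr16 : 16 * (X * R ^ 2) ≤ 1 := le_trans (by gcongr; norm_num) hr'
  have hfin : hsq (fun n => ‖f₀ n‖ₑ) ≠ ∞ := by
    refine ne_top_of_le_ne_top (b := R ^ 2) (by simp [hR]) (le_trans ?_ hsmall)
    exact le_mul_of_one_le_left (by positivity) (by norm_num)
  choose Φ hΦ using fun v => H.exists_picard (f₀ := f₀) hfin v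
  set S : Set Traj := {v | ‖v‖ₑ ≤ R} ∩ {v | IsRealTraj v} with hS
  have hSc : IsComplete S :=
    ((isClosed_le continuous_enorm continuous_const).inter isClosed_isRealTraj).isComplete
  have hmaps : Set.MapsTo Φ S S := by
    rintro v ⟨hv, hvr⟩
    simp only [Set.mem_ofPred_eq] at hv hvr
    refine ⟨?_, fun n t => ?_⟩
    · refine le_of_sq_le_sq ?_
      rw [← tsum_enorm_sq]
      have h1 : ∑' n, ‖Φ v n‖ₑ ^ 2 ≤ 2 * hsq (fun n => ‖f₀ n‖ₑ) + 8 * X * (R ^ 2 * R ^ 2) := by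
        calc _ ≤ _ := ENNReal.tsum_le_tsum fun n => pow_le_pow_left' (enorm_bcf_le fun t => by
                rw [hΦ]; exact H.enorm_picard_le f₀ v n t) 2
          _ ≤ _ := tsum_picard_le κ K f₀ v
          _ = 2 * hsq (fun n => ‖f₀ n‖ₑ) + 8 * X * (‖v‖ₑ ^ 2 * ‖v‖ₑ ^ 2) := by rw [hX]; ring
          _ ≤ _ := by gcongr
      refine h1.trans ?_
      have h2 : 2 * (2 * hsq (fun n => ‖f₀ n‖ₑ) + 8 * X * (R ^ 2 * R ^ 2)) ≤ 2 * R ^ 2 := by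
        calc _ = 4 * hsq (fun n => ‖f₀ n‖ₑ) + 16 * (X * R ^ 2) * R ^ 2 := by ring
          _ ≤ R ^ 2 + 1 * R ^ 2 := by gcongr
          _ = _ := by ring
      exact (ENNReal.mul_le_mul_iff_right (by norm_num) (by norm_num)).1 h2
    · rw [hΦ, hΦ, H.picard_neg hf₀ hvr]
  have hcontr : ∀ v ∈ S, ∀ w ∈ S, edist (Φ v) (Φ w) ≤ ((1 / 2 : NNReal) : ℝ≥0∞) * edist v w := by
    rintro v ⟨hv, -⟩ w ⟨hw, -⟩
    simp only [Set.mem_ofPred_eq] at hv hw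
    rw [edist_eq_enorm_sub, edist_eq_enorm_sub]
    have h1 : ‖Φ v - Φ w‖ₑ ^ 2 ≤ 16 * (X * R ^ 2) * ‖v - w‖ₑ ^ 2 := by
      rw [← tsum_enorm_sq]
      calc _ ≤ ∑' n, (ENNReal.ofReal (K / κ)
              * (bil (amp (v - w)) (amp v) n + bil (amp w) (amp (v - w)) n)) ^ 2 :=
            ENNReal.tsum_le_tsum fun n => pow_le_pow_left' (enorm_bcf_le fun t => by
              have e : (Φ v - Φ w) n t = Φ v n t - Φ w n t := rfl
              rw [e, hΦ, hΦ]
              exact H.enorm_picard_sub_le f₀ v w n t) 2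
        _ ≤ ∑' n, ENNReal.ofReal (K / κ) ^ 2 * (2 *
              (bil (amp (v - w)) (amp v) n ^ 2 + bil (amp w) (amp (v - w)) n ^ 2)) := by
            refine ENNReal.tsum_le_tsum fun n => ?_
            rw [mul_pow]
            gcongr
            exact add_sq_le _ _
        _ ≤ ENNReal.ofReal (K / κ) ^ 2 * (2 *
              (4 * embC * (‖v - w‖ₑ ^ 2 * R ^ 2) + 4 * embC * (R ^ 2 * ‖v - w‖ₑ ^ 2))) := by
            rw [ENNReal.tsum_mul_left, ENNReal.tsum_mul_left, ENNReal.tsum_add]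
            have hh : ∀ u : Traj, ‖u‖ₑ ≤ R → hsq (amp u) ≤ R ^ 2 := fun u hu =>
              (hsq_amp_le u).trans (pow_le_pow_left' hu 2)
            gcongr
            · refine (tsum_bil_sq_le _ _ (amp_zero _) (amp_zero _)).trans ?_
              gcongr
              · exact hsq_amp_le _
              · exact hh v hv
            · refine (tsum_bil_sq_le _ _ (amp_zero _) (amp_zero _)).trans ?_
              gcongr
              · exact hh w hw
              · exact hsq_amp_le _
        _ = _ := by rw [hX]; ring
    have h2 : (2 * ‖Φ v - Φ w‖ₑ) ^ 2 ≤ ‖v - w‖ₑ ^ 2 := by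
      calc _ = 4 * ‖Φ v - Φ w‖ₑ ^ 2 := by ring
        _ ≤ 4 * (16 * (X * R ^ 2) * ‖v - w‖ₑ ^ 2) := by gcongr
        _ = 64 * (X * R ^ 2) * ‖v - w‖ₑ ^ 2 := by ring
        _ ≤ 1 * ‖v - w‖ₑ ^ 2 := by gcongr
        _ = _ := one_mul _
    have h3 := le_of_sq_le_sq h2
    have e2 : ((1 / 2 : NNReal) : ℝ≥0∞) = 2⁻¹ := by simp
    rw [e2]
    calc ‖Φ v - Φ w‖ₑ = 2⁻¹ * (2 * ‖Φ v - Φ w‖ₑ) := by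
          rw [← mul_assoc, ENNReal.inv_mul_cancel (by norm_num) (by norm_num), one_mul]
      _ ≤ _ := by gcongr
  have hC : ContractingWith (1 / 2 : NNReal) (hmaps.restrict Φ S S) := by
    refine ⟨by rw [one_div]; exact inv_lt_one_of_one_lt₀ one_lt_two, fun v w => hcontr v v.2 w w.2⟩
  have h0 : (0 : Traj) ∈ S := by
    refine ⟨by simp, fun n t => ?_⟩
    change (0 : ℂ) = -starRingEnd ℂ 0
    simp
  obtain ⟨v, ⟨hv, hvr⟩, hfix, -⟩ := hC.exists_fixedPoint' hSc hmaps h0 (edist_ne_top _ _)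
  exact ⟨v, hv, hvr, fun n t => by rw [← hΦ, hfix]⟩

/-- Small data generate a global solution whose modes have square-summable suprema in time. -/
theorem Admissible.exists_solution (H : Admissible κ K β ℓ b₁ b₂) {r : ℝ}
    (hr : 64 * ENNReal.ofReal (K / κ) ^ 2 * embC * ENNReal.ofReal r ^ 2 ≤ 1) {f₀ : ℤ → ℂ}
    (hf₀ : RealZeroMean f₀)
    (hsmall : 4 * hsq (fun n => ‖f₀ n‖ₑ) ≤ ENNReal.ofReal r ^ 2) :
    ∃ (f g : ℝ → ℤ → ℂ) (A : ℤ → ℝ≥0∞), f 0 = f₀ ∧ A 0 = 0 ∧ hsq A ≤ ENNReal.ofReal r ^ 2 ∧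
      (∀ n, Continuous fun t => g t n) ∧
      (∀ n t, HasDerivAt (fun s => f s n) (ℓ n * f t n + g t n) t) ∧
      ∀ t, 0 ≤ t → RealZeroMean (f t) ∧ (∀ n, ‖f t n‖ₑ ≤ A n) ∧
        ∀ n, g t n = quad (ker β b₁ b₂) (f t) n := by
  obtain ⟨v, hv, hvr, hfix⟩ := H.exists_fixed hr hf₀.2 hsmall
  set g : ℝ → ℤ → ℂ := fun t n => quad (ker β b₁ b₂) (coef v t) n with hg
  set f : ℝ → ℤ → ℂ := fun t n => duhamel (ℓ n) (f₀ n) (fun s => g s n) t with hf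
  have hfc : ∀ t, 0 ≤ t → f t = coef v t := by
    intro t ht
    ext n
    by_cases hn : n = 0
    · subst hn
      simp [hf, hg, coef, H.quad_zero, hf₀.1, duhamel]
    · have hn' : (n : ℂ) ≠ 0 := by exact_mod_cast hn
      rw [coef, hfix, picard, max_eq_left ht, inv_mul_cancel_left₀ hn']
  refine ⟨f, g, amp v, ?_, amp_zero v, (hsq_amp_le v).trans (pow_le_pow_left' hv 2),
    fun n => H.continuous_quad n v,
    fun n t => hasDerivAt_duhamel _ _ (H.continuous_quad n v) t, fun t ht => ?_⟩
  · ext n; exact duhamel_zero _ _ _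
  · rw [hfc t ht]
    exact ⟨⟨by simp [coef], coef_neg hvr t⟩, enorm_coef_le v t, fun n => rfl⟩

end

/-! ### Energy estimate -/

/-- The damping rate of the mode `n`. -/
def lam (κ β : ℝ) (n : ℤ) : ℝ := κ * ((n : ℝ) ^ 2 + β * |(n : ℝ)|)

/-- The squared `H¹` norm, as an extended real. -/
def energy (c : ℤ → ℂ) : ℝ≥0∞ := ∑' n : ℤ, ENNReal.ofReal ((1 + (n : ℝ) ^ 2) * ‖c n‖ ^ 2)

/-- The dissipation rate of the squared `H¹` norm. -/
def diss (κ β : ℝ) (c : ℤ → ℂ) : ℝ≥0∞ :=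
  ∑' n : ℤ, ENNReal.ofReal ((1 + (n : ℝ) ^ 2) * lam κ β n * ‖c n‖ ^ 2)

/-- The squared norm of the forcing `d` dual to the dissipation; the mode `n = 0` is discarded, since
`lam κ β 0 = 0`. -/
def src (κ β : ℝ) (d : ℤ → ℂ) : ℝ≥0∞ :=
  ∑' n : ℤ, ENNReal.ofReal ((1 + (n : ℝ) ^ 2) / lam κ β n * ‖d n‖ ^ 2)

section
variable {κ K β : ℝ} {ℓ : ℤ → ℂ} {b₁ b₂ : ℤ → ℤ → ℂ}

lemma ofReal_mul_norm_sq {x : ℝ} (hx : 0 ≤ x) (z : ℂ) :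
    ENNReal.ofReal (x * ‖z‖ ^ 2) = ENNReal.ofReal x * ‖z‖ₑ ^ 2 := by
  rw [ENNReal.ofReal_mul hx, ENNReal.ofReal_pow (norm_nonneg _), ofReal_norm]

lemma one_le_intCast_sq {n : ℤ} (hn : n ≠ 0) : (1 : ℝ) ≤ (n : ℝ) ^ 2 := by
  have : (1 : ℤ) ≤ n ^ 2 := by
    have := sq_pos_of_ne_zero hn
    omega
  exact_mod_cast this

lemma one_le_abs_intCast {n : ℤ} (hn : n ≠ 0) : (1 : ℝ) ≤ |(n : ℝ)| := by
  exact_mod_cast Int.one_le_abs hn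

lemma Admissible.lam_nonneg (H : Admissible κ K β ℓ b₁ b₂) (n : ℤ) : 0 ≤ lam κ β n := by
  have := H.β_nonneg; have := H.κ_pos
  rw [lam]; positivity

lemma Admissible.le_lam (H : Admissible κ K β ℓ b₁ b₂) (n : ℤ) : κ * (n : ℝ) ^ 2 ≤ lam κ β n := by
  have h1 := H.β_nonneg; have h2 := H.κ_pos
  rw [lam]
  gcongr
  have : 0 ≤ β * |(n : ℝ)| := by positivity
  linarith

lemma Admissible.lam_pos (H : Admissible κ K β ℓ b₁ b₂) {n : ℤ} (hn : n ≠ 0) :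
    0 < lam κ β n := by
  have h2 := H.κ_pos
  have := one_le_intCast_sq hn
  exact lt_of_lt_of_le (by positivity) (H.le_lam n)

lemma Admissible.weight_nonneg (H : Admissible κ K β ℓ b₁ b₂) (n : ℤ) :
    0 ≤ (1 + (n : ℝ) ^ 2) / lam κ β n := by
  have := H.lam_nonneg n
  positivity

lemma Admissible.weight_le (H : Admissible κ K β ℓ b₁ b₂) (n : ℤ) :
    (1 + (n : ℝ) ^ 2) / lam κ β n ≤ 2 / κ := by
  have hκ := H.κ_pos
  by_cases hn : n = 0
  · subst hn
    have : (1 + ((0 : ℤ) : ℝ) ^ 2) / lam κ β 0 = 0 := by simp [lam]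
    rw [this]; positivity
  · have h1 := one_le_intCast_sq hn
    have h2 := H.lam_pos hn
    rw [div_le_div_iff₀ h2 hκ]
    have := H.le_lam n
    nlinarith

lemma Admissible.weight_mul_sq_le (H : Admissible κ K β ℓ b₁ b₂) (n : ℤ) :
    (1 + (n : ℝ) ^ 2) / lam κ β n * β ^ 2 ≤ 2 / κ * (β * |(n : ℝ)|) := by
  have hκ := H.κ_pos
  have hβ := H.β_nonneg
  by_cases hn : n = 0
  · subst hn
    simp [lam]
  · have h1 := one_le_intCast_sq hn
    have h2 := H.lam_pos hn
    rw [div_mul_eq_mul_div, div_mul_eq_mul_div, div_le_div_iff₀ h2 hκ]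
    have h3 : κ * (β * |(n : ℝ)|) ≤ lam κ β n := by
      rw [lam]; gcongr; nlinarith
    have h4 : 0 ≤ β * |(n : ℝ)| := by positivity
    calc (1 + (n : ℝ) ^ 2) * β ^ 2 * κ ≤ (2 * (n : ℝ) ^ 2) * β ^ 2 * κ := by gcongr; linarith
      _ = 2 * (β * |(n : ℝ)|) * (κ * (β * |(n : ℝ)|)) := by
          rw [← sq_abs (n : ℝ)]; ring
      _ ≤ _ := by gcongr

/-- Energy balance, the forcing being absorbed by half of the dissipation. -/
lemma Admissible.energy_step (H : Admissible κ K β ℓ b₁ b₂) {f g : ℝ → ℤ → ℂ}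
    (hg : ∀ n, Continuous fun t => g t n)
    (hf : ∀ n t, HasDerivAt (fun s => f s n) (ℓ n * f t n + g t n) t)
    (hf0 : ∀ t, 0 ≤ t → f t 0 = 0) {s t : ℝ} (hs : 0 ≤ s) (hst : s ≤ t) :
    energy (f t) + ∫⁻ τ in Set.Ioc s t, diss κ β (f τ)
      ≤ energy (f s) + ∫⁻ τ in Set.Ioc s t, src κ β (g τ) := by
  have hfc : ∀ n, Continuous fun t => f t n := fun n =>
    continuous_iff_continuousAt.2 fun t => (hf n t).continuousAt
  have e1 : ∫⁻ τ in Set.Ioc s t, diss κ β (f τ) = ∑' n : ℤ, ∫⁻ τ in Set.Ioc s t,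
      ENNReal.ofReal ((1 + (n : ℝ) ^ 2) * lam κ β n * ‖f τ n‖ ^ 2) := by
    simp only [diss]
    refine MeasureTheory.lintegral_tsum fun n => ?_
    have := hfc n
    exact (ENNReal.continuous_ofReal.comp (by fun_prop)).measurable.aemeasurable
  have e2 : ∫⁻ τ in Set.Ioc s t, src κ β (g τ) = ∑' n : ℤ, ∫⁻ τ in Set.Ioc s t,
      ENNReal.ofReal ((1 + (n : ℝ) ^ 2) / lam κ β n * ‖g τ n‖ ^ 2) := by
    simp only [src]
    refine MeasureTheory.lintegral_tsum fun n => ?_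
    have := hg n
    exact (ENNReal.continuous_ofReal.comp (by fun_prop)).measurable.aemeasurable
  rw [e1, e2, energy, energy, ← ENNReal.tsum_add, ← ENNReal.tsum_add]
  refine ENNReal.tsum_le_tsum fun n => ?_
  have hl := H.lam_nonneg n
  have hw := H.weight_nonneg n
  by_cases hn : n = 0
  · subst hn
    simp [hf0 t (hs.trans hst), hf0 s hs, lam]
  · have hlp := H.lam_pos hn
    have h1 := hfc n
    have h2 := hg n
    refine mode_energy (hf n) (hg n) (by positivity) (by fun_prop) (by fun_prop)
      (fun τ => by positivity) (fun τ => by positivity) (fun τ => ?_) hst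
    set x := ‖f τ n‖
    set y := ‖g τ n‖
    have h3 : (ℓ n).re ≤ -lam κ β n := H.re_le n
    have h4 : 2 * (x * y) ≤ lam κ β n * x ^ 2 + y ^ 2 / lam κ β n := by
      have : lam κ β n * x ^ 2 + y ^ 2 / lam κ β n - 2 * (x * y)
          = (lam κ β n * x - y) ^ 2 / lam κ β n := by
        field_simp; ring
      have : 0 ≤ (lam κ β n * x - y) ^ 2 / lam κ β n := by positivity
      linarith
    have h5 : 2 * (ℓ n).re * x ^ 2 + 2 * (x * y) ≤ y ^ 2 / lam κ β n - lam κ β n * x ^ 2 := by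
      nlinarith [mul_le_mul_of_nonneg_right h3 (sq_nonneg x)]
    have h6 := mul_le_mul_of_nonneg_left h5 (by positivity : 0 ≤ 1 + (n : ℝ) ^ 2)
    refine h6.trans (le_of_eq ?_)
    ring

/-- A crude bound of the forcing, which only serves to know that it is finite. -/
lemma Admissible.src_le_of_le (H : Admissible κ K β ℓ b₁ b₂) {c : ℤ → ℂ} {A : ℤ → ℝ≥0∞}
    (hA : A 0 = 0) (hc : ∀ n, ‖c n‖ₑ ≤ A n) :
    src κ β (quad (ker β b₁ b₂) c)
      ≤ ENNReal.ofReal (2 / κ) * (ENNReal.ofReal (K * (1 + β)) ^ 2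
        * (4 * embC * (hsq A * hsq A))) := by
  have h : ∀ n : ℤ, ENNReal.ofReal ((1 + (n : ℝ) ^ 2) / lam κ β n * ‖quad (ker β b₁ b₂) c n‖ ^ 2)
      ≤ ENNReal.ofReal (2 / κ) * (ENNReal.ofReal (K * (1 + β)) ^ 2 * bil A A n ^ 2) := by
    intro n
    rw [ofReal_mul_norm_sq (H.weight_nonneg n), ← mul_pow]
    refine mul_le_mul' (ENNReal.ofReal_le_ofReal (H.weight_le n)) (pow_le_pow_left' ?_ 2)
    · refine le_trans ?_ (H.tsum_ker_le n A A)
      refine enorm_tsum_le_tsum_enorm.trans (ENNReal.tsum_le_tsum fun m => ?_)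
      rw [enorm_mul, enorm_mul]
      gcongr
      · exact hc m
      · exact hc _
  calc src κ β (quad (ker β b₁ b₂) c) ≤ _ := ENNReal.tsum_le_tsum h
    _ = ENNReal.ofReal (2 / κ) * (ENNReal.ofReal (K * (1 + β)) ^ 2 * ∑' n, bil A A n ^ 2) := by
        rw [ENNReal.tsum_mul_left, ENNReal.tsum_mul_left]
    _ ≤ _ := by
        gcongr
        exact tsum_bil_sq_le A A hA hA

/-- Lower bound of the dissipation by the two norms that control the quadratic terms. -/
lemma Admissible.le_diss (H : Admissible κ K β ℓ b₁ b₂) (c : ℤ → ℂ) :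
    ENNReal.ofReal κ * (hsq (fun n => ‖c n‖ₑ)
        + ENNReal.ofReal β * ∑' n, absE n ^ 3 * ‖c n‖ₑ ^ 2) ≤ diss κ β c := by
  have hκ := H.κ_pos; have hβ := H.β_nonneg
  rw [hsq, ← ENNReal.tsum_mul_left, ← ENNReal.tsum_add, ← ENNReal.tsum_mul_left, diss]
  refine ENNReal.tsum_le_tsum fun n => ?_
  have hl := H.lam_nonneg n
  rw [ofReal_mul_norm_sq (by positivity), ← mul_assoc, ← add_mul, ← mul_assoc, absE_eq,
    ← ENNReal.ofReal_pow (abs_nonneg _), ← ENNReal.ofReal_pow (abs_nonneg _),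
    ← ENNReal.ofReal_mul hβ, ← ENNReal.ofReal_add (by positivity) (by positivity),
    ← ENNReal.ofReal_mul hκ.le]
  refine mul_le_mul' (ENNReal.ofReal_le_ofReal ?_) le_rfl
  rw [lam]
  have e : |(n : ℝ)| ^ 3 = |(n : ℝ)| * (n : ℝ) ^ 2 := by rw [← sq_abs]; ring
  rw [sq_abs, e]
  have h2 : 0 ≤ κ * (n : ℝ) ^ 4 := by positivity
  have h3 : 0 ≤ κ * β * |(n : ℝ)| := by positivity
  nlinarith

/-- The key estimate: for small `H¹` norm the dissipation dominates the forcing, uniformly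
in `β`. -/
lemma Admissible.src_le_diss (H : Admissible κ K β ℓ b₁ b₂) {r : ℝ}
    (hr : 64 * ENNReal.ofReal (K / κ) ^ 2 * embC * ENNReal.ofReal r ^ 2 ≤ 1) {c : ℤ → ℂ}
    (hc0 : c 0 = 0) (hc : hsq (fun n => ‖c n‖ₑ) ≤ ENNReal.ofReal r ^ 2) :
    4 * src κ β (quad (ker β b₁ b₂) c) ≤ diss κ β c := by
  have hκ := H.κ_pos; have hβ := H.β_nonneg; have hK := H.K_pos
  set p : ℤ → ℝ≥0∞ := fun n => ‖c n‖ₑ with hp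
  have hp0 : p 0 = 0 := by simp [hp, hc0]
  set P : ℤ → ℝ≥0∞ := fun n => ∑' m, ‖b₁ n m‖ₑ * (p m * p (n - m)) with hP
  set Q : ℤ → ℝ≥0∞ := fun n => ∑' m, ‖b₂ n m‖ₑ * (p m * p (n - m)) with hQ
  set T := ∑' n, absE n ^ 3 * p n ^ 2 with hT
  set R := ENNReal.ofReal r ^ 2 with hR
  have hPs : ∑' n, P n ^ 2 ≤ ENNReal.ofReal K ^ 2 * (4 * embC * (R * hsq p)) := by
    calc ∑' n, P n ^ 2 ≤ ∑' n, ENNReal.ofReal K ^ 2 * bil p p n ^ 2 := by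
          refine ENNReal.tsum_le_tsum fun n => ?_
          rw [← mul_pow]
          gcongr
          rw [hP, bil, ← ENNReal.tsum_mul_left]
          refine ENNReal.tsum_le_tsum fun m => ?_
          rw [← mul_assoc (ENNReal.ofReal _), ← ofReal_abs_add, ← ENNReal.ofReal_mul hK.le]
          gcongr
          rw [← ofReal_norm]
          exact ENNReal.ofReal_le_ofReal (H.b₁_le n m)
      _ = ENNReal.ofReal K ^ 2 * ∑' n, bil p p n ^ 2 := ENNReal.tsum_mul_left
      _ ≤ _ := by
          gcongr
          refine (tsum_bil_sq_le p p hp0 hp0).trans ?_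
          gcongr
  have hQs : ∑' n, absE n * Q n ^ 2 ≤ (embC * R) * (ENNReal.ofReal K ^ 2 * T) := by
    refine (young_kernel (fun n m => ‖b₂ n m‖ₑ) absE
      (fun m => ENNReal.ofReal K ^ 2 * absE m ^ 3) p p fun n m => ?_).trans ?_
    · rw [← ofReal_norm, absE_eq, absE_eq, ← ENNReal.ofReal_pow (norm_nonneg _),
        ← ENNReal.ofReal_pow (abs_nonneg _), ← ENNReal.ofReal_pow hK.le,
        ← ENNReal.ofReal_mul (abs_nonneg _), ← ENNReal.ofReal_mul (by positivity)]
      exact ENNReal.ofReal_le_ofReal (H.b₂_sq_le n m)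
    · gcongr
      · refine (tsum_sq_le_embC p hp0).trans ?_
        gcongr
        exact hc
      · rw [hT, ← ENNReal.tsum_mul_left]
        simp only [mul_assoc]
        exact le_rfl
  have hterm : ∀ n : ℤ, ENNReal.ofReal ((1 + (n : ℝ) ^ 2) / lam κ β n
        * ‖quad (ker β b₁ b₂) c n‖ ^ 2)
      ≤ 2 * ENNReal.ofReal (2 / κ) * (P n ^ 2 + ENNReal.ofReal β * (absE n * Q n ^ 2)) := by
    intro n
    have hq : ‖quad (ker β b₁ b₂) c n‖ₑ ≤ P n + ENNReal.ofReal β * Q n := by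
      rw [hP, hQ, ← ENNReal.tsum_mul_left, ← ENNReal.tsum_add]
      refine enorm_tsum_le_tsum_enorm.trans (ENNReal.tsum_le_tsum fun m => ?_)
      rw [enorm_mul, enorm_mul, ← mul_assoc (ENNReal.ofReal β), ← add_mul]
      gcongr
      rw [ker]
      refine (enorm_add_le _ _).trans ?_
      rw [enorm_mul, ← ofReal_norm (β : ℂ), Complex.norm_real, Real.norm_of_nonneg hβ]
    have hw := H.weight_nonneg n
    rw [ofReal_mul_norm_sq hw]
    calc _ ≤ ENNReal.ofReal ((1 + (n : ℝ) ^ 2) / lam κ β n)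
            * (2 * (P n ^ 2 + (ENNReal.ofReal β * Q n) ^ 2)) := by
          gcongr
          exact (pow_le_pow_left' hq 2).trans (add_sq_le _ _)
      _ = 2 * (ENNReal.ofReal ((1 + (n : ℝ) ^ 2) / lam κ β n) * P n ^ 2
            + ENNReal.ofReal ((1 + (n : ℝ) ^ 2) / lam κ β n * β ^ 2) * Q n ^ 2) := by
          rw [ENNReal.ofReal_mul hw, ENNReal.ofReal_pow hβ]; ring
      _ ≤ 2 * (ENNReal.ofReal (2 / κ) * P n ^ 2
            + ENNReal.ofReal (2 / κ * (β * |(n : ℝ)|)) * Q n ^ 2) := by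
          have h1 := ENNReal.ofReal_le_ofReal (H.weight_le n)
          have h2 := ENNReal.ofReal_le_ofReal (H.weight_mul_sq_le n)
          exact mul_le_mul' le_rfl (add_le_add (mul_le_mul' h1 le_rfl) (mul_le_mul' h2 le_rfl))
      _ = _ := by
          rw [ENNReal.ofReal_mul (by positivity), ENNReal.ofReal_mul hβ, absE_eq]; ring
  have hsum : src κ β (quad (ker β b₁ b₂) c) ≤ 2 * ENNReal.ofReal (2 / κ)
      * (ENNReal.ofReal K ^ 2 * (4 * embC * (R * hsq p))
        + ENNReal.ofReal β * ((embC * R) * (ENNReal.ofReal K ^ 2 * T))) := by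
    calc src κ β (quad (ker β b₁ b₂) c) ≤ _ := ENNReal.tsum_le_tsum hterm
      _ = 2 * ENNReal.ofReal (2 / κ)
          * (∑' n, P n ^ 2 + ENNReal.ofReal β * ∑' n, absE n * Q n ^ 2) := by
          rw [ENNReal.tsum_mul_left, ENNReal.tsum_add, ENNReal.tsum_mul_left]
      _ ≤ _ := by gcongr
  have e2 : ENNReal.ofReal (2 / κ) * ENNReal.ofReal K ^ 2
      = 2 * (ENNReal.ofReal (K / κ) ^ 2 * ENNReal.ofReal κ) := by
    rw [← ENNReal.ofReal_pow hK.le, ← ENNReal.ofReal_pow (by positivity),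
      ← ENNReal.ofReal_mul (by positivity), ← ENNReal.ofReal_mul (by positivity),
      show (2 : ℝ≥0∞) = ENNReal.ofReal 2 by simp, ← ENNReal.ofReal_mul (by positivity)]
    congr 1
    field_simp
  calc 4 * src κ β (quad (ker β b₁ b₂) c)
      ≤ 4 * (2 * ENNReal.ofReal (2 / κ)
        * (ENNReal.ofReal K ^ 2 * (4 * embC * (R * hsq p))
          + ENNReal.ofReal β * ((embC * R) * (ENNReal.ofReal K ^ 2 * T)))) := by gcongr
    _ = 8 * (ENNReal.ofReal (2 / κ) * ENNReal.ofReal K ^ 2) * (embC * R)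
          * (4 * hsq p + 1 * (ENNReal.ofReal β * T)) := by ring
    _ ≤ 8 * (ENNReal.ofReal (2 / κ) * ENNReal.ofReal K ^ 2) * (embC * R)
          * (4 * hsq p + 4 * (ENNReal.ofReal β * T)) := by
        gcongr
        norm_num
    _ = (64 * ENNReal.ofReal (K / κ) ^ 2 * embC * R)
          * (ENNReal.ofReal κ * (hsq p + ENNReal.ofReal β * T)) := by rw [e2]; ring
    _ ≤ 1 * diss κ β c := by gcongr; exact H.le_diss c
    _ = _ := one_mul _

lemma energy_le_hsq {c : ℤ → ℂ} (hc0 : c 0 = 0) : energy c ≤ 2 * hsq (fun n => ‖c n‖ₑ) := by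
  rw [energy, hsq, ← ENNReal.tsum_mul_left]
  refine ENNReal.tsum_le_tsum fun n => ?_
  by_cases hn : n = 0
  · simp [hn, hc0]
  · have h1 := one_le_intCast_sq hn
    rw [ofReal_mul_norm_sq (by positivity), absE_eq, ← ENNReal.ofReal_pow (abs_nonneg _), sq_abs,
      ← mul_assoc, show (2 : ℝ≥0∞) = ENNReal.ofReal 2 by simp,
      ← ENNReal.ofReal_mul (by positivity)]
    gcongr
    linarith

/-- The energy inequality. -/
lemma Admissible.energy_add_le (H : Admissible κ K β ℓ b₁ b₂) {r : ℝ}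
    (hr : 64 * ENNReal.ofReal (K / κ) ^ 2 * embC * ENNReal.ofReal r ^ 2 ≤ 1)
    {f g : ℝ → ℤ → ℂ} {A : ℤ → ℝ≥0∞} (hA0 : A 0 = 0) (hA : hsq A ≤ ENNReal.ofReal r ^ 2)
    (hg : ∀ n, Continuous fun t => g t n)
    (hf : ∀ n t, HasDerivAt (fun s => f s n) (ℓ n * f t n + g t n) t)
    (hf0 : ∀ t, 0 ≤ t → f t 0 = 0) (hfA : ∀ t, 0 ≤ t → ∀ n, ‖f t n‖ₑ ≤ A n)
    (hgq : ∀ t, 0 ≤ t → ∀ n, g t n = quad (ker β b₁ b₂) (f t) n)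
    {s t : ℝ} (hs : 0 ≤ s) (hst : s ≤ t) :
    2 * energy (f t) + ∫⁻ τ in Set.Ioc s t, diss κ β (f τ) ≤ 2 * energy (f s) := by
  have hgq' : ∀ t, 0 ≤ t → g t = quad (ker β b₁ b₂) (f t) := fun t ht => funext (hgq t ht)
  have hhsq : ∀ t, 0 ≤ t → hsq (fun n => ‖f t n‖ₑ) ≤ hsq A := fun t ht => by
    refine ENNReal.tsum_le_tsum fun n => ?_
    gcongr
    exact hfA t ht n
  have hstep := H.energy_step hg hf hf0 hs hst
  have hY1 : ∫⁻ τ in Set.Ioc s t, 4 * src κ β (g τ) ≤ ∫⁻ τ in Set.Ioc s t, diss κ β (f τ) := by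
    refine MeasureTheory.setLIntegral_mono' measurableSet_Ioc fun τ hτ => ?_
    have hτ0 : 0 ≤ τ := hs.trans hτ.1.le
    rw [hgq' τ hτ0]
    exact H.src_le_diss hr (hf0 τ hτ0) ((hhsq τ hτ0).trans hA)
  rw [MeasureTheory.lintegral_const_mul' _ _ (by norm_num)] at hY1
  have hAtop : hsq A < ∞ := lt_of_le_of_lt hA (by simp)
  have hY2 : ∫⁻ τ in Set.Ioc s t, src κ β (g τ) ≠ ∞ := by
    set B := ENNReal.ofReal (2 / κ) * (ENNReal.ofReal (K * (1 + β)) ^ 2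
        * (4 * embC * (hsq A * hsq A))) with hB
    have hBtop : B < ∞ := by
      have := embC_lt_top
      rw [hB]
      refine ENNReal.mul_lt_top ENNReal.ofReal_lt_top (ENNReal.mul_lt_top (by simp)
        (ENNReal.mul_lt_top (ENNReal.mul_lt_top (by norm_num) embC_lt_top)
          (ENNReal.mul_lt_top hAtop hAtop)))
    refine ne_top_of_le_ne_top (b := ∫⁻ _ in Set.Ioc s t, B) ?_
      (MeasureTheory.setLIntegral_mono' measurableSet_Ioc fun τ hτ => ?_)
    · rw [MeasureTheory.setLIntegral_const]
      exact (ENNReal.mul_lt_top hBtop (by simp)).ne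
    · have hτ0 : 0 ≤ τ := hs.trans hτ.1.le
      rw [hgq' τ hτ0]
      exact H.src_le_of_le hA0 (hfA τ hτ0)
  set D := ∫⁻ τ in Set.Ioc s t, diss κ β (f τ)
  set Y := ∫⁻ τ in Set.Ioc s t, src κ β (g τ)
  have hE : energy (f s) ≠ ∞ := by
    refine ne_top_of_le_ne_top ?_ ((energy_le_hsq (hf0 s hs)).trans
      (mul_le_mul_right (hhsq s hs) 2))
    exact (ENNReal.mul_lt_top (by norm_num) hAtop).ne
  have hD : D ≠ ∞ :=
    ne_top_of_le_ne_top (ENNReal.add_ne_top.2 ⟨hE, hY2⟩) (le_trans le_add_self hstep)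
  have h2Y : 2 * Y ≤ D := le_trans (by gcongr; norm_num) hY1
  refine (ENNReal.add_le_add_iff_right hD).1 ?_
  calc 2 * energy (f t) + D + D = 2 * (energy (f t) + D) := by ring
    _ ≤ 2 * (energy (f s) + Y) := by gcongr
    _ = 2 * energy (f s) + 2 * Y := by ring
    _ ≤ _ := by gcongr

lemma Admissible.energy_le_diss (H : Admissible κ K β ℓ b₁ b₂) {c : ℤ → ℂ} (hc0 : c 0 = 0) :
    ENNReal.ofReal κ * energy c ≤ diss κ β c := by
  have hκ := H.κ_pos
  rw [energy, diss, ← ENNReal.tsum_mul_left]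
  refine ENNReal.tsum_le_tsum fun n => ?_
  by_cases hn : n = 0
  · simp [hn, hc0]
  · rw [← ENNReal.ofReal_mul hκ.le]
    refine ENNReal.ofReal_le_ofReal ?_
    have h1 := one_le_intCast_sq hn
    have h2 : κ ≤ lam κ β n := le_trans (by nlinarith) (H.le_lam n)
    calc κ * ((1 + (n : ℝ) ^ 2) * ‖c n‖ ^ 2) = (1 + (n : ℝ) ^ 2) * κ * ‖c n‖ ^ 2 := by ring
      _ ≤ _ := by gcongr

lemma Admissible.H2_le_diss (H : Admissible κ K β ℓ b₁ b₂) {c : ℤ → ℂ} (hc0 : c 0 = 0) :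
    ∑' n : ℤ, ENNReal.ofReal ((1 + (n : ℝ) ^ 2) ^ 2 * ‖c n‖ ^ 2)
      ≤ ENNReal.ofReal (2 / κ) * diss κ β c := by
  have hκ := H.κ_pos
  rw [diss, ← ENNReal.tsum_mul_left]
  refine ENNReal.tsum_le_tsum fun n => ?_
  by_cases hn : n = 0
  · simp [hn, hc0]
  · rw [← ENNReal.ofReal_mul (by positivity)]
    refine ENNReal.ofReal_le_ofReal ?_
    have h1 := one_le_intCast_sq hn
    have h2 : 1 + (n : ℝ) ^ 2 ≤ 2 / κ * lam κ β n := by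
      have := H.le_lam n
      rw [div_mul_eq_mul_div, le_div_iff₀ hκ]
      nlinarith
    calc (1 + (n : ℝ) ^ 2) ^ 2 * ‖c n‖ ^ 2
        = (1 + (n : ℝ) ^ 2) * (1 + (n : ℝ) ^ 2) * ‖c n‖ ^ 2 := by ring
      _ ≤ (1 + (n : ℝ) ^ 2) * (2 / κ * lam κ β n) * ‖c n‖ ^ 2 := by gcongr
      _ = _ := by ring

lemma H1sq_eq (c : ℤ → ℂ) : H1sq c = (energy c).toReal := by
  rw [energy, ENNReal.tsum_toReal_eq (fun _ => ENNReal.ofReal_ne_top), H1sq]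
  exact tsum_congr fun n => (ENNReal.toReal_ofReal (by positivity)).symm

lemma H2sq_eq (c : ℤ → ℂ) :
    H2sq c = (∑' n : ℤ, ENNReal.ofReal ((1 + (n : ℝ) ^ 2) ^ 2 * ‖c n‖ ^ 2)).toReal := by
  rw [ENNReal.tsum_toReal_eq (fun _ => ENNReal.ofReal_ne_top), H2sq]
  exact tsum_congr fun n => (ENNReal.toReal_ofReal (by positivity)).symm

lemma summable_of_energy {c : ℤ → ℂ} (h : energy c ≠ ∞) :
    Summable fun n : ℤ => (1 + (n : ℝ) ^ 2) * ‖c n‖ ^ 2 := by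
  have := ENNReal.summable_toReal h
  refine this.congr fun n => ?_
  rw [ENNReal.toReal_ofReal (by positivity)]

/-- Small data generate a global solution of the abstract system whose `H¹` norm decreases to zero
and whose squared `H²` norm is integrable in time. -/
theorem Admissible.exists_decaying_solution (H : Admissible κ K β ℓ b₁ b₂) {r : ℝ}
    (hr : 64 * ENNReal.ofReal (K / κ) ^ 2 * embC * ENNReal.ofReal r ^ 2 ≤ 1) {f₀ : ℤ → ℂ}
    (hf₀ : RealZeroMean f₀)
    (hsmall : 4 * hsq (fun n => ‖f₀ n‖ₑ) ≤ ENNReal.ofReal r ^ 2) :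
    ∃ f : ℝ → ℤ → ℂ, f 0 = f₀ ∧
      (∀ t, 0 ≤ t → RealZeroMean (f t)
        ∧ Summable (fun n : ℤ => (1 + (n : ℝ) ^ 2) * ‖f t n‖ ^ 2)
        ∧ hsq (fun n => ‖f t n‖ₑ) ≠ ∞
        ∧ ∀ n, deriv (fun s => f s n) t = ℓ n * f t n + quad (ker β b₁ b₂) (f t) n)
      ∧ (∀ s t : ℝ, 0 ≤ s → s ≤ t → Real.sqrt (H1sq (f t)) ≤ Real.sqrt (H1sq (f s)))
      ∧ MeasureTheory.IntegrableOn (fun t : ℝ => H2sq (f t)) (Set.Ici 0)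
      ∧ Tendsto (fun t : ℝ => Real.sqrt (H1sq (f t))) atTop (nhds 0) := by
  obtain ⟨f, g, A, hf_init, hA0, hA, hg, hf, hprop⟩ := H.exists_solution hr hf₀ hsmall
  have hκ := H.κ_pos
  have hf0 : ∀ t, 0 ≤ t → f t 0 = 0 := fun t ht => (hprop t ht).1.1
  have hfA : ∀ t, 0 ≤ t → ∀ n, ‖f t n‖ₑ ≤ A n := fun t ht => (hprop t ht).2.1
  have hEn : ∀ s t : ℝ, 0 ≤ s → s ≤ t →
      2 * energy (f t) + ∫⁻ τ in Set.Ioc s t, diss κ β (f τ) ≤ 2 * energy (f s) :=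
    fun s t hs hst => H.energy_add_le hr hA0 hA hg hf hf0 hfA (fun t ht => (hprop t ht).2.2) hs hst
  have hfc : ∀ n, Continuous fun t => f t n := fun n =>
    continuous_iff_continuousAt.2 fun t => (hf n t).continuousAt
  have hAtop : hsq A < ∞ := lt_of_le_of_lt hA (by simp)
  have hhsq : ∀ t, 0 ≤ t → hsq (fun n => ‖f t n‖ₑ) ≠ ∞ := fun t ht => by
    refine ne_top_of_le_ne_top hAtop.ne (ENNReal.tsum_le_tsum fun n => ?_)
    gcongr
    exact hfA t ht n
  have hEtop : ∀ t, 0 ≤ t → energy (f t) ≠ ∞ := fun t ht =>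
    ne_top_of_le_ne_top (ENNReal.mul_ne_top (by norm_num) (hhsq t ht)) (energy_le_hsq (hf0 t ht))
  have hanti : ∀ s t : ℝ, 0 ≤ s → s ≤ t → energy (f t) ≤ energy (f s) := fun s t hs hst =>
    (ENNReal.mul_le_mul_iff_right (by norm_num) (by norm_num)).1
      (le_trans le_self_add (hEn s t hs hst))
  refine ⟨f, hf_init, fun t ht => ⟨(hprop t ht).1, summable_of_energy (hEtop t ht), hhsq t ht,
    fun n => ?_⟩, fun s t hs hst => ?_, ?_, ?_⟩
  · rw [(hf n t).deriv, (hprop t ht).2.2 n]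
  · rw [H1sq_eq, H1sq_eq]
    exact Real.sqrt_le_sqrt (ENNReal.toReal_mono (hEtop s hs) (hanti s t hs hst))
  · have hmeas : Measurable fun t : ℝ =>
        ∑' n : ℤ, ENNReal.ofReal ((1 + (n : ℝ) ^ 2) ^ 2 * ‖f t n‖ ^ 2) := by
      refine Measurable.tsum fun n => ?_
      have := hfc n
      exact (ENNReal.continuous_ofReal.comp (by fun_prop)).measurable
    have hD : ∫⁻ τ in Set.Ioi (0 : ℝ), diss κ β (f τ) ≤ 2 * energy (f 0) := by
      have hU : Set.Ioi (0 : ℝ) = ⋃ k : ℕ, Set.Ioc 0 (k : ℝ) := by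
        ext x
        simp only [Set.mem_Ioi, Set.mem_iUnion, Set.mem_Ioc]
        exact ⟨fun hx => (exists_nat_ge x).imp fun k hk => ⟨hx, hk⟩, fun ⟨_, hx, _⟩ => hx⟩
      have hmono : Monotone fun k : ℕ => Set.Ioc (0 : ℝ) (k : ℝ) := fun i j hij =>
        Set.Ioc_subset_Ioc_right (by exact_mod_cast hij)
      rw [hU, MeasureTheory.setLIntegral_iUnion_of_directed _ (hmono.directed_le)]
      exact iSup_le fun k => le_trans le_add_self (hEn 0 k le_rfl (by positivity))
    have hfin : ∫⁻ t in Set.Ioi (0 : ℝ),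
        ∑' n : ℤ, ENNReal.ofReal ((1 + (n : ℝ) ^ 2) ^ 2 * ‖f t n‖ ^ 2) ≠ ∞ := by
      refine ne_top_of_le_ne_top ?_ (MeasureTheory.setLIntegral_mono' measurableSet_Ioi
        fun t ht => H.H2_le_diss (hf0 t (le_of_lt ht)))
      rw [MeasureTheory.lintegral_const_mul' _ _ ENNReal.ofReal_ne_top]
      exact ENNReal.mul_ne_top ENNReal.ofReal_ne_top
        (ne_top_of_le_ne_top (ENNReal.mul_ne_top (by norm_num) (hEtop 0 le_rfl)) hD)
    rw [integrableOn_Ici_iff_integrableOn_Ioi]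
    simp only [H2sq_eq]
    exact MeasureTheory.integrable_toReal_of_lintegral_ne_top hmeas.aemeasurable hfin
  · have hdecay : ∀ t : ℝ, 0 < t → H1sq (f t) ≤ 2 * H1sq (f 0) / κ * t⁻¹ := by
      intro t ht
      have h1 : ENNReal.ofReal t * (ENNReal.ofReal κ * energy (f t)) ≤ 2 * energy (f 0) := by
        refine le_trans ?_ (le_trans le_add_self (hEn 0 t le_rfl ht.le))
        calc ENNReal.ofReal t * (ENNReal.ofReal κ * energy (f t))
            = ∫⁻ _ in Set.Ioc 0 t, ENNReal.ofReal κ * energy (f t) := by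
              rw [MeasureTheory.setLIntegral_const, Real.volume_Ioc, sub_zero, mul_comm]
          _ ≤ _ := by
              refine MeasureTheory.setLIntegral_mono' measurableSet_Ioc fun τ hτ => ?_
              refine le_trans ?_ (H.energy_le_diss (hf0 τ hτ.1.le))
              gcongr
              exact hanti τ t hτ.1.le hτ.2
      have h2 := ENNReal.toReal_mono (ENNReal.mul_ne_top (by norm_num) (hEtop 0 le_rfl)) h1
      rw [ENNReal.toReal_mul, ENNReal.toReal_mul, ENNReal.toReal_mul, ENNReal.toReal_ofReal ht.le,
        ENNReal.toReal_ofReal hκ.le, ← H1sq_eq, ← H1sq_eq] at h2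
      rw [← div_eq_mul_inv, div_div, le_div_iff₀ (by positivity)]
      calc H1sq (f t) * (κ * t) = t * (κ * H1sq (f t)) := by ring
        _ ≤ _ := h2
    have h0 : Tendsto (fun t : ℝ => H1sq (f t)) atTop (nhds 0) := by
      have hlim : Tendsto (fun t : ℝ => 2 * H1sq (f 0) / κ * t⁻¹) atTop (nhds 0) := by
        simpa using tendsto_inv_atTop_zero.const_mul (2 * H1sq (f 0) / κ)
      refine tendsto_of_tendsto_of_tendsto_of_le_of_le' tendsto_const_nhds hlim
        (Eventually.of_forall fun t => ?_) ?_
      · rw [H1sq_eq]; exact ENNReal.toReal_nonneg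
      · filter_upwards [eventually_gt_atTop (0 : ℝ)] with t ht using hdecay t ht
    simpa using h0.sqrt

end

/-! ### The symbols of equation (U) -/

lemma Dsym_neg (n : ℤ) : Dsym (-n) = starRingEnd ℂ (Dsym n) := by
  simp [Dsym]

lemma Hsym_neg (n : ℤ) : Hsym (-n) = starRingEnd ℂ (Hsym n) := by
  simp [Hsym]

lemma Lsym_neg (n : ℤ) : Lsym (-n) = starRingEnd ℂ (Lsym n) := by
  simp [Lsym]

lemma invLsym_neg (n : ℤ) : invLsym (-n) = starRingEnd ℂ (invLsym n) := by
  by_cases hn : n = 0 <;> simp [invLsym, hn]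

lemma Nsym_neg (a : ℝ) (n : ℤ) : Nsym a (-n) = starRingEnd ℂ (Nsym a n) := by
  simp [Nsym]

lemma norm_Dsym (n : ℤ) : ‖Dsym n‖ = |(n : ℝ)| := by
  simp [Dsym]

lemma norm_Lsym (n : ℤ) : ‖Lsym n‖ = |(n : ℝ)| := by
  simp [Lsym]

lemma norm_Hsym_sub_le (n k : ℤ) : ‖Hsym n - Hsym k‖ ≤ 2 := by
  have h : ∀ j : ℤ, ‖Hsym j‖ ≤ 1 := by
    intro j
    rw [Hsym, norm_mul, norm_neg, Complex.norm_I, one_mul, Complex.norm_intCast]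
    rcases lt_trichotomy j 0 with hj | hj | hj
    · simp [Int.sign_eq_neg_one_of_neg hj]
    · simp [hj]
    · simp [Int.sign_eq_one_of_pos hj]
  linarith [norm_sub_le (Hsym n) (Hsym k), h n, h k]

lemma norm_invLsym_mul_le (m : ℤ) : ‖invLsym m‖ * |(m : ℝ)| ≤ 1 := by
  by_cases hm : m = 0
  · simp [hm]
  · have : |(m : ℝ)| ≠ 0 := by simpa using hm
    simp [invLsym, hm]

lemma norm_invLsym_le (m : ℤ) : ‖invLsym m‖ ≤ |(m : ℝ)| := by
  by_cases hm : m = 0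
  · simp [hm, invLsym]
  · have h1 := one_le_abs_intCast hm
    have h2 := norm_invLsym_mul_le m
    nlinarith [norm_nonneg (invLsym m)]

/-- The commutator with the Hilbert transform only sees pairs of frequencies of different signs, for
which no cancellation takes place in `m = n - k`. -/
lemma Hsym_sub_cases (n m : ℤ) : Hsym n - Hsym (n - m) = 0 ∨
    (|((n - m : ℤ) : ℝ)| ≤ |(m : ℝ)| ∧ |(n : ℝ)| ≤ |(m : ℝ)|) := by
  by_cases h : n.sign = (n - m).sign
  · left; simp [Hsym, h]
  · right
    have key : |n - m| ≤ |m| ∧ |n| ≤ |m| := by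
      rcases lt_trichotomy n 0 with hn | hn | hn <;>
      rcases lt_trichotomy (n - m) 0 with hk | hk | hk
      · rw [Int.sign_eq_neg_one_of_neg hn, Int.sign_eq_neg_one_of_neg hk] at h
        exact absurd rfl h
      · constructor <;> grind
      · constructor <;> grind
      · constructor <;> grind
      · constructor <;> grind
      · constructor <;> grind
      · constructor <;> grind
      · constructor <;> grind
      · rw [Int.sign_eq_one_of_pos hn, Int.sign_eq_one_of_pos hk] at h
        exact absurd rfl h
    exact ⟨by exact_mod_cast key.1, by exact_mod_cast key.2⟩

lemma norm_H_invL_sq_le (n m : ℤ) :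
    ‖Hsym n - Hsym (n - m)‖ * ‖invLsym m‖ * |((n - m : ℤ) : ℝ)| ^ 2
      ≤ 2 * |((n - m : ℤ) : ℝ)| := by
  rcases Hsym_sub_cases n m with h | ⟨h, -⟩
  · rw [h]; simp
  · have h1 := norm_Hsym_sub_le n (n - m)
    have h2 := norm_invLsym_mul_le m
    calc ‖Hsym n - Hsym (n - m)‖ * ‖invLsym m‖ * |((n - m : ℤ) : ℝ)| ^ 2
        = ‖Hsym n - Hsym (n - m)‖ * (‖invLsym m‖ * |((n - m : ℤ) : ℝ)|) * |((n - m : ℤ) : ℝ)| := by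
          ring
      _ ≤ 2 * (‖invLsym m‖ * |(m : ℝ)|) * |((n - m : ℤ) : ℝ)| := by gcongr
      _ ≤ 2 * 1 * |((n - m : ℤ) : ℝ)| := by gcongr
      _ = _ := by ring

lemma norm_H_invL_le (n m : ℤ) :
    ‖Hsym n - Hsym (n - m)‖ * ‖invLsym m‖ ≤ 2 * |(m : ℝ)| := by
  have h1 := norm_Hsym_sub_le n (n - m)
  have h2 := norm_invLsym_le m
  gcongr

lemma norm_D_sq_invL_le (n m : ℤ) :
    ‖Dsym n ^ 2 - Dsym (n - m) ^ 2‖ * ‖invLsym m‖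
      ≤ 2 * (|(m : ℝ)| + |((n - m : ℤ) : ℝ)|) := by
  have e : Dsym n ^ 2 - Dsym (n - m) ^ 2 = Dsym m * (Dsym m + 2 * Dsym (n - m)) := by
    simp only [Dsym]; push_cast; ring
  have h1 : ‖Dsym m + 2 * Dsym (n - m)‖ ≤ |(m : ℝ)| + 2 * |((n - m : ℤ) : ℝ)| := by
    refine (norm_add_le _ _).trans ?_
    rw [norm_mul, norm_Dsym, norm_Dsym]
    simp
  have h2 := norm_invLsym_mul_le m
  rw [e, norm_mul, norm_Dsym]
  calc |(m : ℝ)| * ‖Dsym m + 2 * Dsym (n - m)‖ * ‖invLsym m‖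
      = (‖invLsym m‖ * |(m : ℝ)|) * ‖Dsym m + 2 * Dsym (n - m)‖ := by ring
    _ ≤ 1 * (|(m : ℝ)| + 2 * |((n - m : ℤ) : ℝ)|) := by gcongr
    _ ≤ _ := by linarith [abs_nonneg (m : ℝ)]

lemma Nsym_eq (a : ℝ) (n : ℤ) :
    Nsym a n = (((1 + a ^ 2 * (n : ℝ) ^ 2)⁻¹ : ℝ) : ℂ) * (1 - Complex.I * a * n) := by
  rw [Nsym, div_eq_inv_mul]; push_cast; rfl

lemma norm_Nsym_sq (a : ℝ) (n : ℤ) : ‖Nsym a n‖ ^ 2 * (1 + a ^ 2 * (n : ℝ) ^ 2) = 1 := by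
  have h : 0 < 1 + a ^ 2 * (n : ℝ) ^ 2 := by positivity
  rw [Nsym_eq, norm_mul, mul_pow, Complex.norm_real, Real.norm_of_nonneg (by positivity),
    Complex.sq_norm, Complex.normSq_apply]
  simp
  field_simp

lemma norm_Nsym_le_one (a : ℝ) (n : ℤ) : ‖Nsym a n‖ ≤ 1 := by
  have h := norm_Nsym_sq a n
  have h1 : 0 ≤ ‖Nsym a n‖ ^ 2 * (a ^ 2 * (n : ℝ) ^ 2) := by positivity
  rw [← sq_le_one_iff₀ (norm_nonneg _)]
  nlinarith

lemma norm_Nsym_mul_le {a : ℝ} (ha : 0 < a) (n : ℤ) : ‖Nsym a n‖ * |(n : ℝ)| ≤ 1 / a := by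
  have h := norm_Nsym_sq a n
  rw [le_div_iff₀ ha, ← sq_le_one_iff₀ (by positivity), mul_pow, mul_pow, sq_abs]
  nlinarith [sq_nonneg ‖Nsym a n‖]

/-- The symbol of the linear part of (U). -/
def symℓ (α₁ α₂ β : ℝ) (n : ℤ) : ℂ :=
  1 / 2 * (Nsym ((α₁ + α₂) / 2) n *
    (Dsym n + ((α₁ : ℂ) + (α₂ : ℂ)) * Dsym n ^ 2 + Hsym n
        - (β : ℂ) * Hsym n * Dsym n ^ 2 + (α₁ : ℂ) * (α₂ : ℂ) * Dsym n ^ 3))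

/-- The kernel of the part of the nonlinearity of (U) that does not involve `β`. -/
def symb₁ (α₁ α₂ : ℝ) (n m : ℤ) : ℂ :=
  -(1 / 2) * (Nsym ((α₁ + α₂) / 2) n *
    (2 * Dsym (n - m)
      + Lsym n * ((Hsym n - Hsym (n - m)) * invLsym m)
      - (α₂ : ℂ) * (Lsym n * ((Hsym n - Hsym (n - m)) * Dsym (n - m)))
      + (α₂ : ℂ) * (Dsym n * Dsym (n - m))
      + (α₁ : ℂ) * (Lsym n * ((Dsym n ^ 2 - Dsym (n - m) ^ 2) * invLsym m))))

/-- The kernel of the part of the nonlinearity of (U) carrying the factor `β`. -/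
def symb₂ (α₁ α₂ : ℝ) (n m : ℤ) : ℂ :=
  -(1 / 2) * (Nsym ((α₁ + α₂) / 2) n *
    (Lsym n * ((Hsym n - Hsym (n - m)) * invLsym m * ((n - m : ℤ) : ℂ) ^ 2)))

/-- The damping constant. -/
def symκ (α₁ α₂ : ℝ) : ℝ :=
  min (α₁ * α₂ / (2 * ((α₁ + α₂) / 2)))
    (((α₁ + α₂) / 2) / (2 * (1 + ((α₁ + α₂) / 2) ^ 2)))

/-- The kernel constant. -/
def symK (α₁ α₂ : ℝ) : ℝ := 1 + (1 + 2 * α₁ + 2 * α₂) / ((α₁ + α₂) / 2)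

lemma re_symℓ (α₁ α₂ β : ℝ) (n : ℤ) :
    (symℓ α₁ α₂ β n).re = -(((α₁ + α₂) / 2) / 2
      * ((n : ℝ) ^ 2 + |(n : ℝ)| + β * |(n : ℝ)| ^ 3 + α₁ * α₂ * (n : ℝ) ^ 4)
      / (1 + ((α₁ + α₂) / 2) ^ 2 * (n : ℝ) ^ 2)) := by
  set a := (α₁ + α₂) / 2 with ha
  have h : 0 < 1 + a ^ 2 * (n : ℝ) ^ 2 := by positivity
  have hsgn : (n : ℝ) * (n.sign : ℝ) = |(n : ℝ)| := by
    have : n * n.sign = |n| := by rw [Int.mul_sign_self, Int.natCast_natAbs]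
    exact_mod_cast this
  have hs3 : |(n : ℝ)| ^ 3 = (n : ℝ) ^ 2 * ((n : ℝ) * (n.sign : ℝ)) := by
    rw [hsgn, ← sq_abs]; ring
  have e : symℓ α₁ α₂ β n = (((1 + a ^ 2 * (n : ℝ) ^ 2)⁻¹ / 2 : ℝ) : ℂ)
      * (((-(2 * a * (n : ℝ) ^ 2) + a * n * (n - n.sign - β * n.sign * (n : ℝ) ^ 2
          - α₁ * α₂ * (n : ℝ) ^ 3) : ℝ) : ℂ)
        + (((n - n.sign - β * n.sign * (n : ℝ) ^ 2 - α₁ * α₂ * (n : ℝ) ^ 3)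
            + 2 * a ^ 2 * (n : ℝ) ^ 3 : ℝ) : ℂ) * Complex.I) := by
    have h2a : (α₁ : ℂ) + α₂ = 2 * a := by
      rw [ha]; push_cast; ring
    have I3 : Complex.I ^ 3 = -Complex.I := by
      rw [pow_succ, Complex.I_sq]; ring
    have I4 : Complex.I ^ 4 = 1 := Complex.I_pow_four
    rw [symℓ, ← ha, Nsym_eq, h2a, Dsym, Hsym]
    push_cast
    ring_nf
    simp only [Complex.I_sq, I3, I4]
    ring
  rw [e, Complex.re_ofReal_mul, Complex.add_re, Complex.ofReal_re, Complex.re_ofReal_mul,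
    Complex.I_re, hs3, ← hsgn]
  field_simp
  ring

lemma symκ_pos {α₁ α₂ : ℝ} (h₁ : 0 < α₁) (h₂ : 0 < α₂) : 0 < symκ α₁ α₂ := by
  rw [symκ]
  exact lt_min (by positivity) (by positivity)

lemma symK_pos {α₁ α₂ : ℝ} (h₁ : 0 < α₁) (h₂ : 0 < α₂) : 0 < symK α₁ α₂ := by
  rw [symK]; positivity

lemma re_symℓ_le {α₁ α₂ β : ℝ} (h₁ : 0 < α₁) (h₂ : 0 < α₂) (hβ : 0 ≤ β) (n : ℤ) :
    (symℓ α₁ α₂ β n).re ≤ -(symκ α₁ α₂ * ((n : ℝ) ^ 2 + β * |(n : ℝ)|)) := by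
  rw [re_symℓ, neg_le_neg_iff]
  have hκ := symκ_pos h₁ h₂
  have hκ1 : symκ α₁ α₂ ≤ α₁ * α₂ / (2 * ((α₁ + α₂) / 2)) := min_le_left _ _
  have hκ2 : symκ α₁ α₂ ≤ ((α₁ + α₂) / 2) / (2 * (1 + ((α₁ + α₂) / 2) ^ 2)) := min_le_right _ _
  set κ := symκ α₁ α₂
  set a := (α₁ + α₂) / 2 with ha
  have ha0 : 0 < a := by positivity
  rw [le_div_iff₀ (by positivity)] at hκ1 hκ2
  rw [le_div_iff₀ (by positivity)]
  by_cases hn : n = 0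
  · simp [hn]
  have hn2 := one_le_intCast_sq hn
  set x := |(n : ℝ)| with hx
  have hx2 : (n : ℝ) ^ 2 = x ^ 2 := (sq_abs _).symm
  have hx4 : (n : ℝ) ^ 4 = x ^ 4 := by
    rw [show (4 : ℕ) = 2 * 2 by norm_num, pow_mul, pow_mul, hx2]
  rw [hx2] at hn2
  rw [hx2, hx4]
  have hx0 : 0 ≤ x := abs_nonneg _
  have i1 : κ * x ^ 2 * (1 + a ^ 2 * x ^ 2) ≤ a / 2 * (x ^ 2 + α₁ * α₂ * x ^ 4) := by
    have j1 : κ ≤ a / 2 := by nlinarith [sq_nonneg a]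
    have j2 : κ * a ^ 2 ≤ a / 2 * (α₁ * α₂) := by nlinarith
    nlinarith [mul_le_mul_of_nonneg_right j1 (sq_nonneg x),
      mul_le_mul_of_nonneg_right j2 (by positivity : 0 ≤ x ^ 4)]
  have i2 : κ * (1 + a ^ 2 * x ^ 2) ≤ a / 2 * x ^ 2 := by
    have : κ * (1 + a ^ 2 * x ^ 2) ≤ κ * (1 + a ^ 2) * x ^ 2 := by nlinarith
    nlinarith
  have i3 := mul_le_mul_of_nonneg_left i2 (by positivity : 0 ≤ β * x)
  have i4 : 0 ≤ a / 2 * x := by positivity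
  nlinarith

/-- The coefficients of equation (U) satisfy the structural conditions, with constants that do not
depend on `β`. -/
theorem admissible_symbols {α₁ α₂ β : ℝ} (h₁ : 0 < α₁) (h₂ : 0 < α₂) (hβ : 0 ≤ β) :
    Admissible (symκ α₁ α₂) (symK α₁ α₂) β (symℓ α₁ α₂ β) (symb₁ α₁ α₂) (symb₂ α₁ α₂) := by
  have ha : 0 < (α₁ + α₂) / 2 := by positivity
  have hK := symK_pos h₁ h₂
  have hKdef : symK α₁ α₂ = 1 + (1 + 2 * α₁ + 2 * α₂) * (1 / ((α₁ + α₂) / 2)) := by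
    rw [symK]; ring
  -- a factor `Nsym * Lsym` costs only the constant `1 / a`
  have hNL : ∀ n : ℤ, ‖Nsym ((α₁ + α₂) / 2) n‖ * |(n : ℝ)| ≤ 1 / ((α₁ + α₂) / 2) :=
    norm_Nsym_mul_le ha
  have hN1 : ∀ n : ℤ, ‖Nsym ((α₁ + α₂) / 2) n‖ ≤ 1 := norm_Nsym_le_one _
  have hsub : ∀ n m : ℤ, -n - -m = -(n - m) := fun n m => by ring
  have hb₂ : ∀ n m : ℤ, ‖symb₂ α₁ α₂ n m‖ ≤ symK α₁ α₂ * |((n - m : ℤ) : ℝ)| := by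
    intro n m
    rw [symb₂]
    simp only [norm_mul, norm_neg, norm_pow, norm_Lsym, Complex.norm_intCast]
    have h3 := norm_H_invL_sq_le n m
    have h4 := mul_le_mul (hNL n) h3 (by positivity) (by positivity)
    have h5 : 1 / ((α₁ + α₂) / 2) ≤ symK α₁ α₂ := by
      rw [hKdef]
      have : 0 < 1 / ((α₁ + α₂) / 2) := by positivity
      nlinarith [mul_pos h₁ this, mul_pos h₂ this]
    have h6 := mul_le_mul_of_nonneg_right h5 (abs_nonneg ((n - m : ℤ) : ℝ))
    norm_num at h4 h6 ⊢
    nlinarith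
  have hb₂0 : ∀ n m : ℤ, Hsym n - Hsym (n - m) = 0 → symb₂ α₁ α₂ n m = 0 := by
    intro n m h
    rw [symb₂, h]; ring
  refine ⟨symκ_pos h₁ h₂, hK, hβ, re_symℓ_le h₁ h₂ hβ, ?_, hb₂, ?_, ?_, ?_, ?_, ?_, ?_⟩
  · intro n m
    set N := ‖Nsym ((α₁ + α₂) / 2) n‖
    set A := 1 / ((α₁ + α₂) / 2) with hA
    have hA0 : 0 < A := by positivity
    set x := |(m : ℝ)|
    set y := |((n - m : ℤ) : ℝ)| with hy
    have hx0 : 0 ≤ x := abs_nonneg _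
    have hy0 : 0 ≤ y := abs_nonneg _
    have hN := hN1 n
    have hL := hNL n
    have t1 : N * ‖2 * Dsym (n - m)‖ ≤ 2 * y := by
      rw [norm_mul, norm_Dsym]
      norm_num
      push_cast at hy
      rw [← hy]
      nlinarith
    have t2 : N * ‖Lsym n * ((Hsym n - Hsym (n - m)) * invLsym m)‖ ≤ A * (2 * x) := by
      rw [norm_mul, norm_mul, norm_Lsym, ← mul_assoc]
      exact mul_le_mul hL (norm_H_invL_le n m) (by positivity) hA0.le
    have t3 : N * ‖(α₂ : ℂ) * (Lsym n * ((Hsym n - Hsym (n - m)) * Dsym (n - m)))‖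
        ≤ α₂ * (A * (2 * y)) := by
      rw [norm_mul, norm_mul, norm_mul, norm_Lsym, norm_Dsym, Complex.norm_real,
        Real.norm_of_nonneg h₂.le, mul_left_comm, ← mul_assoc N]
      gcongr
      exact norm_Hsym_sub_le n (n - m)
    have t4 : N * ‖(α₂ : ℂ) * (Dsym n * Dsym (n - m))‖ ≤ α₂ * (A * y) := by
      rw [norm_mul, norm_mul, norm_Dsym, norm_Dsym, Complex.norm_real,
        Real.norm_of_nonneg h₂.le, mul_left_comm, ← mul_assoc N]
      gcongr
    have t5 : N * ‖(α₁ : ℂ) * (Lsym n * ((Dsym n ^ 2 - Dsym (n - m) ^ 2) * invLsym m))‖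
        ≤ α₁ * (A * (2 * (x + y))) := by
      rw [norm_mul, norm_mul, norm_mul, norm_Lsym, Complex.norm_real,
        Real.norm_of_nonneg h₁.le, mul_left_comm, ← mul_assoc N]
      exact mul_le_mul_of_nonneg_left
        (mul_le_mul hL (norm_D_sq_invL_le n m) (by positivity) hA0.le) h₁.le
    rw [symb₁, norm_mul, norm_mul, norm_neg, show ‖(1 / 2 : ℂ)‖ = 1 / 2 by norm_num]
    have tri : ‖2 * Dsym (n - m)
        + Lsym n * ((Hsym n - Hsym (n - m)) * invLsym m)
        - (α₂ : ℂ) * (Lsym n * ((Hsym n - Hsym (n - m)) * Dsym (n - m)))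
        + (α₂ : ℂ) * (Dsym n * Dsym (n - m))
        + (α₁ : ℂ) * (Lsym n * ((Dsym n ^ 2 - Dsym (n - m) ^ 2) * invLsym m))‖
        ≤ ‖2 * Dsym (n - m)‖
        + ‖Lsym n * ((Hsym n - Hsym (n - m)) * invLsym m)‖
        + ‖(α₂ : ℂ) * (Lsym n * ((Hsym n - Hsym (n - m)) * Dsym (n - m)))‖
        + ‖(α₂ : ℂ) * (Dsym n * Dsym (n - m))‖
        + ‖(α₁ : ℂ) * (Lsym n * ((Dsym n ^ 2 - Dsym (n - m) ^ 2) * invLsym m))‖ :=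
      (norm_add_le _ _).trans (add_le_add ((norm_add_le _ _).trans (add_le_add
        ((norm_sub_le _ _).trans (add_le_add (norm_add_le _ _) le_rfl)) le_rfl)) le_rfl)
    have tri' := mul_le_mul_of_nonneg_left tri (norm_nonneg (Nsym ((α₁ + α₂) / 2) n))
    have hfin : 2 * y + A * (2 * x) + α₂ * (A * (2 * y)) + α₂ * (A * y)
        + α₁ * (A * (2 * (x + y))) ≤ 2 * (symK α₁ α₂ * (x + y)) := by
      rw [hKdef]
      have p1 : 0 ≤ A * y := by positivity
      have p2 : 0 ≤ α₂ * (A * x) := by positivity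
      have p3 : 0 ≤ α₂ * (A * y) := by positivity
      have p4 : 0 ≤ α₁ * (A * x) := by positivity
      have p5 : 0 ≤ α₁ * (A * y) := by positivity
      nlinarith
    rw [mul_add, mul_add, mul_add, mul_add] at tri'
    linarith
  · intro n m
    rcases Hsym_sub_cases n m with h | ⟨h3, h4⟩
    · rw [hb₂0 n m h]
      simp only [norm_zero, ne_eq, OfNat.ofNat_ne_zero, not_false_eq_true, zero_pow, mul_zero]
      positivity
    · calc |(n : ℝ)| * ‖symb₂ α₁ α₂ n m‖ ^ 2
          ≤ |(m : ℝ)| * (symK α₁ α₂ * |(m : ℝ)|) ^ 2 := by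
            gcongr
            exact (hb₂ n m).trans (by gcongr)
        _ = _ := by ring
  · intro n
    simp only [symℓ, Dsym_neg, Hsym_neg, Nsym_neg, map_mul, map_add, map_sub, map_pow,
      Complex.conj_ofReal, map_div₀, map_one, Complex.conj_ofNat]
  · intro n m
    simp only [symb₁, hsub, Dsym_neg, Hsym_neg, Lsym_neg, invLsym_neg, Nsym_neg, map_mul, map_add,
      map_sub, map_pow, map_neg, Complex.conj_ofReal, map_div₀, map_one, Complex.conj_ofNat]
  · intro n m
    simp only [symb₂, hsub, Hsym_neg, Lsym_neg, invLsym_neg, Nsym_neg, map_mul,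
      map_sub, map_pow, map_neg, map_div₀, map_one, Complex.conj_ofNat, map_intCast, Int.cast_neg,
      even_two.neg_pow]
  · intro m
    have hL0 : Lsym 0 = 0 := by simp [Lsym]
    have hD0 : Dsym 0 = 0 := by simp [Dsym]
    have hDm : Dsym (0 - -m) = -Dsym (0 - m) := by simp [Dsym]
    simp only [symb₁, hL0, hD0, hDm]
    ring
  · intro m
    have hL0 : Lsym 0 = 0 := by simp [Lsym]
    simp only [symb₂, hL0]
    ring

/-! ### Identification of the abstract system with equation (U) -/

lemma summable_model {c : ℤ → ℂ} (hc0 : c 0 = 0) (hc : hsq (fun n => ‖c n‖ₑ) ≠ ∞) (n : ℤ) :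
    Summable fun m : ℤ => (|(m : ℝ)| + |((n - m : ℤ) : ℝ)|) * (‖c m‖ * ‖c (n - m)‖) := by
  have h := ENNReal.summable_toReal
    (bil_ne_top (fun n => ‖c n‖ₑ) (fun n => ‖c n‖ₑ) (by simp [hc0]) (by simp [hc0]) hc hc n)
  refine h.congr fun m => ?_
  rw [← ofReal_abs_add, ENNReal.toReal_mul, ENNReal.toReal_mul,
    ENNReal.toReal_ofReal (by positivity), toReal_enorm, toReal_enorm]

lemma absConvU {c : ℤ → ℂ} (hc0 : c 0 = 0) (hc : hsq (fun n => ‖c n‖ₑ) ≠ ∞) (n : ℤ) :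
    AbsConvU c n := by
  have hs := (summable_model hc0 hc n).mul_left 2
  have key : ∀ (F : ℤ → ℂ) (b : ℤ → ℝ),
      (∀ m, ‖F m‖ = b m * (‖c m‖ * ‖c (n - m)‖)) →
      (∀ m, b m ≤ 2 * (|(m : ℝ)| + |((n - m : ℤ) : ℝ)|)) → Summable fun m => ‖F m‖ := by
    intro F b h1 h2
    refine Summable.of_nonneg_of_le (fun m => norm_nonneg _) (fun m => ?_) hs
    rw [h1, ← mul_assoc 2]
    exact mul_le_mul_of_nonneg_right (h2 m) (by positivity)
  refine ⟨key _ (fun m => |((n - m : ℤ) : ℝ)|) ?_ ?_,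
    key _ (fun m => ‖Hsym n - Hsym (n - m)‖ * ‖invLsym m‖) ?_ ?_,
    key _ (fun m => ‖Hsym n - Hsym (n - m)‖ * ‖invLsym m‖ * |((n - m : ℤ) : ℝ)| ^ 2) ?_ ?_,
    key _ (fun m => ‖Hsym n - Hsym (n - m)‖ * |((n - m : ℤ) : ℝ)|) ?_ ?_,
    key _ (fun m => ‖Dsym n ^ 2 - Dsym (n - m) ^ 2‖ * ‖invLsym m‖) ?_ ?_⟩
  · intro m
    simp only [Dc, norm_mul, norm_Dsym]; ring
  · intro m
    linarith [abs_nonneg (m : ℝ), abs_nonneg ((n - m : ℤ) : ℝ)]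
  · intro m
    simp only [iLc, norm_mul]; ring
  · intro m
    linarith [abs_nonneg ((n - m : ℤ) : ℝ), norm_H_invL_le n m]
  · intro m
    simp only [iLc, L2c, norm_mul, norm_pow, Complex.norm_intCast]; ring
  · intro m
    linarith [abs_nonneg (m : ℝ), norm_H_invL_sq_le n m]
  · intro m
    simp only [Dc, norm_mul, norm_Dsym]; ring
  · intro m
    have := mul_le_mul_of_nonneg_right (norm_Hsym_sub_le n (n - m))
      (abs_nonneg ((n - m : ℤ) : ℝ))
    linarith [abs_nonneg (m : ℝ)]
  · intro m
    simp only [iLc, norm_mul]; ring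
  · exact fun m => norm_D_sq_invL_le n m

lemma linU_eq (α₁ α₂ β : ℝ) (c : ℤ → ℂ) (n : ℤ) :
    linU α₁ α₂ β c n = 2 * (symℓ α₁ α₂ β n * c n) := by
  rw [linU, symℓ]; ring

lemma nlU_eq (α₁ α₂ β : ℝ) {c : ℤ → ℂ} {n : ℤ} (h : AbsConvU c n) :
    nlU α₁ α₂ β c n = -(2 * quad (ker β (symb₁ α₁ α₂) (symb₂ α₁ α₂)) c n) := by
  obtain ⟨h1, h2, h3, h4, h5⟩ := h
  have s1 : HasSum _ (conv c (Dc c) n) := h1.of_norm.hasSum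
  have s2 : HasSum _ (commC Hsym (iLc c) c n) := h2.of_norm.hasSum
  have s3 : HasSum _ (commC Hsym (iLc c) (L2c c) n) := h3.of_norm.hasSum
  have s4 : HasSum _ (commC Hsym c (Dc c) n) := h4.of_norm.hasSum
  have s5 : HasSum _ (commC (fun k => Dsym k ^ 2) (iLc c) c n) := h5.of_norm.hasSum
  have s := ((((((s1.mul_left 2).add (s2.mul_left (Lsym n))).add
    (s3.mul_left ((β : ℂ) * Lsym n))).sub (s4.mul_left ((α₂ : ℂ) * Lsym n))).add
    (s1.mul_left ((α₂ : ℂ) * Dsym n))).add (s5.mul_left ((α₁ : ℂ) * Lsym n))).mul_left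
    (-(1 / 2) * Nsym ((α₁ + α₂) / 2) n)
  have e := Eq.trans (a := quad (ker β (symb₁ α₁ α₂) (symb₂ α₁ α₂)) c n)
    (tsum_congr fun m => by simp only [ker, symb₁, symb₂, Dc, iLc, L2c]; ring) s.tsum_eq
  rw [e, nlU]
  ring

/-- The admissible size of the auxiliary radius `r`. -/
lemma exists_radius (κ K : ℝ) :
    ∃ r : ℝ, 0 < r ∧ 64 * ENNReal.ofReal (K / κ) ^ 2 * embC * ENNReal.ofReal r ^ 2 ≤ 1 := by
  set M : ℝ≥0∞ := 64 * ENNReal.ofReal (K / κ) ^ 2 * embC with hM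
  have hMtop : M ≠ ∞ :=
    (ENNReal.mul_lt_top (ENNReal.mul_lt_top (by norm_num) (by simp)) embC_lt_top).ne
  have hp : 0 < M.toReal + 1 := by positivity
  refine ⟨Real.sqrt ((M.toReal + 1)⁻¹), by positivity, ?_⟩
  rw [← ENNReal.ofReal_pow (by positivity), Real.sq_sqrt (by positivity),
    ← ENNReal.ofReal_one]
  nth_rewrite 1 [← ENNReal.ofReal_toReal hMtop]
  rw [← ENNReal.ofReal_mul (by positivity)]
  refine ENNReal.ofReal_le_ofReal ?_
  rw [← div_eq_mul_inv, div_le_one hp]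
  linarith

lemma hsq_le_of_H1 {c : ℤ → ℂ} (hs : Summable fun n : ℤ => (1 + (n : ℝ) ^ 2) * ‖c n‖ ^ 2) {r : ℝ}
    (hr : 0 < r) (h : Real.sqrt (H1sq c) ≤ r / 2) :
    4 * hsq (fun n => ‖c n‖ₑ) ≤ ENNReal.ofReal r ^ 2 := by
  have h1 : hsq (fun n => ‖c n‖ₑ) ≤ ENNReal.ofReal (H1sq c) := by
    rw [H1sq, ENNReal.ofReal_tsum_of_nonneg (fun n => by positivity) hs]
    refine ENNReal.tsum_le_tsum fun n => ?_
    rw [ofReal_mul_norm_sq (by positivity), absE_eq, ← ENNReal.ofReal_pow (abs_nonneg _), sq_abs]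
    gcongr
    linarith
  have h2 : H1sq c ≤ (r / 2) ^ 2 := (Real.sqrt_le_left (by positivity)).1 h
  calc 4 * hsq (fun n => ‖c n‖ₑ) ≤ 4 * ENNReal.ofReal ((r / 2) ^ 2) := by
        gcongr
        exact h1.trans (ENNReal.ofReal_le_ofReal h2)
    _ = ENNReal.ofReal r ^ 2 := by
        rw [← ENNReal.ofReal_pow hr.le, show (4 : ℝ≥0∞) = ENNReal.ofReal 4 by simp,
          ← ENNReal.ofReal_mul (by norm_num)]
        congr 1; ring

end ViscousWave

/-- Global well-posedness and decay for small data in H¹(𝕋) for equation (U)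
with ε = 1. -/
theorem global_existence_viscous_unidirectional
    (α₁ α₂ : ℝ) (hα₁ : 0 < α₁) (hα₂ : 0 < α₂) :
    ∃ C : ℝ, 0 < C ∧ ∀ β : ℝ, 0 ≤ β → ∀ f₀ : ℤ → ℂ,
      RealZeroMean f₀ →
      Summable (fun n : ℤ => (1 + (n : ℝ) ^ 2) * ‖f₀ n‖ ^ 2) →
      Real.sqrt (H1sq f₀) ≤ C →
      ∃ f : ℝ → ℤ → ℂ,
        f 0 = f₀
        ∧ (∀ t : ℝ, 0 ≤ t →
            RealZeroMean (f t)
            ∧ Summable (fun n : ℤ => (1 + (n : ℝ) ^ 2) * ‖f t n‖ ^ 2)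
            ∧ ∀ n : ℤ, AbsConvU (f t) n
              ∧ (2 : ℂ) * deriv (fun s : ℝ => f s n) t
                  = linU α₁ α₂ β (f t) n - nlU α₁ α₂ β (f t) n)
        ∧ (∀ s t : ℝ, 0 ≤ s → s ≤ t →
            Real.sqrt (H1sq (f t)) ≤ Real.sqrt (H1sq (f s)))
        ∧ MeasureTheory.IntegrableOn (fun t : ℝ => H2sq (f t)) (Set.Ici 0)
        ∧ Tendsto (fun t : ℝ => Real.sqrt (H1sq (f t))) atTop (nhds 0) := by
  obtain ⟨r, hr0, hr⟩ := ViscousWave.exists_radius (ViscousWave.symκ α₁ α₂)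
    (ViscousWave.symK α₁ α₂)
  refine ⟨r / 2, by positivity, fun β hβ f₀ hf₀ hsum hC => ?_⟩
  obtain ⟨f, hinit, hsol, hmono, hint, hlim⟩ :=
    (ViscousWave.admissible_symbols hα₁ hα₂ hβ).exists_decaying_solution hr hf₀
      (ViscousWave.hsq_le_of_H1 hsum hr0 hC)
  refine ⟨f, hinit, fun t ht => ?_, hmono, hint, hlim⟩
  obtain ⟨hreal, hH1, hfin, hode⟩ := hsol t ht
  refine ⟨hreal, hH1, fun n => ?_⟩
  have hconv := ViscousWave.absConvU hreal.1 hfin n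
  refine ⟨hconv, ?_⟩
  rw [hode n, ViscousWave.linU_eq, ViscousWave.nlU_eq α₁ α₂ β hconv]
  ring

end
end

section
/- Let β ≥ 0 and let f₀ : ℤ → ℂ satisfy M := ∑_{n∈ℤ} e^{|n|}|f₀(n)| < ∞ (i.e. f₀ ∈ A₁), with M > 0. Define ν(t) = 1 − 4Mt and let 0 < T < 1/(4M). Then there exists f : [0,T] → (ℤ → ℂ) with f(0) = f₀ such that for each n ∈ ℤ the map t ↦ f(n,t) is differentiable and satisfies 2 (d/dt) f(n,t) = i n f(n,t) + i sgn(n) f(n,t) − i β n |n| f(n,t) + i n ∑_{m∈ℤ} (−i sgn(m)) f(m,t) f(n−m,t), the sum converging absolutely, and such that ‖f(t)‖_{A_{ν(t)}} ≤ M for every t ∈ [0,T]. -/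
/- STATEMENT 3: local existence for analytic data for the unidirectional
inviscid water-wave model 2∂ₜf = ∂₁f − Hf − βH∂₁²f + ∂₁((Hf)·f),
in Fourier-coefficient form on the torus, with the analytic Wiener norm
‖a‖_{A_ν} = ∑ₙ e^{ν|n|}|a(n)| staying bounded by M on the shrinking strip
ν(t) = 1 − 4Mt. -/

/-!
The system decouples triangularly. Symmetrizing the convolution `∑ sgn(m) f(m) f(n-m)` under
`m ↦ n - m` gives the factor `(sgn m + sgn(n-m))/2`, which for `n > 0` is supported on `0 ≤ m ≤ n`
(`tsum_sign_conv`), and symmetrically for `n < 0` (`tsum_sign_conv_neg`). Hence `f(0)` is constant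
in time, and for `n ≥ 1`

  `f(n)' = (i ωₙ + n f(0)/2) f(n) + (n/2) ∑_{i+j=n, i,j≥1} f(i) f(j)`,

with the same system, `ωₙ` replaced by `-ωₙ`, for `n ↦ f(-n)`. Each equation is linear in its own
unknown with a source made of earlier unknowns, so Duhamel's formula gives a global solution
`triSol` by recursion, for any initial data.

It remains to bound the analytic norm, which also gives the absolute convergence of the
convolution, since `ν(t) = 1 - 4Mt ≥ 0` on `[0, T]`. The norms of the coefficients are dominated by
the solution `a` of the real system with growth rates `n |f(0)|/2` (`norm_triSol_le`). For the
partial sums `P = ∑ e^{νn} aₙ` and `G = ∑ n e^{νn} aₙ` one has `P' ≤ G (P + |f(0)|/2 - 4M)`, so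
`P` does not increase (`weighted_sum_le`). Each half-line norm therefore stays below its initial
value, and the total stays below `M`.
-/

open Filter

noncomputable section

/-! ### Solution of the triangular system -/

/-- The solution `e^{ct} (x + ∫₀ᵗ e^{-cs} q(s) ds)` of `u' = c u + q`, `u(0) = x`. The field is
`ℝ` or `ℂ`, since the system is solved over `ℂ` and its majorant over `ℝ`. -/
def duhamel {𝕜 : Type*} [RCLike 𝕜] (c x : 𝕜) (q : ℝ → 𝕜) (t : ℝ) : 𝕜 :=
  NormedSpace.exp (t • c) * (x + ∫ s in (0 : ℝ)..t, NormedSpace.exp ((-s) • c) * q s)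

theorem duhamel_zero {𝕜 : Type*} [RCLike 𝕜] (c x : 𝕜) (q : ℝ → 𝕜) :
    duhamel c x q 0 = x := by
  simp [duhamel]

theorem hasDerivAt_duhamel {𝕜 : Type*} [RCLike 𝕜] (c x : 𝕜) {q : ℝ → 𝕜}
    (hq : Continuous q) (t : ℝ) :
    HasDerivAt (duhamel c x q) (c * duhamel c x q t + q t) t := by
  have hE : ∀ t : ℝ, HasDerivAt (fun s : ℝ => NormedSpace.exp (s • c))
      (c * NormedSpace.exp (t • c)) t := fun t => hasDerivAt_exp_smul_const' c t
  have hEc : Continuous fun s : ℝ => NormedSpace.exp (s • c) :=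
    continuous_iff_continuousAt.2 fun s => (hE s).continuousAt
  have hcont : Continuous fun s : ℝ => NormedSpace.exp ((-s) • c) * q s :=
    (hEc.comp continuous_neg).mul hq
  have hI := (hcont.integral_hasStrictDerivAt 0 t).hasDerivAt
  have hinv : NormedSpace.exp (t • c) * NormedSpace.exp ((-t) • c) = 1 := by
    rw [← NormedSpace.exp_add_of_commute (Commute.all _ _), ← add_smul]
    simp
  have h := (hE t).mul (hI.const_add x)
  refine h.congr_deriv ?_
  simp only [duhamel]
  linear_combination q t * hinv

/-- The solution of the triangular system
`uₙ' = cₙ uₙ + (n/2) ∑_{i+j=n} uᵢ uⱼ`, `uₙ(0) = xₙ` for `n ≥ 1`, with the convention `u₀ = 0`.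
Because `u₀ = 0`, only indices `0 < i, j < n` contribute to the sum; the condition
`p.1 < n ∧ p.2 < n` makes this visible to the recursion. -/
def triSol {𝕜 : Type*} [RCLike 𝕜] (c x : ℕ → 𝕜) (n : ℕ) : ℝ → 𝕜 :=
  if n = 0 then 0 else
    duhamel (c n) (x n) fun s => (n / 2 : 𝕜) *
      ∑ p ∈ Finset.HasAntidiagonal.antidiagonal n,
        if _h : p.1 < n ∧ p.2 < n then triSol c x p.1 s * triSol c x p.2 s else 0
termination_by n
decreasing_by
  · exact _h.1
  · exact _h.2

section
variable {𝕜 : Type*} [RCLike 𝕜] (c x : ℕ → 𝕜)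

theorem triSol_zero : triSol c x 0 = 0 := by
  rw [triSol]; simp

/-- The guard in the recursive definition can be dropped: the terms it removes contain the
factor `u₀ = 0`. -/
theorem triSol_eq {n : ℕ} (hn : n ≠ 0) : triSol c x n =
    duhamel (c n) (x n) fun s => (n / 2 : 𝕜) *
      ∑ p ∈ Finset.HasAntidiagonal.antidiagonal n, triSol c x p.1 s * triSol c x p.2 s := by
  rw [triSol, if_neg hn]
  congr 1
  funext s
  congr 1
  refine Finset.sum_congr rfl fun p hp => ?_
  rw [Finset.HasAntidiagonal.mem_antidiagonal] at hp
  split_ifs with h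
  · rfl
  · have : p.1 = 0 ∨ p.2 = 0 := by omega
    rcases this with h | h <;> simp [h, triSol_zero]

theorem triSol_init (hx : x 0 = 0) (n : ℕ) : triSol c x n 0 = x n := by
  rcases eq_or_ne n 0 with rfl | hn
  · simp [triSol_zero, hx]
  · rw [triSol_eq c x hn, duhamel_zero]

theorem continuous_triSol (n : ℕ) : Continuous (triSol c x n) := by
  induction n using Nat.strong_induction_on with
  | _ n ih =>
    rcases eq_or_ne n 0 with rfl | hn
    · rw [triSol_zero]; exact continuous_const
    rw [triSol, if_neg hn]
    refine continuous_iff_continuousAt.2 fun t => (hasDerivAt_duhamel _ _ ?_ t).continuousAt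
    refine continuous_const.mul (continuous_finsetSum _ fun p _ => ?_)
    split_ifs with h
    · exact (ih _ h.1).mul (ih _ h.2)
    · exact continuous_const

theorem hasDerivAt_triSol (n : ℕ) (t : ℝ) :
    HasDerivAt (triSol c x n) (c n * triSol c x n t + (n / 2 : 𝕜) *
      ∑ p ∈ Finset.HasAntidiagonal.antidiagonal n, triSol c x p.1 t * triSol c x p.2 t) t := by
  rcases eq_or_ne n 0 with rfl | hn
  · simp [triSol_zero]
  have hq : Continuous fun s => (n / 2 : 𝕜) *
      ∑ p ∈ Finset.HasAntidiagonal.antidiagonal n, triSol c x p.1 s * triSol c x p.2 s :=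
    continuous_const.mul (continuous_finsetSum _ fun p _ =>
      (continuous_triSol c x _).mul (continuous_triSol c x _))
  have h := hasDerivAt_duhamel (c n) (x n) hq t
  rwa [← triSol_eq c x hn] at h
end

/-! ### Majorant and a priori estimate -/

/-- Majorant principle: replacing the initial values by their norms and `c n` by a real upper
bound of its real part dominates the solution for nonnegative times. By induction on `n`, compare
on `[0, t]` the Duhamel integrands `s ↦ e^{cₙ(t-s)} uₙ(s)` and `s ↦ e^{γₙ(t-s)} aₙ(s)`, whose
derivatives contain only lower-index terms. -/
theorem norm_triSol_le (c x : ℕ → ℂ) (γ : ℕ → ℝ) (hx : x 0 = 0)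
    (hγ : ∀ n, (c n).re ≤ γ n) (n : ℕ) {t : ℝ} (ht : 0 ≤ t) :
    ‖triSol c x n t‖ ≤ triSol γ (fun k => ‖x k‖) n t := by
  induction n using Nat.strong_induction_on generalizing t with
  | _ n ih =>
  rcases eq_or_ne n 0 with rfl | hn
  · simp [triSol_zero]
  set u := triSol c x with hu
  set a := triSol γ (fun k => ‖x k‖) with ha
  have hQ : ∀ s, 0 ≤ s → ‖∑ p ∈ Finset.HasAntidiagonal.antidiagonal n, u p.1 s * u p.2 s‖ ≤
      ∑ p ∈ Finset.HasAntidiagonal.antidiagonal n, a p.1 s * a p.2 s := by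
    intro s hs
    refine norm_sum_le_of_le _ fun p hp => ?_
    rw [Finset.HasAntidiagonal.mem_antidiagonal] at hp
    by_cases h : p.1 < n ∧ p.2 < n
    · rw [norm_mul]
      have h1 := ih _ h.1 hs
      exact mul_le_mul h1 (ih _ h.2 hs) (norm_nonneg _) ((norm_nonneg _).trans h1)
    · have : p.1 = 0 ∨ p.2 = 0 := by omega
      rcases this with h | h <;> simp [h, hu, ha, triSol_zero]
  have hEu : ∀ s : ℝ, HasDerivAt (fun s : ℝ => Complex.exp (c n * (t - s : ℝ)))
      (Complex.exp (c n * (t - s : ℝ)) * (c n * (-1 : ℝ))) s := fun s =>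
    ((((hasDerivAt_id s).const_sub t).ofReal_comp).const_mul (c n)).cexp
  have hEa : ∀ s : ℝ, HasDerivAt (fun s : ℝ => Real.exp (γ n * (t - s)))
      (Real.exp (γ n * (t - s)) * (γ n * (-1))) s := fun s =>
    (((hasDerivAt_id s).const_sub t).const_mul (γ n)).exp
  have hEle : ∀ s, s ≤ t → ‖Complex.exp (c n * (t - s : ℝ))‖ ≤ Real.exp (γ n * (t - s)) := by
    intro s hs
    rw [Complex.norm_exp, Complex.re_mul_ofReal]
    exact Real.exp_le_exp.2 (mul_le_mul_of_nonneg_right (hγ n) (sub_nonneg.2 hs))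
  have hdu : ∀ s, HasDerivAt (fun s : ℝ => Complex.exp (c n * (t - s : ℝ)) * u n s)
      (Complex.exp (c n * (t - s : ℝ)) * ((n / 2 : ℂ) *
        ∑ p ∈ Finset.HasAntidiagonal.antidiagonal n, u p.1 s * u p.2 s)) s := fun s =>
    ((hEu s).mul (hasDerivAt_triSol c x n s)).congr_deriv (by push_cast; ring)
  have hda : ∀ s, HasDerivAt (fun s : ℝ => Real.exp (γ n * (t - s)) * a n s)
      (Real.exp (γ n * (t - s)) * ((n / 2 : ℝ) *
        ∑ p ∈ Finset.HasAntidiagonal.antidiagonal n, a p.1 s * a p.2 s)) s := fun s =>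
    ((hEa s).mul (hasDerivAt_triSol γ _ n s)).congr_deriv (by ring)
  have key := image_norm_le_of_norm_deriv_right_le_deriv_boundary (a := 0) (b := t)
    (fun s _ => (hdu s).continuousAt.continuousWithinAt) (fun s _ => (hdu s).hasDerivWithinAt)
    (B := fun s : ℝ => Real.exp (γ n * (t - s)) * a n s) ?_ hda ?_ (Set.right_mem_Icc.2 ht)
  · simpa using key
  · have h0 : ‖u n 0‖ = a n 0 := by
      rw [hu, ha, triSol_init c x hx, triSol_init γ _ (by simp [hx])]
    simp only [norm_mul, h0]
    exact mul_le_mul_of_nonneg_right (hEle 0 ht) (h0 ▸ norm_nonneg _)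
  · intro s hs
    have hn2 : ‖(n / 2 : ℂ)‖ = n / 2 := by simp
    rw [norm_mul, norm_mul, hn2]
    gcongr
    · exact hEle s hs.2.le
    · exact hQ s hs.1

/-- The truncated form of `‖∂(b²)‖ ≤ 2 ‖∂b‖ ‖b‖`: write `n = i + j` in each term and enlarge the
triangle `i + j < N` to the square `i, j < N`. -/
theorem sum_mul_antidiagonal_le (b : ℕ → ℝ) (hb : ∀ n, 0 ≤ b n) (N : ℕ) :
    ∑ n ∈ Finset.range N, (n : ℝ) * ∑ p ∈ Finset.HasAntidiagonal.antidiagonal n, b p.1 * b p.2 ≤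
      2 * (∑ n ∈ Finset.range N, (n : ℝ) * b n) * ∑ n ∈ Finset.range N, b n := by
  have h1 : 2 * (∑ n ∈ Finset.range N, (n : ℝ) * b n) * ∑ n ∈ Finset.range N, b n =
      ∑ p ∈ Finset.range N ×ˢ Finset.range N, ((p.1 : ℝ) + p.2) * (b p.1 * b p.2) := by
    have e1 := Finset.sum_mul_sum (Finset.range N) (Finset.range N) (fun n => (n : ℝ) * b n) b
    have e2 := Finset.sum_mul_sum (Finset.range N) (Finset.range N) b (fun n => (n : ℝ) * b n)
    rw [← Finset.sum_product'] at e1 e2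
    have : 2 * (∑ n ∈ Finset.range N, (n : ℝ) * b n) * ∑ n ∈ Finset.range N, b n =
      (∑ n ∈ Finset.range N, (n : ℝ) * b n) * (∑ n ∈ Finset.range N, b n) +
      (∑ n ∈ Finset.range N, b n) * (∑ n ∈ Finset.range N, (n : ℝ) * b n) := by ring
    rw [this, e1, e2, ← Finset.sum_add_distrib]
    exact Finset.sum_congr rfl fun p _ => by ring
  rw [h1]
  simp only [Finset.mul_sum]
  rw [Finset.sum_sigma']
  refine le_trans (le_of_eq ?_) (Finset.sum_le_sum_of_subset_of_nonneg
    (s := (Finset.range N ×ˢ Finset.range N).filter fun p => p.1 + p.2 < N)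
    (Finset.filter_subset _ _) fun p _ _ => mul_nonneg (by positivity) (mul_nonneg (hb _) (hb _)))
  refine Finset.sum_bij' (fun q _ => q.2) (fun p _ => ⟨p.1 + p.2, p⟩) ?_ ?_ ?_ ?_ ?_
  · rintro ⟨n, i, j⟩ h
    simp at h ⊢
    omega
  · rintro ⟨i, j⟩ h
    simp at h ⊢
    omega
  · rintro ⟨n, i, j⟩ h
    simp at h
    obtain ⟨_, rfl⟩ := h
    rfl
  · intros; rfl
  · rintro ⟨n, i, j⟩ h
    simp at h
    obtain ⟨_, rfl⟩ := h
    push_cast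
    rfl

/-- The a priori estimate. With `bₙ = e^{ν n} aₙ`, `ν(t) = 1 - 4 M t`, the partial sums
`P = ∑ bₙ` and `G = ∑ n bₙ` satisfy `P' ≤ G (P + r/2 - 4M)`. The barrier `P ≤ 2M` cannot be
crossed, as `P' < 0` where `P = 2M`; hence `P' ≤ 0` throughout. -/
theorem weighted_sum_le (M r : ℝ) (hM : 0 < M) (hr : r ≤ M) (a : ℕ → ℝ → ℝ)
    (ha0 : a 0 = 0) (hnn : ∀ n t, 0 ≤ t → 0 ≤ a n t)
    (hd : ∀ n t, HasDerivAt (a n) (n * r / 2 * a n t + (n / 2 : ℝ) *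
      ∑ p ∈ Finset.HasAntidiagonal.antidiagonal n, a p.1 t * a p.2 t) t) (N : ℕ)
    (hinit : ∑ n ∈ Finset.range N, Real.exp n * a n 0 ≤ M) {t : ℝ} (ht : 0 ≤ t) :
    ∑ n ∈ Finset.range N, Real.exp ((1 - 4 * M * t) * n) * a n t ≤
      ∑ n ∈ Finset.range N, Real.exp n * a n 0 := by
  set b : ℕ → ℝ → ℝ := fun n s => Real.exp ((1 - 4 * M * s) * n) * a n s with hb
  have hbnn : ∀ n s, 0 ≤ s → 0 ≤ b n s := fun n s hs =>
    mul_nonneg (Real.exp_pos _).le (hnn n s hs)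
  have hbd : ∀ n s, HasDerivAt (b n) ((r / 2 - 4 * M) * (n * b n s) + 1 / 2 * (n *
      ∑ p ∈ Finset.HasAntidiagonal.antidiagonal n, b p.1 s * b p.2 s)) s := by
    intro n s
    have h1 : HasDerivAt (fun s : ℝ => Real.exp ((1 - 4 * M * s) * n))
        (Real.exp ((1 - 4 * M * s) * n) * (-(4 * M * 1) * n)) s :=
      ((((hasDerivAt_id s).const_mul (4 * M)).const_sub 1).mul_const (n : ℝ)).exp
    refine (h1.mul (hd n s)).congr_deriv ?_
    have h2 : ∑ p ∈ Finset.HasAntidiagonal.antidiagonal n, b p.1 s * b p.2 s =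
        Real.exp ((1 - 4 * M * s) * n) * ∑ p ∈ Finset.HasAntidiagonal.antidiagonal n, a p.1 s * a p.2 s := by
      rw [Finset.mul_sum]
      refine Finset.sum_congr rfl fun p hp => ?_
      rw [Finset.HasAntidiagonal.mem_antidiagonal] at hp
      simp only [hb]
      rw [← hp]
      push_cast
      rw [mul_add, Real.exp_add]
      ring
    rw [h2]
    simp only [hb]
    ring
  set P : ℝ → ℝ := fun s => ∑ n ∈ Finset.range N, b n s with hP
  set G : ℝ → ℝ := fun s => ∑ n ∈ Finset.range N, (n : ℝ) * b n s with hG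
  set P' : ℝ → ℝ := fun s => (r / 2 - 4 * M) * G s + 1 / 2 * ∑ n ∈ Finset.range N, (n *
      ∑ p ∈ Finset.HasAntidiagonal.antidiagonal n, b p.1 s * b p.2 s) with hP'
  have hPd : ∀ s, HasDerivAt P (P' s) s := by
    intro s
    refine (HasDerivAt.fun_sum fun n _ => hbd n s).congr_deriv ?_
    simp only [hP', hG, Finset.sum_add_distrib, Finset.mul_sum]
  have hGP : ∀ s, 0 ≤ s → P s ≤ G s := by
    intro s hs
    refine Finset.sum_le_sum fun n _ => ?_
    rcases eq_or_ne n 0 with rfl | hn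
    · simp [hb, ha0]
    · have : (1 : ℝ) ≤ n := by exact_mod_cast Nat.one_le_iff_ne_zero.2 hn
      nlinarith [hbnn n s hs]
  have hPnn : ∀ s, 0 ≤ s → 0 ≤ P s := fun s hs => Finset.sum_nonneg fun n _ => hbnn n s hs
  have hP'le : ∀ s, 0 ≤ s → P' s ≤ G s * (P s + r / 2 - 4 * M) := by
    intro s hs
    have := sum_mul_antidiagonal_le (fun n => b n s) (fun n => hbnn n s hs) N
    simp only [hP', hG, hP] at *
    nlinarith
  have hP0 : P 0 = ∑ n ∈ Finset.range N, Real.exp n * a n 0 := by simp [hP, hb]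
  have hbound : ∀ s, 0 ≤ s → P s ≤ 2 * M := by
    intro s hs
    refine image_le_of_deriv_right_lt_deriv_boundary (a := 0) (b := s) (f := P) (f' := P')
      (B := fun _ => 2 * M) (B' := fun _ => 0)
      (fun y _ => (hPd y).continuousAt.continuousWithinAt) (fun y _ => (hPd y).hasDerivWithinAt)
      (by rw [hP0]; linarith) (fun y => hasDerivAt_const _ _) ?_ (Set.right_mem_Icc.2 hs)
    intro y hy hPy
    have h1 := hP'le y hy.1
    have h2 := hGP y hy.1
    rw [hPy] at h1 h2
    nlinarith
  have hanti : AntitoneOn P (Set.Ici 0) := by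
    refine antitoneOn_of_deriv_nonpos (convex_Ici 0)
      (fun y _ => (hPd y).continuousAt.continuousWithinAt)
      (fun y _ => (hPd y).differentiableAt.differentiableWithinAt) fun y hy => ?_
    rw [interior_Ici] at hy
    have hy0 : 0 ≤ y := le_of_lt hy
    rw [(hPd y).deriv]
    have h1 := hP'le y hy0
    have h2 := hGP y hy0
    have h3 := hPnn y hy0
    have h4 := hbound y hy0
    nlinarith
  rw [← hP0]
  exact hanti Set.self_mem_Ici ht ht

/-- A solution of the triangular system with `Re (c n) = n Re z / 2` has
`∑ e^{ν(t) n} ‖uₙ(t)‖` bounded by its initial value, where `ν(t) = 1 - 4 M t`: the majorant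
satisfies this for every partial sum. -/
theorem triSol_weighted_bound {M : ℝ} (hM : 0 < M) {z : ℂ} (hz : ‖z‖ ≤ M) (c x : ℕ → ℂ)
    (hx : x 0 = 0) (hc : ∀ n, (c n).re = n * z.re / 2)
    (hs : Summable fun n : ℕ => Real.exp n * ‖x n‖)
    (hle : ∑' n : ℕ, Real.exp n * ‖x n‖ ≤ M) {t : ℝ} (ht : 0 ≤ t) :
    Summable (fun n : ℕ => Real.exp ((1 - 4 * M * t) * n) * ‖triSol c x n t‖) ∧
      ∑' n : ℕ, Real.exp ((1 - 4 * M * t) * n) * ‖triSol c x n t‖ ≤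
        ∑' n : ℕ, Real.exp n * ‖x n‖ := by
  set γ : ℕ → ℝ := fun n => n * ‖z‖ / 2 with hγ
  set a := triSol γ (fun k => ‖x k‖) with ha
  have hua : ∀ n s, 0 ≤ s → ‖triSol c x n s‖ ≤ a n s := fun n s hs =>
    norm_triSol_le c x γ hx (fun n => by
      rw [hc]
      simp only [hγ]
      have := Complex.re_le_norm z
      gcongr) n hs
  have ha0 : ∀ n, a n 0 = ‖x n‖ := fun n => triSol_init γ _ (by simp [hx]) n
  have hpart : ∀ N, ∑ n ∈ Finset.range N, Real.exp n * a n 0 ≤ ∑' n : ℕ, Real.exp n * ‖x n‖ := by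
    intro N
    simp only [ha0]
    exact hs.sum_le_tsum _ fun n _ => by positivity
  have hbd : ∀ N, ∑ n ∈ Finset.range N, Real.exp ((1 - 4 * M * t) * n) * ‖triSol c x n t‖ ≤
      ∑' n : ℕ, Real.exp n * ‖x n‖ := by
    intro N
    refine le_trans (Finset.sum_le_sum fun n _ =>
      mul_le_mul_of_nonneg_left (hua n t ht) (Real.exp_pos _).le) ?_
    refine (weighted_sum_le M ‖z‖ hM hz a (triSol_zero _ _)
      (fun n s hs => (norm_nonneg _).trans (hua n s hs))
      (fun n s => hasDerivAt_triSol γ _ n s) N ((hpart N).trans hle) ht).trans (hpart N)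
  exact ⟨summable_of_sum_range_le (fun n => by positivity) hbd,
    Real.tsum_le_of_sum_range_le (fun n => by positivity) hbd⟩

/-! ### Sums over the integers -/

/-- Splitting of a sum over `ℤ` into the zeroth term and the two half-lines, the latter being
encoded as sequences on `ℕ` that vanish at `0`. -/
theorem hasSum_int_of_halves {φ : ℤ → ℝ} {p q : ℕ → ℝ} (hp0 : p 0 = 0) (hq0 : q 0 = 0)
    (hp : ∀ n : ℕ, n ≠ 0 → φ n = p n) (hq : ∀ n : ℕ, n ≠ 0 → φ (-n) = q n)
    (hps : Summable p) (hqs : Summable q) :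
    HasSum φ (φ 0 + ∑' n, p n + ∑' n, q n) := by
  have h1 : HasSum (fun n : ℕ => φ n) (φ 0 + ∑' n, p n) := by
    convert (hasSum_ite_eq (0 : ℕ) (φ 0)).add hps.hasSum using 2 with n
    rcases eq_or_ne n 0 with rfl | hn
    · simp [hp0]
    · simp [hn, hp n hn]
  have h2 : HasSum (fun n : ℕ => φ (-n)) (φ 0 + ∑' n, q n) := by
    convert (hasSum_ite_eq (0 : ℕ) (φ 0)).add hqs.hasSum using 2 with n
    rcases eq_or_ne n 0 with rfl | hn
    · simp [hq0]
    · simp [hn, hq n hn]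
  have h := h1.of_nat_of_neg h2
  rwa [show φ 0 + ∑' n, p n + (φ 0 + ∑' n, q n) - φ 0 = φ 0 + ∑' n, p n + ∑' n, q n by ring] at h

theorem summable_norm_sign_conv {g : ℤ → ℂ} (hg : Summable fun m => ‖g m‖) (n : ℤ) :
    Summable fun m : ℤ => ‖((m.sign : ℤ) : ℂ) * g m * g (n - m)‖ := by
  refine Summable.of_nonneg_of_le (fun m => norm_nonneg _) (fun m => ?_)
    (hg.mul_right (∑' m, ‖g m‖))
  have h1 : ‖((m.sign : ℤ) : ℂ)‖ ≤ 1 := by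
    rcases lt_trichotomy m 0 with h | rfl | h
    · simp [Int.sign_eq_neg_one_of_neg h]
    · simp
    · simp [Int.sign_eq_one_of_pos h]
  have h2 : ‖g (n - m)‖ ≤ ∑' m, ‖g m‖ := hg.le_tsum (n - m) fun _ _ => norm_nonneg _
  rw [norm_mul, norm_mul]
  calc _ ≤ 1 * ‖g m‖ * (∑' m, ‖g m‖) := by gcongr
    _ = _ := by ring

/-- At a positive frequency `n` the bi-infinite convolution collapses to a finite sum.
Averaging it with its image under `m ↦ n - m` replaces the factor `sgn m` by
`(sgn m + sgn (n - m)) / 2`, which vanishes unless `0 ≤ m ≤ n`; the two endpoints contribute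
`g 0 * g n / 2` each. -/
theorem tsum_sign_conv {g : ℤ → ℂ} (hg : Summable fun m => ‖g m‖) {v : ℕ → ℂ} (hv0 : v 0 = 0)
    (hv : ∀ k : ℕ, k ≠ 0 → g k = v k) {n : ℕ} (hn : n ≠ 0) :
    ∑' m : ℤ, ((m.sign : ℤ) : ℂ) * g m * g (n - m) =
      g 0 * g n + ∑ p ∈ Finset.HasAntidiagonal.antidiagonal n, v p.1 * v p.2 := by
  have hS : Summable fun m : ℤ => ((m.sign : ℤ) : ℂ) * g m * g (n - m) :=
    (summable_norm_sign_conv hg n).of_norm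
  set A : ℤ → ℂ := fun m => ((m.sign : ℤ) : ℂ) * g m * g (n - m) with hA
  have hS' : Summable fun m : ℤ => A (n - m) := (Equiv.subLeft (n : ℤ)).summable_iff.2 hS
  have hrefl : ∑' m : ℤ, A (n - m) = ∑' m, A m := (Equiv.subLeft (n : ℤ)).tsum_eq A
  have hsum : ∑' m : ℤ, (A m + A (n - m)) = ∑' m, A m + ∑' m, A m := by
    rw [hS.tsum_add hS', hrefl]
  have hfin : ∑' m : ℤ, (A m + A (n - m)) = ∑ i ∈ Finset.range (n + 1), (A i + A (n - i)) := by
    rw [tsum_eq_sum (s := (Finset.range (n + 1)).map Nat.castEmbedding), Finset.sum_map]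
    · rfl
    intro m hm
    have hm' : m < 0 ∨ (n : ℤ) < m := by
      by_contra! h
      refine hm (Finset.mem_map.2 ⟨m.toNat, ?_, ?_⟩)
      · rw [Finset.mem_range]; omega
      · simp only [Nat.castEmbedding_apply]; omega
    simp only [hA, sub_sub_cancel]
    rcases hm' with h | h
    · rw [Int.sign_eq_neg_one_of_neg h, Int.sign_eq_one_of_pos (by omega)]
      push_cast; ring
    · rw [Int.sign_eq_one_of_pos (by omega), Int.sign_eq_neg_one_of_neg (by omega)]
      push_cast; ring
  have hterm : ∀ i ∈ Finset.range (n + 1), A i + A (n - i) =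
      2 * (v i * v (n - i)) + (if i = 0 then g 0 * g n else 0)
        + (if i = n then g 0 * g n else 0) := by
    intro i hi
    rw [Finset.mem_range] at hi
    simp only [hA, sub_sub_cancel]
    rcases eq_or_ne i 0 with rfl | h0
    · have : (0 : ℕ) ≠ n := hn.symm
      simp [hv0, this, Int.sign_eq_one_of_pos (show (0 : ℤ) < n by omega), mul_comm]
    rcases eq_or_ne i n with rfl | h1
    · simp [hv0, hn, Int.sign_eq_one_of_pos (show (0 : ℤ) < i by omega), mul_comm]
    · rw [← hv i h0, ← hv (n - i) (by omega), if_neg h0, if_neg h1,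
        Int.sign_eq_one_of_pos (by omega), Int.sign_eq_one_of_pos (by omega),
        Nat.cast_sub (by omega)]
      push_cast; ring
  rw [hfin, Finset.sum_congr rfl hterm] at hsum
  simp only [Finset.sum_add_distrib, ← Finset.mul_sum, Finset.sum_ite_eq', Finset.mem_range,
    Nat.succ_pos, Nat.lt_succ_self, if_true] at hsum
  rw [Finset.Nat.sum_antidiagonal_eq_sum_range_succ_mk]
  linear_combination (-1 / 2 : ℂ) * hsum

/-- The negative-frequency counterpart of `tsum_sign_conv`, obtained by the reflection
`m ↦ -m`, under which `sgn` changes sign. -/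
theorem tsum_sign_conv_neg {g : ℤ → ℂ} (hg : Summable fun m => ‖g m‖) {v : ℕ → ℂ}
    (hv0 : v 0 = 0) (hv : ∀ k : ℕ, k ≠ 0 → g (-k) = v k) {n : ℕ} (hn : n ≠ 0) :
    ∑' m : ℤ, ((m.sign : ℤ) : ℂ) * g m * g (-n - m) =
      -(g 0 * g (-n) + ∑ p ∈ Finset.HasAntidiagonal.antidiagonal n, v p.1 * v p.2) := by
  have hs : Summable fun m : ℤ => ‖g (-m)‖ := (Equiv.neg ℤ).summable_iff.2 hg
  have h := tsum_sign_conv (g := fun m => g (-m)) hs hv0 hv hn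
  simp only [neg_zero] at h
  rw [← h, ← tsum_neg, ← (Equiv.neg ℤ).tsum_eq]
  refine tsum_congr fun m => ?_
  simp only [Equiv.neg_apply, Int.sign_neg]
  rw [show -(n : ℤ) - -m = -(n - m) by ring]
  push_cast
  ring

/-- The bi-infinite sequence with value `z` at `0`, `u n` at `n` and `w n` at `-n` for `n ≥ 1`;
the values `u 0` and `w 0` are not used. -/
def glue (z : ℂ) (u w : ℕ → ℂ) (n : ℤ) : ℂ :=
  if n = 0 then z else if 0 < n then u n.natAbs else w n.natAbs

theorem glue_pos (z : ℂ) (u w : ℕ → ℂ) {n : ℕ} (hn : n ≠ 0) : glue z u w n = u n := by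
  have : 0 < n := Nat.pos_of_ne_zero hn
  simp [glue, hn, this]

theorem glue_neg (z : ℂ) (u w : ℕ → ℂ) {n : ℕ} (hn : n ≠ 0) : glue z u w (-n) = w n := by
  simp [glue, hn]

/-! ### The solution on the integers -/

theorem local_existence_analytic_unidirectional
    (β : ℝ) (hβ : 0 ≤ β) (f₀ : ℤ → ℂ) (M : ℝ)
    (hsum : Summable (fun n : ℤ => Real.exp |(n : ℝ)| * ‖f₀ n‖))
    (hM : M = ∑' n : ℤ, Real.exp |(n : ℝ)| * ‖f₀ n‖) (hMpos : 0 < M)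
    (T : ℝ) (hT0 : 0 < T) (hT : T < 1 / (4 * M)) :
    ∃ f : ℝ → ℤ → ℂ,
      f 0 = f₀
      ∧ (∀ t ∈ Set.Icc (0 : ℝ) T, ∀ n : ℤ,
          Summable (fun m : ℤ =>
            ‖(-Complex.I * ((m.sign : ℤ) : ℂ)) * f t m * f t (n - m)‖)
          ∧ ∃ d : ℂ, HasDerivWithinAt (fun s : ℝ => f s n) d (Set.Icc 0 T) t
              ∧ 2 * d
                  = Complex.I * (n : ℂ) * f t n
                    + Complex.I * ((n.sign : ℤ) : ℂ) * f t n
                    - Complex.I * (β : ℂ) * (n : ℂ) * ((|(n : ℝ)| : ℝ) : ℂ) * f t n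
                    + Complex.I * (n : ℂ)
                        * ∑' m : ℤ, (-Complex.I * ((m.sign : ℤ) : ℂ)) * f t m * f t (n - m))
      ∧ (∀ t ∈ Set.Icc (0 : ℝ) T,
          Summable (fun n : ℤ => Real.exp ((1 - 4 * M * t) * |(n : ℝ)|) * ‖f t n‖)
          ∧ (∑' n : ℤ, Real.exp ((1 - 4 * M * t) * |(n : ℝ)|) * ‖f t n‖) ≤ M) := by
  set z : ℂ := f₀ 0 with hz
  set x : ℕ → ℂ := fun k => if k = 0 then 0 else f₀ k with hx
  set y : ℕ → ℂ := fun k => if k = 0 then 0 else f₀ (-k) with hy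
  have hx0 : x 0 = 0 := by simp [hx]
  have hy0 : y 0 = 0 := by simp [hy]
  have hxn : ∀ n : ℕ, n ≠ 0 → f₀ n = x n := fun n hn => by simp [hx, hn]
  have hyn : ∀ n : ℕ, n ≠ 0 → f₀ (-n) = y n := fun n hn => by simp [hy, hn]
  have hxs : Summable fun n : ℕ => Real.exp n * ‖x n‖ := by
    refine Summable.of_nonneg_of_le (fun n => by positivity) (fun n => ?_)
      (hsum.comp_injective Nat.cast_injective)
    rcases eq_or_ne n 0 with rfl | hn
    · simp [hx0]
    · simp [hxn n hn]
  have hys : Summable fun n : ℕ => Real.exp n * ‖y n‖ := by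
    refine Summable.of_nonneg_of_le (fun n => by positivity) (fun n => ?_)
      (hsum.comp_injective (neg_injective.comp Nat.cast_injective))
    rcases eq_or_ne n 0 with rfl | hn
    · simp [hy0]
    · simp [hyn n hn]
  have hMsplit : M = ‖z‖ + ∑' n : ℕ, Real.exp n * ‖x n‖ + ∑' n : ℕ, Real.exp n * ‖y n‖ := by
    have h := hasSum_int_of_halves (φ := fun n : ℤ => Real.exp |(n : ℝ)| * ‖f₀ n‖)
      (by simp [hx0]) (by simp [hy0])
      (fun n hn => by simp [hxn n hn]) (fun n hn => by simp [hyn n hn]) hxs hys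
    rw [hM, h.tsum_eq]
    simp [hz]
  have hxnn : 0 ≤ ∑' n : ℕ, Real.exp n * ‖x n‖ := tsum_nonneg fun n => by positivity
  have hynn : 0 ≤ ∑' n : ℕ, Real.exp n * ‖y n‖ := tsum_nonneg fun n => by positivity
  have hznn := norm_nonneg z
  set ω : ℕ → ℝ := fun n => (n + 1 - β * n * n) / 2 with hω
  set c : ℕ → ℂ := fun n => Complex.I * (ω n : ℂ) + n * z / 2 with hc
  set e : ℕ → ℂ := fun n => -(Complex.I * (ω n : ℂ)) + n * z / 2 with he
  set u : ℕ → ℝ → ℂ := triSol c x with hu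
  set w : ℕ → ℝ → ℂ := triSol e y with hw
  have hU : ∀ t : ℝ, 0 ≤ t → _ := fun t ht => triSol_weighted_bound hMpos (z := z)
    (by linarith) c x hx0 (fun n => by simp [hc]) hxs (by linarith) ht
  have hW : ∀ t : ℝ, 0 ≤ t → _ := fun t ht => triSol_weighted_bound hMpos (z := z)
    (by linarith) e y hy0 (fun n => by simp [he]) hys (by linarith) ht
  set f : ℝ → ℤ → ℂ := fun t => glue z (fun k => u k t) (fun k => w k t) with hf
  have hf0 : ∀ t, f t 0 = z := fun t => by simp [hf, glue]
  have hfp : ∀ t, ∀ n : ℕ, n ≠ 0 → f t n = u n t := fun t n hn => glue_pos _ _ _ hn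
  have hfm : ∀ t, ∀ n : ℕ, n ≠ 0 → f t (-n) = w n t := fun t n hn => glue_neg _ _ _ hn
  have hnorm : ∀ t ∈ Set.Icc (0 : ℝ) T,
      Summable (fun n : ℤ => Real.exp ((1 - 4 * M * t) * |(n : ℝ)|) * ‖f t n‖)
          ∧ (∑' n : ℤ, Real.exp ((1 - 4 * M * t) * |(n : ℝ)|) * ‖f t n‖) ≤ M := by
    intro t ht
    obtain ⟨hU1, hU2⟩ := hU t ht.1
    obtain ⟨hW1, hW2⟩ := hW t ht.1
    have h := hasSum_int_of_halves
      (φ := fun n : ℤ => Real.exp ((1 - 4 * M * t) * |(n : ℝ)|) * ‖f t n‖)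
      (by simp [triSol_zero]) (by simp [triSol_zero])
      (fun n hn => by simp [hfp t n hn, hu]) (fun n hn => by simp [hfm t n hn, hw]) hU1 hW1
    refine ⟨h.summable, ?_⟩
    rw [h.tsum_eq]
    simp only [Int.cast_zero, abs_zero, mul_zero, Real.exp_zero, one_mul, hf0]
    linarith
  have hfs : ∀ t ∈ Set.Icc (0 : ℝ) T, Summable fun m => ‖f t m‖ := by
    intro t ht
    refine Summable.of_nonneg_of_le (fun _ => norm_nonneg _) (fun n => ?_) (hnorm t ht).1
    have h4 : 4 * M * t ≤ 1 := by
      have := (lt_div_iff₀ (by positivity)).1 hT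
      nlinarith [ht.2]
    exact le_mul_of_one_le_left (norm_nonneg _)
      (Real.one_le_exp (mul_nonneg (by linarith) (abs_nonneg _)))
  have hu0 : ∀ t, (fun j => u j t) 0 = 0 := fun t => congrFun (triSol_zero c x) t
  have hw0 : ∀ t, (fun j => w j t) 0 = 0 := fun t => congrFun (triSol_zero e y) t
  have hui : ∀ n, u n 0 = x n := triSol_init c x hx0
  have hwi : ∀ n, w n 0 = y n := triSol_init e y hy0
  have hud := hasDerivAt_triSol c x
  have hwd := hasDerivAt_triSol e y
  rw [← hu] at hud
  rw [← hw] at hwd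
  -- From here on only the properties of `u`, `w` and `f` recorded above matter.
  clear_value f u w
  refine ⟨f, ?_, fun t ht n => ⟨?_, ?_⟩, hnorm⟩
  · funext n
    obtain ⟨k, rfl | rfl⟩ := n.eq_nat_or_neg <;> rcases eq_or_ne k 0 with rfl | hk
    · simpa using hf0 0
    · rw [hfp 0 k hk, hxn k hk, hui]
    · simpa using hf0 0
    · rw [hfm 0 k hk, hyn k hk, hwi]
  · refine (summable_norm_sign_conv (hfs t ht) n).congr fun m => ?_
    simp [mul_assoc]
  · have hI : ∀ n : ℤ, ∑' m : ℤ, (-Complex.I * ((m.sign : ℤ) : ℂ)) * f t m * f t (n - m) =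
        -Complex.I * ∑' m : ℤ, ((m.sign : ℤ) : ℂ) * f t m * f t (n - m) := fun n => by
      rw [← tsum_mul_left]
      exact tsum_congr fun m => by ring
    rw [hI]
    obtain ⟨k, rfl | rfl⟩ := n.eq_nat_or_neg <;> rcases eq_or_ne k 0 with rfl | hk
    · exact ⟨0, by simpa [hf0] using hasDerivWithinAt_const _ _ _, by simp⟩
    · have hd : HasDerivAt (u k) (c k * u k t + (k / 2 : ℂ) *
          ∑ p ∈ Finset.HasAntidiagonal.antidiagonal k, u p.1 t * u p.2 t) t :=
        hud k t
      have hck : c k = Complex.I * ((k + 1 - β * k * k) / 2) + k * z / 2 := by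
        simp only [hc, hω]; push_cast; rfl
      have hconv : ∑' m : ℤ, ((m.sign : ℤ) : ℂ) * f t m * f t (k - m) = z * u k t +
          ∑ p ∈ Finset.HasAntidiagonal.antidiagonal k, u p.1 t * u p.2 t := by
        have h := tsum_sign_conv (hfs t ht) (hu0 t) (hfp t) hk
        rwa [hf0, hfp t k hk] at h
      rw [hconv, hfp t k hk, Int.sign_eq_one_of_pos (by omega : (0 : ℤ) < k)]
      simp only [hfp _ k hk]
      refine ⟨_, hd.hasDerivWithinAt, ?_⟩
      rw [hck]
      simp only [Int.cast_natCast, Nat.abs_cast, Complex.ofReal_natCast, Int.cast_one]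
      linear_combination (k : ℂ) * (z * u k t +
        ∑ p ∈ Finset.HasAntidiagonal.antidiagonal k, u p.1 t * u p.2 t) * Complex.I_sq
    · exact ⟨0, by simpa [hf0] using hasDerivWithinAt_const _ _ _, by simp⟩
    · have hd : HasDerivAt (w k) (e k * w k t + (k / 2 : ℂ) *
          ∑ p ∈ Finset.HasAntidiagonal.antidiagonal k, w p.1 t * w p.2 t) t :=
        hwd k t
      have hek : e k = -(Complex.I * ((k + 1 - β * k * k) / 2)) + k * z / 2 := by
        simp only [he, hω]; push_cast; rfl
      have hconv : ∑' m : ℤ, ((m.sign : ℤ) : ℂ) * f t m * f t (-k - m) = -(z * w k t +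
          ∑ p ∈ Finset.HasAntidiagonal.antidiagonal k, w p.1 t * w p.2 t) := by
        have h := tsum_sign_conv_neg (hfs t ht) (hw0 t) (hfm t) hk
        rwa [hf0, hfm t k hk] at h
      rw [hconv, hfm t k hk, Int.sign_eq_neg_one_of_neg (by omega : -(k : ℤ) < 0)]
      simp only [hfm _ k hk]
      refine ⟨_, hd.hasDerivWithinAt, ?_⟩
      rw [hek]
      simp only [Int.cast_neg, Int.cast_natCast, abs_neg, Nat.abs_cast, Complex.ofReal_natCast,
        Int.cast_one]
      linear_combination (k : ℂ) * (z * w k t +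
        ∑ p ∈ Finset.HasAntidiagonal.antidiagonal k, w p.1 t * w p.2 t) * Complex.I_sq

end
end

section
/- Let I ⊆ ℝ be an open interval, ν : I → ℝ differentiable, and a : I → (ℤ → ℂ) such that for each n ∈ ℤ the map t ↦ a(n,t) is differentiable. Assume that for each t ∈ I there are a neighborhood J ⊆ I of t and a summable w : ℤ → [0,∞) with e^{ν(s)|n|}(1+|n|)|a(n,s)| + e^{ν(s)|n|}|∂_s a(n,s)| ≤ w(n) for all s ∈ J and n ∈ ℤ. Then E(t) := ∑_{n∈ℤ} e^{ν(t)|n|}|a(n,t)| is finite on I and for every t ∈ I its upper right Dini derivative satisfies limsup_{h→0⁺} (E(t+h) − E(t))/h ≤ ν'(t) ∑_{n∈ℤ} |n| e^{ν(t)|n|} |a(n,t)| + ∑_{n∈ℤ} e^{ν(t)|n|} |∂_t a(n,t)|. -/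
/-!
Each summand `e^{ν(s)|n|} ‖a s n‖` has a right derivative at `t`: the exponential factor is
differentiable, and the norm of a differentiable curve always has a right derivative, bounded in
absolute value by the norm of the velocity (`exists_hasDerivWithinAt_norm`). It therefore suffices
to pass to the limit `h → 0⁺` under the sum, by dominated convergence; the upper limit is then an
actual limit.

The summable majorant for the difference quotients is `(K + 1) e^K w n`, where `K` is a Lipschitz
constant of `ν` at the point `t` (`abs_weighted_sub_le`). Since `ν'` need not be bounded near `t`,
the mean value theorem is applied to `a` alone and not to the whole summand. For frequencies
`|n| h ≤ 1` the weights at times in `[t, t + h]` are comparable up to the factor `e^K`; for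
`|n| h > 1` the factor `1 + |n|` in the domination hypothesis makes each of the two values at most
`h w n`.
-/

open Filter

/-- This includes the case `u t = 0`, where the norm is not differentiable: the slopes of `‖u‖` to
the right of a zero of `u` are the norms of the slopes of `u`. -/
lemma exists_hasDerivWithinAt_norm {u : ℝ → ℂ} {u' : ℂ} {t : ℝ} (hu : HasDerivAt u u' t) :
    ∃ d : ℝ, |d| ≤ ‖u'‖ ∧ HasDerivWithinAt (fun s => ‖u s‖) d (Set.Ioi t) t := by
  have hslope : Tendsto (slope u t) (nhdsWithin t (Set.Ioi t)) (nhds u') :=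
    (hasDerivWithinAt_iff_tendsto_slope' Set.self_notMem_Ioi).1 hu.hasDerivWithinAt
  have key : ∃ d : ℝ, HasDerivWithinAt (fun s => ‖u s‖) d (Set.Ioi t) t := by
    by_cases h0 : u t = 0
    · refine ⟨‖u'‖, (hasDerivWithinAt_iff_tendsto_slope' Set.self_notMem_Ioi).2 ?_⟩
      refine hslope.norm.congr' ?_
      filter_upwards [self_mem_nhdsWithin] with s hs
      have hs' : 0 < s - t := sub_pos.2 hs
      simp only [slope, vsub_eq_sub, h0, sub_zero, norm_zero, norm_smul, smul_eq_mul, norm_inv,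
        Real.norm_eq_abs, abs_of_pos hs']
    · exact ⟨_, (hu.differentiableAt.norm ℝ h0).hasDerivAt.hasDerivWithinAt⟩
  obtain ⟨d, hd⟩ := key
  refine ⟨d, ?_, hd⟩
  have hd' := (hasDerivWithinAt_iff_tendsto_slope' Set.self_notMem_Ioi).1 hd
  refine le_of_tendsto_of_tendsto hd'.abs hslope.norm ?_
  filter_upwards with s
  simp only [slope, vsub_eq_sub, smul_eq_mul, abs_mul, norm_smul, Real.norm_eq_abs]
  exact mul_le_mul_of_nonneg_left (abs_norm_sub_norm_le _ _) (abs_nonneg _)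

lemma abs_exp_sub_one_le_mul_exp_abs (x : ℝ) : |Real.exp x - 1| ≤ |x| * Real.exp |x| := by
  rcases le_total 0 x with hx | hx
  · have h1 := Real.one_le_exp hx
    have h2 : (1 - x) * Real.exp x ≤ Real.exp (-x) * Real.exp x :=
      mul_le_mul_of_nonneg_right (Real.one_sub_le_exp_neg x) (Real.exp_pos x).le
    rw [← Real.exp_add, neg_add_cancel, Real.exp_zero] at h2
    rw [abs_of_nonneg hx, abs_of_nonneg (by linarith)]
    linarith
  · have h1 := Real.exp_le_one_iff.2 hx
    have h2 := Real.add_one_le_exp x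
    have h3 : 1 ≤ Real.exp (-x) := Real.one_le_exp (by linarith)
    rw [abs_of_nonpos hx, abs_of_nonpos (by linarith)]
    nlinarith

/-- The increment of a single summand over a time step `h`. Here `N` stands for `|n|`, the numbers
`p`, `q` for the values of `ν` and `A`, `B` for the Fourier coefficients at times `t + h` and `t`,
and `hAB` is what the mean value theorem yields for the coefficient. -/
lemma abs_weighted_sub_le {N K h W p q : ℝ} {A B : ℂ} (hN : 0 ≤ N) (hK : 0 ≤ K) (hh : 0 < h)
    (hW : 0 ≤ W) (hpq : |p - q| ≤ K * h)
    (hA : Real.exp (p * N) * (1 + N) * ‖A‖ ≤ W) (hB : Real.exp (q * N) * (1 + N) * ‖B‖ ≤ W)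
    (hAB : ‖A - B‖ ≤ W * Real.exp (-((q - K * h) * N)) * h) :
    |Real.exp (p * N) * ‖A‖ - Real.exp (q * N) * ‖B‖| ≤ (K + 1) * Real.exp K * W * h := by
  have hEA : 0 ≤ Real.exp (p * N) * ‖A‖ := by positivity
  have hEB : 0 ≤ Real.exp (q * N) * ‖B‖ := by positivity
  have hexpK : 1 ≤ Real.exp K := Real.one_le_exp hK
  rcases le_total (N * h) 1 with hNh | hNh
  · have hKN : K * h * N ≤ K := by nlinarith
    have h1 : |Real.exp (p * N) - Real.exp (q * N)| * ‖A‖ ≤ K * Real.exp K * W * h := by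
      have hx : |(q - p) * N| ≤ K * h * N := by
        rw [abs_mul, abs_of_nonneg hN, abs_sub_comm]
        exact mul_le_mul_of_nonneg_right hpq hN
      have hfac : Real.exp (p * N) - Real.exp (q * N)
          = -(Real.exp (p * N) * (Real.exp ((q - p) * N) - 1)) := by
        rw [mul_sub, ← Real.exp_add]
        ring_nf
      rw [hfac, abs_neg, abs_mul, abs_of_pos (Real.exp_pos _)]
      have hy : |Real.exp ((q - p) * N) - 1| ≤ K * h * N * Real.exp K :=
        (abs_exp_sub_one_le_mul_exp_abs _).trans
          (mul_le_mul hx (Real.exp_le_exp.2 (hx.trans hKN)) (Real.exp_pos _).le (by positivity))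
      calc Real.exp (p * N) * |Real.exp ((q - p) * N) - 1| * ‖A‖
          ≤ Real.exp (p * N) * (K * h * N * Real.exp K) * ‖A‖ := by gcongr
        _ = K * Real.exp K * h * (Real.exp (p * N) * N * ‖A‖) := by ring
        _ ≤ K * Real.exp K * h * W := by
            gcongr
            nlinarith
        _ = K * Real.exp K * W * h := by ring
    have h2 : Real.exp (q * N) * |‖A‖ - ‖B‖| ≤ Real.exp K * W * h := by
      calc Real.exp (q * N) * |‖A‖ - ‖B‖|
          ≤ Real.exp (q * N) * (W * Real.exp (-((q - K * h) * N)) * h) := by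
            gcongr
            exact (abs_norm_sub_norm_le _ _).trans hAB
        _ = Real.exp (K * h * N) * W * h := by
            have : Real.exp (K * h * N)
                = Real.exp (q * N) * Real.exp (-((q - K * h) * N)) := by
              rw [← Real.exp_add]
              ring_nf
            rw [this]
            ring
        _ ≤ Real.exp K * W * h := by gcongr
    calc |Real.exp (p * N) * ‖A‖ - Real.exp (q * N) * ‖B‖|
        = |(Real.exp (p * N) - Real.exp (q * N)) * ‖A‖
            + Real.exp (q * N) * (‖A‖ - ‖B‖)| := by ring_nf
      _ ≤ |(Real.exp (p * N) - Real.exp (q * N)) * ‖A‖|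
            + |Real.exp (q * N) * (‖A‖ - ‖B‖)| := abs_add_le _ _
      _ = |Real.exp (p * N) - Real.exp (q * N)| * ‖A‖
            + Real.exp (q * N) * |‖A‖ - ‖B‖| := by
          rw [abs_mul, abs_mul, abs_norm, abs_of_pos (Real.exp_pos (q * N))]
      _ ≤ (K + 1) * Real.exp K * W * h := by linarith
  · have hsmall : ∀ x : ℝ, 0 ≤ x → x * (1 + N) ≤ W → x ≤ W * h := by
      intro x hx hxW
      calc x ≤ x * ((1 + N) * h) := le_mul_of_one_le_right hx (by nlinarith)
        _ = x * (1 + N) * h := by ring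
        _ ≤ W * h := by gcongr
    have hA' := hsmall _ hEA (by linarith)
    have hB' := hsmall _ hEB (by linarith)
    have hC : 1 ≤ (K + 1) * Real.exp K := by nlinarith
    have hWh : W * h ≤ (K + 1) * Real.exp K * (W * h) :=
      le_mul_of_one_le_left (by positivity) hC
    rw [abs_le]
    constructor <;> linarith

theorem dini_derivative_analytic_norm
    (I : Set ℝ) (hIopen : IsOpen I) (hIconn : I.OrdConnected)
    (ν : ℝ → ℝ) (hν : ∀ t ∈ I, DifferentiableAt ℝ ν t)
    (a : ℝ → ℤ → ℂ)
    (hdiff : ∀ n : ℤ, ∀ t ∈ I, DifferentiableAt ℝ (fun s : ℝ => a s n) t)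
    (hdom : ∀ t ∈ I, ∃ J ∈ nhds t, J ⊆ I ∧ ∃ w : ℤ → ℝ, (∀ n : ℤ, 0 ≤ w n) ∧ Summable w ∧
      ∀ s ∈ J, ∀ n : ℤ,
        Real.exp (ν s * |(n : ℝ)|) * (1 + |(n : ℝ)|) * ‖a s n‖
          + Real.exp (ν s * |(n : ℝ)|) * ‖deriv (fun u : ℝ => a u n) s‖ ≤ w n) :
    ∀ t ∈ I,
      Summable (fun n : ℤ => Real.exp (ν t * |(n : ℝ)|) * ‖a t n‖)
      ∧ Filter.limsup
          (fun h : ℝ =>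
            ((∑' n : ℤ, Real.exp (ν (t + h) * |(n : ℝ)|) * ‖a (t + h) n‖)
                - ∑' n : ℤ, Real.exp (ν t * |(n : ℝ)|) * ‖a t n‖) / h)
          (nhdsWithin 0 (Set.Ioi 0))
        ≤ deriv ν t * (∑' n : ℤ, |(n : ℝ)| * Real.exp (ν t * |(n : ℝ)|) * ‖a t n‖)
          + ∑' n : ℤ, Real.exp (ν t * |(n : ℝ)|) * ‖deriv (fun s : ℝ => a s n) t‖ := by
  intro t ht
  obtain ⟨J, hJ, hJI, w, hw0, hw, hb⟩ := hdom t ht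
  have hexp_nonneg : ∀ (s : ℝ) (n : ℤ),
      0 ≤ Real.exp (ν s * |(n : ℝ)|) * ‖deriv (fun u : ℝ => a u n) s‖ := fun s n => by positivity
  have hbA : ∀ s ∈ J, ∀ n : ℤ,
      Real.exp (ν s * |(n : ℝ)|) * (1 + |(n : ℝ)|) * ‖a s n‖ ≤ w n := fun s hs n => by
    linarith [hb s hs n, hexp_nonneg s n]
  have hbD : ∀ s ∈ J, ∀ n : ℤ,
      Real.exp (ν s * |(n : ℝ)|) * ‖deriv (fun u : ℝ => a u n) s‖ ≤ w n := fun s hs n => by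
    have : 0 ≤ Real.exp (ν s * |(n : ℝ)|) * (1 + |(n : ℝ)|) * ‖a s n‖ := by positivity
    linarith [hb s hs n]
  have hsum : ∀ s ∈ J, Summable (fun n : ℤ => Real.exp (ν s * |(n : ℝ)|) * ‖a s n‖) :=
    fun s hs => hw.of_nonneg_of_le (fun n => by positivity) fun n => by
      have : 0 ≤ Real.exp (ν s * |(n : ℝ)|) * |(n : ℝ)| * ‖a s n‖ := by positivity
      linarith [hbA s hs n]
  have htJ : t ∈ J := mem_of_mem_nhds hJ
  have hsumN : Summable (fun n : ℤ => |(n : ℝ)| * Real.exp (ν t * |(n : ℝ)|) * ‖a t n‖) :=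
    hw.of_nonneg_of_le (fun n => by positivity) fun n => by
      have : 0 ≤ Real.exp (ν t * |(n : ℝ)|) * ‖a t n‖ := by positivity
      linarith [hbA t htJ n]
  have hsumD : Summable
      (fun n : ℤ => Real.exp (ν t * |(n : ℝ)|) * ‖deriv (fun s : ℝ => a s n) t‖) :=
    hw.of_nonneg_of_le (hexp_nonneg t) (hbD t htJ)
  refine ⟨hsum t htJ, ?_⟩
  obtain ⟨K, hK, hKν⟩ := (hν t ht).isBigO_sub.exists_pos
  obtain ⟨r, hr, hball⟩ := Metric.eventually_nhds_iff.1 ((eventually_mem_set.2 hJ).and hKν.bound)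
  have hnear : ∀ s ∈ Set.Ico t (t + r), s ∈ J ∧ |ν s - ν t| ≤ K * (s - t) := fun s hs => by
    have hst : 0 ≤ s - t := sub_nonneg.2 hs.1
    have := @hball s (by rw [Real.dist_eq, abs_of_nonneg hst]; linarith [hs.2])
    simpa only [Real.norm_eq_abs, abs_of_nonneg hst] using this
  -- The right derivatives of the moduli of the coefficients.
  choose d hd hd' using fun n : ℤ => exists_hasDerivWithinAt_norm (hdiff n t ht).hasDerivAt
  let g : ℤ → ℝ := fun n =>
    deriv ν t * (|(n : ℝ)| * Real.exp (ν t * |(n : ℝ)|) * ‖a t n‖)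
      + Real.exp (ν t * |(n : ℝ)|) * d n
  have hpoint : ∀ n : ℤ, Tendsto
      (fun h : ℝ => (Real.exp (ν (t + h) * |(n : ℝ)|) * ‖a (t + h) n‖
        - Real.exp (ν t * |(n : ℝ)|) * ‖a t n‖) / h)
      (nhdsWithin 0 (Set.Ioi 0)) (nhds (g n)) := fun n => by
    have hder : HasDerivWithinAt (fun s => Real.exp (ν s * |(n : ℝ)|) * ‖a s n‖) (g n)
        (Set.Ioi t) t := by
      refine ((((hν t ht).hasDerivAt.mul_const |(n : ℝ)|).exp.hasDerivWithinAt).mul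
        (hd' n)).congr_deriv ?_
      simp only [g]
      ring
    have hshift : Tendsto (fun h : ℝ => t + h) (nhdsWithin 0 (Set.Ioi 0))
        (nhdsWithin t (Set.Ioi t)) := by
      refine tendsto_nhdsWithin_iff.2 ⟨?_, ?_⟩
      · have : Tendsto (fun h : ℝ => t + h) (nhds 0) (nhds (t + 0)) :=
          tendsto_const_nhds.add tendsto_id
        rw [add_zero] at this
        exact this.mono_left nhdsWithin_le_nhds
      · filter_upwards [self_mem_nhdsWithin] with h hh
        exact lt_add_of_pos_right t hh
    refine (((hasDerivWithinAt_iff_tendsto_slope' Set.self_notMem_Ioi).1 hder).comp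
      hshift).congr fun h => ?_
    simp [slope_def_field]
  have hbound : ∀ᶠ h : ℝ in nhdsWithin 0 (Set.Ioi 0), t + h ∈ J ∧ ∀ n : ℤ,
      ‖(Real.exp (ν (t + h) * |(n : ℝ)|) * ‖a (t + h) n‖
        - Real.exp (ν t * |(n : ℝ)|) * ‖a t n‖) / h‖ ≤ (K + 1) * Real.exp K * w n := by
    filter_upwards [Ioo_mem_nhdsGT hr] with h hh
    have hh0 : 0 < h := hh.1
    have hth := hnear (t + h) ⟨by linarith, by linarith [hh.2]⟩
    refine ⟨hth.1, fun n => ?_⟩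
    rw [norm_div, Real.norm_eq_abs, Real.norm_eq_abs, abs_of_pos hh0, div_le_iff₀ hh0]
    have hmem : ∀ x ∈ Set.Icc t (t + h), x ∈ J ∧ |ν x - ν t| ≤ K * (x - t) := fun x hx =>
      hnear x ⟨hx.1, by linarith [hx.2, hh.2]⟩
    refine abs_weighted_sub_le (abs_nonneg _) hK.le hh0 (hw0 n) (by simpa using hth.2)
      (hbA _ hth.1 n) (hbA t htJ n) ?_
    have hmvt := (convex_Icc t (t + h)).norm_image_sub_le_of_norm_deriv_le
      (𝕜 := ℝ) (f := fun s => a s n) (x := t) (y := t + h)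
      (C := w n * Real.exp (-((ν t - K * h) * |(n : ℝ)|)))
      (fun x hx => hdiff n x (hJI (hmem x hx).1)) (fun x hx => ?_)
      ⟨le_rfl, by linarith⟩ ⟨by linarith, le_rfl⟩
    · simpa [abs_of_pos hh0] using hmvt
    · -- On `[t, t + h]` the exponent stays above `ν t - K h`.
      have hlow : ν t - K * h ≤ ν x := by
        have h1 := (abs_le.1 (hmem x hx).2).1
        have h2 : K * (x - t) ≤ K * h := by
          gcongr
          linarith [hx.2]
        linarith
      rw [Real.exp_neg, ← div_eq_mul_inv, le_div_iff₀ (Real.exp_pos _), mul_comm]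
      refine le_trans ?_ (hbD x (hmem x hx).1 n)
      gcongr
  have hlim : Tendsto (fun h : ℝ =>
      ((∑' n : ℤ, Real.exp (ν (t + h) * |(n : ℝ)|) * ‖a (t + h) n‖)
        - ∑' n : ℤ, Real.exp (ν t * |(n : ℝ)|) * ‖a t n‖) / h)
      (nhdsWithin 0 (Set.Ioi 0)) (nhds (∑' n, g n)) := by
    refine (tendsto_tsum_of_dominated_convergence (hw.mul_left ((K + 1) * Real.exp K)) hpoint
      (hbound.mono fun h hh => hh.2)).congr' ?_
    filter_upwards [hbound] with h hh
    rw [tsum_div_const, (hsum _ hh.1).tsum_sub (hsum t htJ)]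
  have hsumd : Summable (fun n : ℤ => Real.exp (ν t * |(n : ℝ)|) * d n) :=
    hsumD.of_norm_bounded fun n => by
      rw [norm_mul, Real.norm_eq_abs, Real.norm_eq_abs, abs_of_pos (Real.exp_pos _)]
      exact mul_le_mul_of_nonneg_left (hd n) (Real.exp_pos _).le
  rw [hlim.limsup_eq, (hsumN.mul_left (deriv ν t)).tsum_add hsumd, tsum_mul_left]
  gcongr with n
  exact (le_abs_self _).trans (hd n)
end

section
/- Let y : [0,∞) → ℝ be differentiable with y(t) ≥ 0 for all t, let D : [0,∞) → ℝ satisfy D(t) ≥ 0 for all t, and let C > 0. Assume that y'(t) ≤ (C·√(y(t)) − 1)·D(t) for every t ≥ 0, and that C·√(y(0)) < 1. Then y(t) ≤ y(0) for all t ≥ 0, and y is non-increasing on [0,∞). -/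
/-!
The whole claim reduces to `C * √(y t) < 1` for all `t ≥ 0`, since then `y' ≤ 0` and `y` is antitone.
To get this bound at a time `T`, compare `y` on `[0, T]` with the barrier `y 0 + ε * t`, where `ε > 0`
is so small that the barrier remains in the region `C * √s < 1`. Wherever `y` touches the barrier,
the differential inequality gives `y' ≤ 0 < ε`, so `y` cannot cross it
(`image_le_of_deriv_right_lt_deriv_boundary`).
-/

/- STATEMENT 7: nonlinear Grönwall-type continuation lemma: if y ≥ 0 is
differentiable on [0,∞) with y' ≤ (C√y − 1)·D, D ≥ 0, and C√(y(0)) < 1,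
then y(t) ≤ y(0) for all t ≥ 0 and y is non-increasing on [0,∞). -/

theorem gronwall_continuation_viscous
    (y D y' : ℝ → ℝ) (C : ℝ) (hC : 0 < C)
    (hy : ∀ t : ℝ, 0 ≤ t → 0 ≤ y t)
    (hD : ∀ t : ℝ, 0 ≤ t → 0 ≤ D t)
    (hderiv : ∀ t ∈ Set.Ici (0 : ℝ), HasDerivWithinAt y (y' t) (Set.Ici 0) t)
    (hineq : ∀ t : ℝ, 0 ≤ t → y' t ≤ (C * Real.sqrt (y t) - 1) * D t)
    (hsmall : C * Real.sqrt (y 0) < 1) :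
    (∀ t : ℝ, 0 ≤ t → y t ≤ y 0) ∧ AntitoneOn y (Set.Ici 0) := by
  -- Smallness is equivalent to `s < 1 / C ^ 2`, which is linear in `s`.
  have key : ∀ s : ℝ, C * Real.sqrt s < 1 ↔ s < 1 / C ^ 2 := by
    intro s
    rw [← lt_div_iff₀' hC, Real.sqrt_lt' (by positivity), div_pow, one_pow]
  have hgap : 0 < 1 / C ^ 2 - y 0 := sub_pos.2 ((key _).1 hsmall)
  have hcont : ContinuousOn y (Set.Ici 0) := fun t ht => (hderiv t ht).continuousWithinAt
  have hlt : ∀ T : ℝ, 0 ≤ T → C * Real.sqrt (y T) < 1 := by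
    intro T hT
    -- With this slope the barrier `y 0 + ε t` stays below `1 / C ^ 2` on `[0, T]`.
    obtain ⟨ε, hε, hεT⟩ : ∃ ε : ℝ, 0 < ε ∧ ε * T < 1 / C ^ 2 - y 0 := by
      refine ⟨(1 / C ^ 2 - y 0) / (T + 1), by positivity, ?_⟩
      rw [div_mul_eq_mul_div, div_lt_iff₀ (by positivity)]
      linarith
    have hB : ∀ x : ℝ, HasDerivAt (fun t => y 0 + ε * t) ε x := fun x => by
      simpa using ((hasDerivAt_id x).const_mul ε).const_add (y 0)
    have hle : y T ≤ y 0 + ε * T := by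
      refine image_le_of_deriv_right_lt_deriv_boundary (f := y) (f' := y')
        (B := fun t => y 0 + ε * t) (B' := fun _ => ε) (hcont.mono Set.Icc_subset_Ici_self)
        (fun x hx => (hderiv x hx.1).mono (Set.Ici_subset_Ici.2 hx.1)) (by simp) hB
        (fun x hx hxB => ?_) (Set.right_mem_Icc.2 hT)
      have hxT : ε * x ≤ ε * T := mul_le_mul_of_nonneg_left hx.2.le hε.le
      have hx1 : C * Real.sqrt (y x) < 1 := (key _).2 (by linarith)
      have hneg := mul_nonpos_of_nonpos_of_nonneg (sub_nonpos.2 hx1.le) (hD x hx.1)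
      linarith [hineq x hx.1]
    exact (key _).2 (by linarith)
  have hanti : AntitoneOn y (Set.Ici 0) := by
    refine antitoneOn_of_hasDerivWithinAt_nonpos (f' := y') (convex_Ici 0) hcont
      (fun x hx => (hderiv x (interior_subset hx)).mono interior_subset) (fun x hx => ?_)
    have hx0 : (0 : ℝ) ≤ x := interior_subset hx
    exact (hineq x hx0).trans
      (mul_nonpos_of_nonpos_of_nonneg (sub_nonpos.2 (hlt x hx0).le) (hD x hx0))
  exact ⟨fun t ht => hanti Set.self_mem_Ici ht ht, hanti⟩
end

section
/- Let T > 0, let y : [0,T] → ℝ be differentiable with M := y(0) ≥ 0, and let G : [0,T] → ℝ be continuous with G(t) ≥ 0 for all t. Assume y'(t) ≤ 2·G(t)·(y(t) − 2M) for every t ∈ [0,T]. Then y(t) ≤ M for all t ∈ [0,T]. -/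
/-!
The bound follows from a fencing argument. As `G` is continuous on a compact interval, it is
bounded there by some `C ≥ 0`. Put `K = 2 * C + 1` and, for `ε > 0`, take the barrier
`B t = M + ε * exp (K * t)`, which lies above `y` at time `0`. At any time where `y` touches `B`,
`y' ≤ 2 * G * (ε * exp (K * t) - M) ≤ 2 * C * ε * exp (K * t) < B'`, because `G, M ≥ 0`; so `y`
never crosses `B`. Letting `ε → 0` gives `y ≤ M`. The barrier treats `M = 0` and `M > 0` alike.
-/

theorem gronwall_continuation_analytic
    (T : ℝ) (hT : 0 < T) (y y' G : ℝ → ℝ) (M : ℝ)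
    (hM : M = y 0) (hM0 : 0 ≤ M)
    (hG : ContinuousOn G (Set.Icc 0 T))
    (hGpos : ∀ t ∈ Set.Icc (0 : ℝ) T, 0 ≤ G t)
    (hderiv : ∀ t ∈ Set.Icc (0 : ℝ) T, HasDerivWithinAt y (y' t) (Set.Icc 0 T) t)
    (hineq : ∀ t ∈ Set.Icc (0 : ℝ) T, y' t ≤ 2 * G t * (y t - 2 * M)) :
    ∀ t ∈ Set.Icc (0 : ℝ) T, y t ≤ M := by
  obtain ⟨C, hC⟩ := isCompact_Icc.exists_bound_of_continuousOn hG
  have hGC : ∀ t ∈ Set.Icc (0 : ℝ) T, G t ≤ C := fun t ht =>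
    (le_abs_self _).trans (hC t ht)
  have barrier : ∀ ε > 0, ∀ t ∈ Set.Icc (0 : ℝ) T,
      y t ≤ M + ε * Real.exp ((2 * C + 1) * t) := by
    intro ε hε t ht
    have hB : ∀ x, HasDerivAt (fun t => M + ε * Real.exp ((2 * C + 1) * t))
        (ε * (Real.exp ((2 * C + 1) * x) * (2 * C + 1))) x := by
      intro x
      have h := ((hasDerivAt_id x).const_mul (2 * C + 1)).exp
      simpa using (h.const_mul ε).const_add M
    refine image_le_of_liminf_slope_right_lt_deriv_boundary (f := y) (f' := y')
      (fun x hx => (hderiv x hx).continuousWithinAt) ?_ ?_ hB ?_ ht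
    · intro x hx r hr
      exact ((hderiv x (Set.Ico_subset_Icc_self hx)).mono_of_mem_nhdsWithin
        (Icc_mem_nhdsGE_of_mem hx)).liminf_right_slope_le hr
    · simp [hM, hε.le]
    · intro x hx hxy
      have hx' := Set.Ico_subset_Icc_self hx
      have h := hineq x hx'
      rw [hxy] at h
      have hE : 0 < ε * Real.exp ((2 * C + 1) * x) := by positivity
      have hGM := mul_nonneg (hGpos x hx') hM0
      have hGE := mul_le_mul_of_nonneg_right (hGC x hx') hE.le
      linarith
  intro t ht
  refine le_of_forall_pos_le_add fun δ hδ => ?_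
  -- The choice of `ε` makes the barrier equal to `M + δ` at time `t`.
  have h := barrier (δ / Real.exp ((2 * C + 1) * t)) (by positivity) t ht
  rwa [div_mul_cancel₀ _ (Real.exp_ne_zero _)] at h
end

section
/- Let a : ℤ → ℂ be absolutely summable with a(0) = 0, and define b : ℤ → ℂ by b(n) = −i·sgn(n)·a(n). Then for every n ∈ ℤ: 2·(−i·sgn(n))·∑_{m∈ℤ} a(m)·b(n−m) = ∑_{m∈ℤ} b(m)·b(n−m) − ∑_{m∈ℤ} a(m)·a(n−m), all sums converging absolutely. This is the Fourier-coefficient form of Tricomi's identity 2H(f·Hf) = (Hf)² − f² for zero-mean functions f on the torus. -/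
/-!
Swapping `m ↔ n - m` shows `2 (a ⋆ b)(n) = ∑ m, (a m * b (n - m) + b m * a (n - m))`. After this
symmetrization the identity holds term by term: with `k = n - m`, it reduces to
`sgn (m + k) * (sgn m + sgn k) = 1 + sgn m * sgn k` for nonzero `m` and `k`
(`sign_add_mul_sign_add_sign`), while the terms with `m = 0` or `k = 0` vanish because `a 0 = 0`.
-/

/-- If `m` and `k` have the same sign, then so does `m + k` and both sides are `2`; if they have
opposite signs, both sides are `0`, whatever the sign of `m + k`. -/
theorem sign_add_mul_sign_add_sign {m k : ℤ} (hm : m ≠ 0) (hk : k ≠ 0) :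
    (m + k).sign * (m.sign + k.sign) = 1 + m.sign * k.sign := by
  rcases lt_or_gt_of_ne hm with h | h <;> rcases lt_or_gt_of_ne hk with h' | h'
  · simp [Int.sign_eq_neg_one_of_neg h, Int.sign_eq_neg_one_of_neg h',
      Int.sign_eq_neg_one_of_neg (show m + k < 0 by omega)]
  · simp [Int.sign_eq_neg_one_of_neg h, Int.sign_eq_one_of_pos h']
  · simp [Int.sign_eq_one_of_pos h, Int.sign_eq_neg_one_of_neg h']
  · simp [Int.sign_eq_one_of_pos h, Int.sign_eq_one_of_pos h',
      Int.sign_eq_one_of_pos (show 0 < m + k by omega)]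

theorem summable_norm_mul_sub {u v : ℤ → ℂ} (hu : Summable (fun n => ‖u n‖))
    (hv : Summable (fun n => ‖v n‖)) (n : ℤ) : Summable (fun m => ‖u m * v (n - m)‖) :=
  -- The series is a subfamily of the summable double family `u i * v j`.
  (hu.mul_norm hv).comp_injective (i := fun m : ℤ => (m, n - m))
    fun _ _ h => (Prod.ext_iff.mp h).1

/- STATEMENT 12: Tricomi's identity 2H(f·Hf) = (Hf)² − f² for zero-mean
functions on the torus, in Fourier-coefficient form: with b(n) = −i·sgn(n)·a(n),
2(−i·sgn(n))·(a⋆b)(n) = (b⋆b)(n) − (a⋆a)(n). -/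

theorem tricomi_identity_fourier (a : ℤ → ℂ)
    (hsum : Summable (fun n : ℤ => ‖a n‖)) (ha0 : a 0 = 0)
    (b : ℤ → ℂ) (hb : ∀ n : ℤ, b n = -Complex.I * ((n.sign : ℤ) : ℂ) * a n) :
    ∀ n : ℤ,
      Summable (fun m : ℤ => ‖a m * b (n - m)‖)
      ∧ Summable (fun m : ℤ => ‖b m * b (n - m)‖)
      ∧ Summable (fun m : ℤ => ‖a m * a (n - m)‖)
      ∧ 2 * (-Complex.I * ((n.sign : ℤ) : ℂ)) * (∑' m : ℤ, a m * b (n - m))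
          = (∑' m : ℤ, b m * b (n - m)) - ∑' m : ℤ, a m * a (n - m) := by
  intro n
  have hbs : Summable (fun n : ℤ => ‖b n‖) := by
    refine hsum.of_nonneg_of_le (fun _ => norm_nonneg _) fun k => ?_
    rcases lt_trichotomy k 0 with h | rfl | h
    · simp [hb, Int.sign_eq_neg_one_of_neg h]
    · simp [hb]
    · simp [hb, Int.sign_eq_one_of_pos h]
  have hab := summable_norm_mul_sub hsum hbs n
  have hba := summable_norm_mul_sub hbs hsum n
  have hbb := summable_norm_mul_sub hbs hbs n
  have haa := summable_norm_mul_sub hsum hsum n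
  refine ⟨hab, hbb, haa, ?_⟩
  have hswap : ∑' m : ℤ, a m * b (n - m) = ∑' m : ℤ, b m * a (n - m) := by
    rw [← (Equiv.subLeft n).tsum_eq]
    simp [mul_comm]
  have hterm : ∀ m k : ℤ, -Complex.I * (((m + k).sign : ℤ) : ℂ) * (a m * b k + b m * a k)
      = b m * b k - a m * a k := by
    intro m k
    rcases eq_or_ne m 0 with rfl | hm
    · simp [hb, ha0]
    rcases eq_or_ne k 0 with rfl | hk
    · simp [hb, ha0]
    have h : (((m + k).sign : ℤ) : ℂ) * ((m.sign : ℂ) + (k.sign : ℂ))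
        = 1 + (m.sign : ℂ) * (k.sign : ℂ) := by
      exact_mod_cast sign_add_mul_sign_add_sign hm hk
    rw [hb m, hb k]
    linear_combination (Complex.I ^ 2 * a m * a k) * h + (a m * a k) * Complex.I_sq
  calc 2 * (-Complex.I * ((n.sign : ℤ) : ℂ)) * (∑' m : ℤ, a m * b (n - m))
      = -Complex.I * ((n.sign : ℤ) : ℂ)
          * (∑' m : ℤ, a m * b (n - m) + ∑' m : ℤ, b m * a (n - m)) := by
        rw [← hswap]; ring
    _ = ∑' m : ℤ, (b m * b (n - m) - a m * a (n - m)) := by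
        rw [← hab.of_norm.tsum_add hba.of_norm, ← tsum_mul_left]
        refine tsum_congr fun m => ?_
        rw [← hterm m (n - m), add_sub_cancel]
    _ = _ := hbb.of_norm.tsum_sub haa.of_norm
end
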